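/- arXiv:1409.8316 — 2 statements merged into one kernel-verified Lean document; each statement's English description precedes it below -/
import Mathlib

section
/- Let n be odd and let p, q ≥ 2 be relatively prime integers. Then for every choice of admissible parameters, cat(L^n_p × L^n_q) ≥ n + 1. -/
open scoped Topology

/-- The Lusternik–Schnirelmann category of a space (normalized so that contractible spaces
have category 0): the least `k` such that `X` admits an open cover by `k+1` sets, each of
which has nullhomotopic inclusion into `X` (i.e. is contractible in `X`). -/
noncomputable def lsCat (X : Type*) [TopologicalSpace X] : ℕ :=
  sInf {k : ℕ | ∃ U : Fin (k + 1) → Set X,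
    (∀ i, IsOpen (U i)) ∧ (⋃ i, U i) = Set.univ ∧
    ∀ i, ContinuousMap.Nullhomotopic
      (⟨Subtype.val, continuous_subtype_val⟩ : C(U i, X))}

/-- The orbit relation on the unit sphere of `ℂ^k` defining the lens space
`L^{2k-1}_p(ℓ₁,…,ℓ_k)`: a fixed generator of `ℤ/p` acts coordinatewise by
`z_j ↦ exp(2πiℓ_j/p) z_j`, and `m` ranges over the powers of this generator. -/
def lensRel (p k : ℕ) (ℓ : Fin k → ℤ) :
    Metric.sphere (0 : EuclideanSpace ℂ (Fin k)) 1 →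
      Metric.sphere (0 : EuclideanSpace ℂ (Fin k)) 1 → Prop :=
  fun x y => ∃ m : ℤ, ∀ j : Fin k,
    (y.1 j) = Complex.exp (2 * Real.pi * Complex.I * m * ℓ j / p) * (x.1 j)

/-- The lens space `L^{2k-1}_p(ℓ₁,…,ℓ_k)`: the orbit space of the free linear action of `ℤ/p`
on the unit sphere `S^{2k-1} ⊆ ℂ^k` determined by the parameters `ℓ`, with the quotient
topology. -/
noncomputable def LensSpace (p k : ℕ) (ℓ : Fin k → ℤ) : Type :=
  Quot (lensRel p k ℓ)

noncomputable instance (p k : ℕ) (ℓ : Fin k → ℤ) : TopologicalSpace (LensSpace p k ℓ) :=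
  inferInstanceAs (TopologicalSpace (Quot (lensRel p k ℓ)))


open scoped Topology

namespace LSC

section Chains
variable (R : Type) [CommRing R]

/-- chains: formal combinations of ordered tuples -/
abbrev Ch (R : Type) [CommRing R] (V : Type) : Type := List V →₀ R

variable {V W X : Type}

/-- the basis chain of a list -/
noncomputable def bs (l : List V) : Ch R V := Finsupp.single l 1

/-- extend a function on lists linearly -/
noncomputable def ext {M : Type} [AddCommGroup M] [Module R M] (f : List V → M) : Ch R V →ₗ[R] M :=
  Finsupp.linearCombination R f

variable {R}

@[simp] lemma ext_bs {M : Type} [AddCommGroup M] [Module R M] (f : List V → M) (l : List V) :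
    ext R f (bs R l) = f l := by
  simp [ext, bs]

lemma hom_ext {M : Type} [AddCommGroup M] [Module R M] {f g : Ch R V →ₗ[R] M}
    (h : ∀ l, f (bs R l) = g (bs R l)) : f = g := by
  apply Finsupp.lhom_ext'
  intro l
  apply LinearMap.ext_ring
  exact h l

variable (R) in
/-- mapping chains along a vertex map -/
noncomputable def mp (f : V → W) : Ch R V →ₗ[R] Ch R W := ext R (fun l => bs R (l.map f))

@[simp] lemma mp_bs (f : V → W) (l : List V) : mp R f (bs R l) = bs R (l.map f) := by simp [mp]

variable (R) in
/-- cone operator -/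
noncomputable def cone (x : V) : Ch R V →ₗ[R] Ch R V := ext R (fun l => bs R (x :: l))

@[simp] lemma cone_bs (x : V) (l : List V) : cone R x (bs R l) = bs R (x :: l) := by simp [cone]

variable (R) in
/-- boundary of a list -/
noncomputable def bdl : List V → Ch R V
  | [] => 0
  | x :: w => bs R w - cone R x (bdl w)

variable (R) in
/-- the boundary operator -/
noncomputable def bd : Ch R V →ₗ[R] Ch R V := ext R (bdl R)

@[simp] lemma bd_nil : bd R (bs R ([] : List V)) = 0 := by simp [bd, bdl]

lemma bd_cons (x : V) (w : List V) :
    bd R (bs R (x :: w)) = bs R w - cone R x (bd R (bs R w)) := by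
  simp [bd, bdl]

lemma bd_cone (x : V) (c : Ch R V) : bd R (cone R x c) = c - cone R x (bd R c) := by
  have : (bd R).comp (cone R x) = LinearMap.id - (cone R x).comp (bd R (V := V)) :=
    hom_ext (fun l => by simp [bd_cons])
  exact congrArg (fun f => f c) this

lemma bd_bd (c : Ch R V) : bd R (bd R c) = 0 := by
  have : (bd R).comp (bd R (V := V)) = 0 := hom_ext (fun l => by
    induction l with
    | nil => simp
    | cons x w ih =>
      simp only [LinearMap.comp_apply, LinearMap.zero_apply] at ih
      simp [bd_cons, bd_cone, ih])
  exact congrArg (fun f => f c) this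

lemma mp_cone (f : V → W) (x : V) (c : Ch R V) : mp R f (cone R x c) = cone R (f x) (mp R f c) := by
  have : (mp R f).comp (cone R x) = (cone R (f x)).comp (mp R f) := hom_ext (fun l => by simp)
  exact congrArg (fun f => f c) this

lemma mp_bd (f : V → W) (c : Ch R V) : mp R f (bd R c) = bd R (mp R f c) := by
  have : (mp R f).comp (bd R) = (bd R).comp (mp R f) := hom_ext (fun l => by
    induction l with
    | nil => simp
    | cons x w ih =>
      simp only [LinearMap.comp_apply, mp_bs] at ih
      simp [bd_cons, mp_cone, ih])
  exact congrArg (fun f => f c) this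

lemma mp_mp (f : V → W) (g : W → X) (c : Ch R V) : mp R g (mp R f c) = mp R (g ∘ f) c := by
  have : (mp R g).comp (mp R f) = mp R (g ∘ f) := hom_ext (fun l => by simp)
  exact congrArg (fun f => f c) this

variable (R) in
/-- chains supported on lists satisfying `P` -/
noncomputable def Sup (P : List V → Prop) : Submodule R (Ch R V) := Submodule.span R (bs R '' {l | P l})

lemma bs_mem {P : List V → Prop} {l : List V} (h : P l) : bs R l ∈ Sup R P :=
  Submodule.subset_span ⟨l, h, rfl⟩

/-- a linear map sends `Sup P` into `S` as soon as it does so on basis elements -/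
lemma map_mem {M : Type} [AddCommGroup M] [Module R M] {P : List V → Prop} {S : Submodule R M}
    (f : Ch R V →ₗ[R] M) (h : ∀ l, P l → f (bs R l) ∈ S) {c : Ch R V} (hc : c ∈ Sup R P) :
    f c ∈ S := by
  have : Sup R P ≤ S.comap f := by
    apply Submodule.span_le.2
    rintro _ ⟨l, hl, rfl⟩
    exact h l hl
  exact this hc

lemma map_eq {M : Type} [AddCommGroup M] [Module R M] {P : List V → Prop}
    (f g : Ch R V →ₗ[R] M) (h : ∀ l, P l → f (bs R l) = g (bs R l)) {c : Ch R V}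
    (hc : c ∈ Sup R P) : f c = g c := by
  have : (f - g) c ∈ (⊥ : Submodule R M) := map_mem (f - g) (fun l hl => by simp [h l hl]) hc
  simpa [sub_eq_zero] using this

lemma Sup_mono {P Q : List V → Prop} (h : ∀ l, P l → Q l) {c : Ch R V} (hc : c ∈ Sup R P) :
    c ∈ Sup R Q := map_mem LinearMap.id (fun l hl => bs_mem (h l hl)) hc

lemma mem_top (c : Ch R V) : c ∈ Sup R (fun _ : List V => True) := by
  induction c using Finsupp.induction_linear with
  | zero => exact zero_mem _
  | add f g hf hg => exact add_mem hf hg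
  | single l r =>
    have : Finsupp.single l r = r • bs R l := by simp [bs]
    rw [this]
    exact Submodule.smul_mem _ _ (bs_mem trivial)

lemma cone_mem {P Q : List V → Prop} (x : V) (h : ∀ l, P l → Q (x :: l)) {c : Ch R V}
    (hc : c ∈ Sup R P) : cone R x c ∈ Sup R Q :=
  map_mem _ (fun l hl => by rw [cone_bs]; exact bs_mem (h l hl)) hc

lemma mp_mem {P : List V → Prop} {Q : List W → Prop} (f : V → W) (h : ∀ l, P l → Q (l.map f))
    {c : Ch R V} (hc : c ∈ Sup R P) : mp R f c ∈ Sup R Q :=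
  map_mem _ (fun l hl => by rw [mp_bs]; exact bs_mem (h l hl)) hc

/-- the boundary of a list is made of sublists of length one less -/
lemma bd_supp (l : List V) :
    bd R (bs R l) ∈ Sup R (fun m => m.Sublist l ∧ m.length + 1 = l.length) := by
  induction l with
  | nil => simp
  | cons x w ih =>
    rw [bd_cons]
    refine sub_mem (bs_mem ⟨by simp, by simp⟩) (cone_mem x ?_ ih)
    rintro l ⟨h1, h2⟩
    exact ⟨by simpa using h1, by simpa using h2⟩

end Chains

section Subdivision
variable {R : Type} [CommRing R] {V W X : Type}

/-- subdivision on chains of bounded length, by recursion on the length bound -/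
noncomputable def sdAux (R : Type) [CommRing R] (b : List V → W) : ℕ → List V → Ch R W
  | 0, _ => bs R []
  | _ + 1, [] => bs R []
  | n + 1, x :: w => cone R (b (x :: w)) (ext R (sdAux R b n) (bd R (bs R (x :: w))))

/-- the subdivision operator attached to an apex function -/
noncomputable def sd (R : Type) [CommRing R] (b : List V → W) : Ch R V →ₗ[R] Ch R W :=
  ext R (fun l => sdAux R b l.length l)

@[simp] lemma sd_nil (b : List V → W) : sd R b (bs R []) = bs R [] := by simp [sd, sdAux]

lemma sd_cons (b : List V → W) (x : V) (w : List V) :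
    sd R b (bs R (x :: w)) = cone R (b (x :: w)) (sd R b (bd R (bs R (x :: w)))) := by
  conv_lhs => simp only [sd, ext_bs, List.length_cons, sdAux]
  congr 1
  refine map_eq _ _ ?_ (bd_supp (x :: w))
  rintro l ⟨_, h⟩
  have : l.length = w.length := by simpa using h
  simp [sd, this]

lemma sd_bd (b : List V → W) (c : Ch R V) : bd R (sd R b c) = sd R b (bd R c) := by
  have key : ∀ n (l : List V), l.length ≤ n → bd R (sd R b (bs R l)) = sd R b (bd R (bs R l)) := by
    intro n
    induction n with
    | zero =>
      intro l hl
      have : l = [] := List.length_eq_zero_iff.1 (by omega)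
      subst this; simp
    | succ n ih =>
      intro l hl
      cases l with
      | nil => simp
      | cons x w =>
        rw [sd_cons, bd_cone]
        have : bd R (sd R b (bd R (bs R (x :: w)))) = sd R b (bd R (bd R (bs R (x :: w)))) := by
          refine map_eq ((bd R).comp (sd R b)) ((sd R b).comp (bd R)) ?_ (bd_supp (x :: w))
          rintro l ⟨_, h⟩
          exact ih l (by simp at h hl; omega)
        rw [this, bd_bd]
        simp
  have : (bd R).comp (sd R b) = (sd R b).comp (bd R) := hom_ext (fun l => key _ l le_rfl)
  exact congrArg (fun f => f c) this

/-- support principle for subdivisions -/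
lemma sd_supp (b : List V → W) (P : List V → List W → Prop) (h0 : P [] [])
    (h1 : ∀ l l' m, l ≠ [] → l'.Sublist l → l'.length + 1 = l.length → P l' m → P l (b l :: m)) (l : List V) :
    sd R b (bs R l) ∈ Sup R (P l) := by
  have key : ∀ n (l : List V), l.length ≤ n → sd R b (bs R l) ∈ Sup R (P l) := by
    intro n
    induction n with
    | zero =>
      intro l hl
      have : l = [] := List.length_eq_zero_iff.1 (by omega)
      subst this; simpa using bs_mem h0
    | succ n ih =>
      intro l hl
      cases l with
      | nil => simpa using bs_mem h0
      | cons x w =>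
        rw [sd_cons]
        refine cone_mem (P := fun m => P (x :: w) (b (x :: w) :: m)) _ (fun _ h => h) ?_
        refine map_mem _ ?_ (bd_supp (x :: w))
        rintro l ⟨h, h'⟩
        exact Sup_mono (fun m hm => h1 _ l m (by simp) h h' hm) (ih l (by simp at h' hl; omega))
  exact key _ l le_rfl

/-- naturality of subdivision -/
lemma sd_mp {V' W' : Type} (b : List V → W) (b' : List V' → W') (f : V → V') (g : W → W')
    (h : ∀ l, b' (l.map f) = g (b l)) (c : Ch R V) :
    sd R b' (mp R f c) = mp R g (sd R b c) := by
  have key : ∀ n (l : List V), l.length ≤ n →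
      sd R b' (bs R (l.map f)) = mp R g (sd R b (bs R l)) := by
    intro n
    induction n with
    | zero =>
      intro l hl
      have : l = [] := List.length_eq_zero_iff.1 (by omega)
      subst this; simp
    | succ n ih =>
      intro l hl
      cases l with
      | nil => simp
      | cons x w =>
        rw [List.map_cons, sd_cons, sd_cons, mp_cone, ← List.map_cons, h, ← mp_bs, ← mp_bd]
        congr 1
        refine map_eq ((sd R b').comp (mp R f)) ((mp R g).comp (sd R b)) ?_ (bd_supp (x :: w))
        rintro l ⟨_, h'⟩
        simpa using ih l (by simp at h' hl; omega)
  have : (sd R b').comp (mp R f) = (mp R g).comp (sd R b) :=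
    hom_ext (fun l => by simpa using key _ l le_rfl)
  exact congrArg (fun f => f c) this

end Subdivision

section Homotopy
variable {R : Type} [CommRing R] {V W : Type}

/-- the cone homotopy between two chain maps, by recursion on length -/
noncomputable def hoAux (th : Ch R V →ₗ[R] Ch R W) (lab : V → W) : ℕ → List V → Ch R W
  | 0, _ => 0
  | _ + 1, [] => 0
  | n + 1, x :: w => cone R (lab x) (th (bs R (x :: w)) - mp R lab (bs R (x :: w))
      - ext R (hoAux th lab n) (bd R (bs R (x :: w))))

/-- the cone homotopy -/
noncomputable def ho (th : Ch R V →ₗ[R] Ch R W) (lab : V → W) : Ch R V →ₗ[R] Ch R W :=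
  ext R (fun l => hoAux th lab l.length l)

variable (th : Ch R V →ₗ[R] Ch R W) (lab : V → W)

@[simp] lemma ho_nil : ho th lab (bs R []) = 0 := by simp [ho, hoAux]

lemma ho_cons (x : V) (w : List V) :
    ho th lab (bs R (x :: w)) = cone R (lab x) (th (bs R (x :: w)) - mp R lab (bs R (x :: w))
      - ho th lab (bd R (bs R (x :: w)))) := by
  conv_lhs => simp only [ho, ext_bs, List.length_cons, hoAux]
  congr 2
  refine map_eq _ _ ?_ (bd_supp (x :: w))
  rintro l ⟨_, h⟩
  have : l.length = w.length := by simpa using h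
  simp [ho, this]

lemma ho_spec (hth : ∀ c, bd R (th c) = th (bd R c)) (h0 : th (bs R []) = bs R []) (c : Ch R V) :
    bd R (ho th lab c) + ho th lab (bd R c) = th c - mp R lab c := by
  have key : ∀ n (l : List V), l.length ≤ n → bd R (ho th lab (bs R l)) + ho th lab (bd R (bs R l))
      = th (bs R l) - mp R lab (bs R l) := by
    intro n
    induction n with
    | zero =>
      intro l hl
      have : l = [] := List.length_eq_zero_iff.1 (by omega)
      subst this; simp [h0]
    | succ n ih =>
      intro l hl
      cases l with
      | nil => simp [h0]
      | cons x w =>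
        rw [ho_cons, bd_cone]
        have : bd R (ho th lab (bd R (bs R (x :: w)))) =
            th (bd R (bs R (x :: w))) - mp R lab (bd R (bs R (x :: w))) := by
          have : (bd R (ho th lab (bd R (bs R (x :: w)))))
              + (ho th lab (bd R (bd R (bs R (x :: w))))) =
              th (bd R (bs R (x :: w))) - mp R lab (bd R (bs R (x :: w))) := by
            refine map_eq ((bd R).comp (ho th lab) + (ho th lab).comp (bd R)) (th - mp R lab) ?_
              (bd_supp (x :: w))
            rintro l ⟨_, h⟩
            simpa using ih l (by simp at h hl; omega)
          simpa [bd_bd] using this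
        simp only [map_sub, this, hth, mp_bd]
        simp
  have : (bd R).comp (ho th lab) + (ho th lab).comp (bd R) = th - mp R lab :=
    hom_ext (fun l => key _ l le_rfl)
  exact congrArg (fun f => f c) this

/-- support of the cone homotopy -/
lemma ho_supp (P : List V → Prop) (Q : List V → List W → Prop)
    (hP : ∀ l l', P l → l'.Sublist l → P l')
    (h1 : ∀ l, P l → th (bs R l) ∈ Sup R (Q l)) (h2 : ∀ l, P l → Q l (l.map lab))
    (h3 : ∀ l l' m, P l → l'.Sublist l → Q l' m → Q l m)
    (h4 : ∀ x w m, P (x :: w) → Q (x :: w) m → Q (x :: w) (lab x :: m)) (l : List V) (hl : P l) :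
    ho th lab (bs R l) ∈ Sup R (Q l) := by
  have key : ∀ n (l : List V), l.length ≤ n → P l → ho th lab (bs R l) ∈ Sup R (Q l) := by
    intro n
    induction n with
    | zero =>
      intro l hl _
      have : l = [] := List.length_eq_zero_iff.1 (by omega)
      subst this; simp
    | succ n ih =>
      intro l hl hPl
      cases l with
      | nil => simp
      | cons x w =>
        rw [ho_cons]
        refine cone_mem (P := Q (x :: w)) _ (fun m h => h4 _ _ m hPl h) ?_
        refine sub_mem (sub_mem (h1 _ hPl) (by simpa using bs_mem (h2 _ hPl))) ?_
        refine map_mem _ ?_ (bd_supp (x :: w))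
        rintro l ⟨h, h'⟩
        exact Sup_mono (fun m hm => h3 _ l m hPl h hm)
          (ih l (by simp at h' hl; omega) (hP _ _ hPl h))
  exact key _ l le_rfl hl

/-- equivariance of the cone homotopy -/
lemma ho_equiv (P : List V → Prop) (hP : ∀ l l', P l → l'.Sublist l → P l')
    (f : V → V) (g : W → W) (hlab : ∀ x, lab (f x) = g (lab x))
    (h1 : ∀ l, P l → th (mp R f (bs R l)) = mp R g (th (bs R l))) (c : Ch R V)
    (hc : c ∈ Sup R P) : ho th lab (mp R f c) = mp R g (ho th lab c) := by
  have key : ∀ n (l : List V), l.length ≤ n → P l →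
      ho th lab (bs R (l.map f)) = mp R g (ho th lab (bs R l)) := by
    intro n
    induction n with
    | zero =>
      intro l hl _
      have : l = [] := List.length_eq_zero_iff.1 (by omega)
      subst this; simp
    | succ n ih =>
      intro l hl hPl
      cases l with
      | nil => simp
      | cons x w =>
        rw [List.map_cons, ho_cons, ho_cons, mp_cone, ← List.map_cons, hlab, ← mp_bs, ← mp_bd]
        congr 1
        rw [map_sub, map_sub, h1 _ hPl]
        congr 1
        · congr 1
          rw [mp_mp, mp_mp]
          congr 2
          funext y; simp [hlab]
        refine map_eq (P := fun l => P l ∧ l.length ≤ n) ((ho th lab).comp (mp R f))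
          ((mp R g).comp (ho th lab)) ?_ (Sup_mono ?_ (bd_supp (R := R) (x :: w)))
        · rintro l ⟨h, h'⟩
          simpa using ih l h' h
        · rintro l ⟨h, h'⟩
          exact ⟨hP _ _ hPl h, by simp at h' hl; omega⟩
  exact map_eq ((ho th lab).comp (mp R f)) ((mp R g).comp (ho th lab))
    (fun l hl => by simpa using key _ l le_rfl hl) hc

end Homotopy

end LSC

open scoped Topology

namespace LSC

section Cochains
set_option linter.unusedSectionVars false
variable {p : ℕ} [NeZero p]

/-- the Bockstein-type two-cocycle -/
def beta (a b c : ZMod p) : ZMod p := ((((b - a).val + (c - b).val) / p : ℕ) : ZMod p)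

lemma beta_cocycle (a b c d : ZMod p) : beta b c d - beta a c d + beta a b d - beta a b c = 0 := by
  have hp : 0 < p := Nat.pos_of_neZero p
  have key : ∀ x y : ZMod p, p * ((x.val + y.val) / p) + (x + y).val = x.val + y.val := by
    intro x y
    rw [ZMod.val_add]
    exact Nat.div_add_mod _ _
  have h1 := key (c - b) (d - c)
  have h2 := key (c - a) (d - c)
  have h3 := key (b - a) (d - b)
  have h4 := key (b - a) (c - b)
  rw [show c - b + (d - c) = d - b by ring] at h1
  rw [show c - a + (d - c) = d - a by ring] at h2
  rw [show b - a + (d - b) = d - a by ring] at h3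
  rw [show b - a + (c - b) = c - a by ring] at h4
  unfold beta
  set A := ((c - b).val + (d - c).val) / p
  set B := ((c - a).val + (d - c).val) / p
  set C := ((b - a).val + (d - b).val) / p
  set D := ((b - a).val + (c - b).val) / p
  have h : A + C = B + D := by
    have : p * (A + C) = p * (B + D) := by
      rw [mul_add, mul_add]; omega
    exact Nat.eq_of_mul_eq_mul_left hp this
  have h' : (A : ZMod p) + C = B + D := by exact_mod_cast congrArg (Nat.cast (R := ZMod p)) h
  linear_combination h'

lemma beta_left (a c : ZMod p) : beta a a c = 0 := by
  simp [beta, Nat.div_eq_of_lt (ZMod.val_lt _)]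

lemma beta_right (a c : ZMod p) : beta a c c = 0 := by
  simp [beta, Nat.div_eq_of_lt (ZMod.val_lt _)]

lemma beta_shift (a b c : ZMod p) : beta (a + 1) (b + 1) (c + 1) = beta a b c := by
  simp [beta]

lemma beta_sum (hp : 2 ≤ p) (a : ZMod p) :
    ∑ h : ZMod p, (beta a h h - beta a (h + 1) h) = 1 := by
  have : Fact (1 < p) := ⟨hp⟩
  have h1 : ∀ x : ZMod p, beta a (x + 1) x = if x = a - 1 then 0 else 1 := by
    intro x
    have hv : (x - (x + 1)).val = p - 1 := by
      rw [show x - (x + 1) = -1 by ring, ZMod.val_neg_of_ne_zero, ZMod.val_one]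
    have hlt := ZMod.val_lt (x + 1 - a)
    unfold beta
    rw [hv]
    split_ifs with h
    · subst h
      simp [Nat.div_eq_of_lt (show p - 1 < p by omega)]
    · have h0 : (x + 1 - a).val ≠ 0 := by
        rw [Ne, ZMod.val_eq_zero]
        intro h'
        exact h (by linear_combination h')
      have : ((x + 1 - a).val + (p - 1)) / p = 1 := by
        rw [Nat.div_eq_iff (by omega)]; omega
      simp [this]
  simp only [beta_right, h1]
  have : ∀ x : ZMod p, (0 : ZMod p) - (if x = a - 1 then 0 else 1) = (if x = a - 1 then 1 else 0) - 1 := by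
    intro x; split_ifs <;> simp
  simp only [this]
  simp

/-- powers of beta, on lists -/
def rr : ℕ → List (ZMod p) → ZMod p
  | 0, [_] => 1
  | j + 1, a :: b :: c :: w => beta a b c * rr j (c :: w)
  | _, _ => 0

/-- alpha cup beta powers, on lists -/
def uu (m : ℕ) : List (ZMod p) → ZMod p
  | a :: b :: w => (b - a) * rr m (b :: w)
  | _ => 0

lemma ext_smul_fun {V : Type} {R : Type} [CommRing R] (f : List V → R) (r : R) (c : Ch R V) :
    ext R (fun l => r * f l) c = r * ext R f c := by
  have : ext R (fun l => r * f l) = r • ext R f := hom_ext (fun l => by simp)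
  rw [this]; rfl

lemma ext_cone {V : Type} {R : Type} [CommRing R] {M : Type} [AddCommGroup M] [Module R M]
    (f : List V → M) (x : V) (c : Ch R V) :
    ext R f (cone R x c) = ext R (fun l => f (x :: l)) c := by
  have : (ext R f).comp (cone R x) = ext R (fun l => f (x :: l)) := hom_ext (fun l => by simp)
  exact congrArg (fun f => f c) this

lemma rr_cocycle (j : ℕ) (l : List (ZMod p)) : ext (ZMod p) (rr j) (bd _ (bs _ l)) = 0 := by
  induction j generalizing l with
  | zero =>
    match l with
    | [] => simp
    | [a] => simp [bd_cons, rr]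
    | [a, b] => simp [bd_cons, rr]
    | [a, b, c] => simp [bd_cons, rr]
    | a :: b :: c :: d :: w =>
      simp only [bd_cons, map_sub, ext_bs, cone_bs, ext_cone, rr]
      have : ∀ c : Ch (ZMod p) (ZMod p), ext (ZMod p) (fun _ => (0 : ZMod p)) c = 0 := by
        intro c
        have : ext (ZMod p) (fun _ : List (ZMod p) => (0 : ZMod p)) = 0 := hom_ext (fun l => by simp)
        rw [this]; rfl
      simp [this]
  | succ j ih =>
    match l with
    | [] => simp
    | [a] => simp [bd_cons, rr]
    | [a, b] => simp [bd_cons, rr]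
    | [a, b, c] => simp [bd_cons, rr]
    | a :: b :: c :: d :: w =>
      have h := ih (c :: d :: w)
      rw [bd_cons, map_sub, ext_bs, ext_cone] at h
      rw [bd_cons, bd_cons, bd_cons]
      simp only [map_sub, ext_bs, cone_bs, ext_cone, rr]
      rw [ext_smul_fun]
      have h2 := beta_cocycle a b c d
      linear_combination (rr j (d :: w)) * h2 + beta a b c * h

lemma uu_cocycle (m : ℕ) (l : List (ZMod p)) : ext (ZMod p) (uu m) (bd _ (bs _ l)) = 0 := by
  match l with
  | [] => simp
  | [a] => simp [bd_cons, uu]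
  | [a, b] => simp [bd_cons, uu]
  | a :: b :: c :: w =>
    have h := rr_cocycle m (b :: c :: w)
    rw [bd_cons, map_sub, ext_bs, ext_cone] at h
    rw [bd_cons, bd_cons]
    simp only [map_sub, ext_bs, cone_bs, ext_cone, uu]
    rw [ext_smul_fun]
    linear_combination (a - b) * h

lemma rr_ne (j : ℕ) (l : List (ZMod p)) (h : rr j l ≠ 0) :
    l.length = 2 * j + 1 ∧ l.IsChain (· ≠ ·) := by
  induction j generalizing l with
  | zero =>
    match l with
    | [] => simp [rr] at h
    | [a] => simp
    | a :: b :: w => simp [rr] at h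
  | succ j ih =>
    match l with
    | [] => simp [rr] at h
    | [a] => simp [rr] at h
    | [a, b] => simp [rr] at h
    | a :: b :: c :: w =>
      rw [rr] at h
      obtain ⟨h1, h2⟩ := ih (c :: w) (right_ne_zero_of_mul h)
      have h3 := left_ne_zero_of_mul h
      refine ⟨by simp at h1 ⊢; omega, ?_⟩
      rw [List.isChain_cons_cons, List.isChain_cons_cons]
      refine ⟨?_, ?_, h2⟩
      · rintro rfl; exact h3 (beta_left _ _)
      · rintro rfl; exact h3 (beta_right _ _)

lemma uu_ne (m : ℕ) (l : List (ZMod p)) (h : uu m l ≠ 0) :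
    l.length = 2 * m + 2 ∧ l.IsChain (· ≠ ·) := by
  match l with
  | [] => simp [uu] at h
  | [a] => simp [uu] at h
  | a :: b :: w =>
    rw [uu] at h
    obtain ⟨h1, h2⟩ := rr_ne m (b :: w) (right_ne_zero_of_mul h)
    have h3 := left_ne_zero_of_mul h
    refine ⟨by simp at h1 ⊢; omega, ?_⟩
    rw [List.isChain_cons_cons]
    exact ⟨fun h => h3 (by simp [h]), h2⟩

lemma rr_shift (j : ℕ) (l : List (ZMod p)) : rr j (l.map (· + 1)) = rr j l := by
  induction j generalizing l with
  | zero =>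
    match l with
    | [] => simp [rr]
    | [a] => simp [rr]
    | a :: b :: w => simp [rr]
  | succ j ih =>
    match l with
    | [] => simp [rr]
    | [a] => simp [rr]
    | [a, b] => simp [rr]
    | a :: b :: c :: w =>
      have := ih (c :: w)
      simp only [List.map_cons] at this
      simp [rr, beta_shift, this]

lemma uu_shift (m : ℕ) (l : List (ZMod p)) : uu m (l.map (· + 1)) = uu m l := by
  match l with
  | [] => simp [uu]
  | [a] => simp [uu]
  | a :: b :: w =>
    have := rr_shift m (b :: w)
    simp only [List.map_cons] at this
    simp [uu, this]

end Cochains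

section DetCochain
variable {R : Type} [CommRing R] {K : ℕ}

/-- indicator matrix of a labelled tuple -/
def vmat (R : Type) [CommRing R] {K : ℕ} (f : Fin K → Fin (K + 1)) : Matrix (Fin K) (Fin K) R :=
  Matrix.of fun i j => if f i = j.castSucc then 1 else 0

/-- degree cochain on lists of labels -/
noncomputable def vv (R : Type) [CommRing R] {K : ℕ} (l : List (Fin (K + 1))) : R :=
  if h : l.length = K then (vmat R (fun i => l.get (i.cast h.symm))).det else 0

lemma vv_ofFn (f : Fin K → Fin (K + 1)) : vv R (List.ofFn f) = (vmat R f).det := by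
  have h : (List.ofFn f).length = K := List.length_ofFn
  rw [vv, dif_pos h]
  congr 2
  funext i
  simp

lemma vv_mem (l : List (Fin (K + 1))) (h : vv R l ≠ 0) (j : Fin K) : j.castSucc ∈ l := by
  by_contra hj
  apply h
  rw [vv]
  split_ifs with hl
  · apply Matrix.det_eq_zero_of_column_eq_zero j
    intro i
    simp only [vmat, Matrix.of_apply]
    rw [if_neg]
    intro h'
    exact hj (h' ▸ List.get_mem _ _)
  · rfl

lemma bd_ofFn {V : Type} (n : ℕ) (f : Fin (n + 1) → V) :
    bd R (bs R (List.ofFn f)) =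
      ∑ i : Fin (n + 1), (-1 : R) ^ (i : ℕ) • bs R (List.ofFn (f ∘ i.succAbove)) := by
  induction n with
  | zero => simp [bd_cons, Function.comp_def, List.ofFn_succ]
  | succ n ih =>
    rw [List.ofFn_succ, bd_cons, ih, map_sum, sub_eq_add_neg, ← Finset.sum_neg_distrib,
      Fin.sum_univ_succ (n := n + 1)]
    congr 1
    · simp [Function.comp_def]
    · apply Finset.sum_congr rfl
      intro i _
      rw [map_smul, cone_bs, ← neg_smul]
      congr 1
      · simp [pow_succ]
      · congr 1
        conv_rhs => rw [List.ofFn_succ]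
        simp [Function.comp_def]

lemma vv_bd (l : List (Fin (K + 1))) (j : Fin (K + 1)) (hj : j ∉ l) :
    ext R (vv R) (bd R (bs R l)) = 0 := by
  by_cases hl : l.length = K + 1
  · obtain ⟨f, rfl⟩ : ∃ f : Fin (K + 1) → Fin (K + 1), l = List.ofFn f :=
      ⟨fun i => l.get (i.cast hl.symm), by
        apply List.ext_get
        · rw [List.length_ofFn, hl]
        · intro n h1 h2
          rw [List.get_ofFn]
          rfl⟩
    have hj' : ∀ i, f i ≠ j := by
      intro i hi; apply hj; rw [List.mem_ofFn]; exact ⟨i, hi⟩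
    set M : Matrix (Fin (K + 1)) (Fin (K + 1)) R :=
      Matrix.of fun i => Fin.cons 1 (fun j : Fin K => if f i = j.castSucc then 1 else 0) with hM
    have h1 : ext R (vv R) (bd R (bs R (List.ofFn f))) = M.det := by
      rw [bd_ofFn, map_sum, Matrix.det_succ_column_zero]
      apply Finset.sum_congr rfl
      intro i _
      rw [map_smul, ext_bs, vv_ofFn]
      simp only [smul_eq_mul, hM, Matrix.of_apply, Fin.cons_zero, mul_one]
      congr 2
    rw [h1]
    induction j using Fin.lastCases with
    | last =>
      let w : Fin (K + 1) → R := Fin.cons 1 (fun _ => -1)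
      have hw : M.mulVec w = 0 := by
        funext i
        simp only [Matrix.mulVec, dotProduct, Fin.sum_univ_succ, hM, Matrix.of_apply, Fin.cons_zero,
          Fin.cons_succ, w]
        obtain ⟨j, hj⟩ : ∃ j : Fin K, f i = j.castSucc := by
          obtain ⟨j, hj⟩ := Fin.exists_castSucc_eq.2 (hj' i)
          exact ⟨j, hj.symm⟩
        simp [hj]
      have h2 : M.det • w = 0 := by
        have h := congrArg (fun x => M.adjugate.mulVec x) hw
        simp only [Matrix.mulVec_mulVec, Matrix.adjugate_mul, Matrix.mulVec_zero] at h
        simpa [Matrix.smul_mulVec] using h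
      have := congrFun h2 0
      simpa [w] using this
    | cast j =>
      apply Matrix.det_eq_zero_of_column_eq_zero j.succ
      intro i
      simp [hM, hj']
  · have : ext R (vv R) (bd R (bs R l)) = (0 : Ch R (Fin (K + 1)) →ₗ[R] R) (bd R (bs R l)) := by
      refine map_eq _ _ ?_ (bd_supp l)
      rintro m ⟨_, hm⟩
      simp only [ext_bs, LinearMap.zero_apply]
      rw [vv, dif_neg (by omega)]
    simpa using this

lemma vv_full : ext R (vv R) (bd R (bs R (List.ofFn (id : Fin (K + 1) → Fin (K + 1))))) = (-1) ^ K := by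
  rw [bd_ofFn, map_sum, Fin.sum_univ_castSucc]
  have h1 : ∀ i : Fin K, ext R (vv R) ((-1 : R) ^ (i.castSucc : ℕ) •
      bs R (List.ofFn (id ∘ (i.castSucc).succAbove))) = 0 := by
    intro i
    rw [map_smul, ext_bs]
    have : vv R (List.ofFn (id ∘ (i.castSucc).succAbove)) = 0 := by
      by_contra h
      have := vv_mem _ h i
      rw [List.mem_ofFn] at this
      obtain ⟨j, hj⟩ := this
      exact Fin.succAbove_ne _ _ hj
    rw [this, smul_zero]
  rw [Finset.sum_eq_zero (fun i _ => h1 i), map_smul, ext_bs, vv_ofFn]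
  have : vmat R (id ∘ (Fin.last K).succAbove) = 1 := by
    ext i j
    simp [vmat, Matrix.one_apply]
  rw [this]; simp

end DetCochain

section Product
variable {R : Type} [CommRing R] {G : Type} {K : ℕ}

/-- left entries of a list -/
def lefts {A B : Type} (l : List (A ⊕ B)) : List A := l.filterMap Sum.getLeft?
/-- right entries of a list -/
def rights {A B : Type} (l : List (A ⊕ B)) : List B := l.filterMap Sum.getRight?

@[simp] lemma lefts_nil {A B : Type} : lefts ([] : List (A ⊕ B)) = [] := rfl
@[simp] lemma rights_nil {A B : Type} : rights ([] : List (A ⊕ B)) = [] := rfl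
@[simp] lemma lefts_inl {A B : Type} (a : A) (l : List (A ⊕ B)) : lefts (Sum.inl a :: l) = a :: lefts l := by
  simp [lefts]
@[simp] lemma lefts_inr {A B : Type} (a : B) (l : List (A ⊕ B)) : lefts (Sum.inr a :: l) = lefts l := rfl
@[simp] lemma rights_inl {A B : Type} (a : A) (l : List (A ⊕ B)) : rights (Sum.inl a :: l) = rights l := rfl
@[simp] lemma rights_inr {A B : Type} (a : B) (l : List (A ⊕ B)) : rights (Sum.inr a :: l) = a :: rights l := by
  simp [rights]

lemma lefts_join {A B : Type} (a : List A) (b : List B) :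
    lefts (a.map Sum.inl ++ b.map Sum.inr) = a := by
  induction a with
  | nil =>
    induction b with
    | nil => rfl
    | cons x b ih => simpa using ih
  | cons x a ih => simpa using ih

lemma rights_join {A B : Type} (a : List A) (b : List B) :
    rights (a.map Sum.inl ++ b.map Sum.inr) = b := by
  induction a with
  | nil =>
    induction b with
    | nil => rfl
    | cons x b ih => simpa using ih
  | cons x a ih => simpa using ih

/-- sortedness: left entries before right entries -/
def Sorted {A B : Type} (l : List (A ⊕ B)) : Prop := l.Pairwise (fun x y => x.isRight → y.isRight)

lemma sorted_all_right {A B : Type} (l : List (A ⊕ B)) (h : ∀ x ∈ l, x.isRight) :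
    l = (rights l).map Sum.inr := by
  induction l with
  | nil => simp
  | cons x w ih =>
    rcases x with a | b
    · simpa using h (Sum.inl a) (by simp)
    · simp [← ih (fun x hx => h x (by simp [hx]))]

lemma sorted_decomp {A B : Type} (l : List (A ⊕ B)) (h : Sorted l) :
    l = (lefts l).map Sum.inl ++ (rights l).map Sum.inr := by
  induction l with
  | nil => simp
  | cons x w ih =>
    rw [Sorted, List.pairwise_cons] at h
    rcases x with a | b
    · simp [← ih h.2]
    · have h1 : ∀ y ∈ w, y.isRight := fun y hy => h.1 y hy rfl
      have h2 : lefts w = [] := by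
        rw [sorted_all_right w h1]; simpa using lefts_join ([] : List A) (rights w)
      have h3 := sorted_all_right w h1
      simp [h2, ← h3]

/-- the product cochain -/
noncomputable def cF (f : List G → R) (l : List (G ⊕ Fin (K + 1))) : R := f (lefts l) * vv R (rights l)

lemma cF_inr (f : List G → R) (c : Ch R (Fin (K + 1))) :
    ext R (cF f) (mp R Sum.inr c) = f [] * ext R (vv R) c := by
  have : (ext R (cF f)).comp (mp R Sum.inr) = f [] • ext R (vv R) := hom_ext (fun l => by
    have h1 : lefts (l.map (Sum.inr : _ → G ⊕ Fin (K + 1))) = [] := by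
      simpa using lefts_join ([] : List G) l
    have h2 : rights (l.map (Sum.inr : _ → G ⊕ Fin (K + 1))) = l := by
      simpa using rights_join ([] : List G) l
    simp [cF, h1, h2])
  exact congrArg (fun f => f c) this

lemma cF_cone (f : List G → R) (g : G) (c : Ch R (G ⊕ Fin (K + 1))) :
    ext R (cF f) (cone R (Sum.inl g) c) = ext R (cF (fun t => f (g :: t))) c := by
  rw [ext_cone]
  rfl

lemma cF_bd (f : List G → R) (a : List G) (b : List (Fin (K + 1))) :
    ext R (cF f) (bd R (bs R (a.map Sum.inl ++ b.map Sum.inr))) =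
      ext R f (bd R (bs R a)) * vv R b + (-1) ^ a.length * f a * ext R (vv R) (bd R (bs R b)) := by
  induction a generalizing f with
  | nil =>
    have := cF_inr f (bd R (bs R b))
    rw [mp_bd, mp_bs] at this
    simp [this]
  | cons g a ih =>
    have h := ih (fun t => f (g :: t))
    rw [List.map_cons, List.cons_append, bd_cons, map_sub, cF_cone, h, bd_cons, map_sub, ext_cone]
    have h1 : lefts (a.map Sum.inl ++ b.map Sum.inr) = a := lefts_join a b
    have h2 : rights (a.map (Sum.inl : G → G ⊕ Fin (K + 1)) ++ b.map Sum.inr) = b := rights_join a b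
    simp [cF, h1, h2, pow_succ]
    ring

/-- good lists: sorted and missing some right label -/
def Good (l : List (G ⊕ Fin (K + 1))) : Prop := Sorted l ∧ ∃ j, Sum.inr j ∉ l

lemma cF_good (f : List G → R) (hf : ∀ a, ext R f (bd R (bs R a)) = 0)
    (l : List (G ⊕ Fin (K + 1))) (hl : Good l) : ext R (cF f) (bd R (bs R l)) = 0 := by
  obtain ⟨h1, j, hj⟩ := hl
  have h2 := sorted_decomp l h1
  have h3 : j ∉ rights l := by
    intro h; apply hj; rw [h2]; simp [h]
  rw [h2, cF_bd, hf, vv_bd _ j h3]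
  simp

end Product

end LSC

open scoped Topology

namespace LSC

section TheChain
set_option linter.unusedSectionVars false
variable (p : ℕ) [NeZero p] (m : ℕ)

/-- the vertices -/
abbrev Vt (p m : ℕ) : Type := (Fin (m + 1) × Bool × ZMod p) ⊕ Fin (2 * m + 2 + 1)
/-- the labels -/
abbrev Lb (p m : ℕ) : Type := ZMod p ⊕ Fin (2 * m + 2 + 1)

variable {p m}

/-- shift on vertices -/
def shV : Vt p m → Vt p m
  | Sum.inl (j, b, g) => Sum.inl (j, b, g + 1)
  | Sum.inr i => Sum.inr i
/-- shift on labels -/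
def shL : Lb p m → Lb p m
  | Sum.inl g => Sum.inl (g + 1)
  | Sum.inr i => Sum.inr i
/-- labels of vertices -/
def lab : Vt p m → Lb p m
  | Sum.inl (_, _, g) => Sum.inl g
  | Sum.inr i => Sum.inr i

lemma lab_shV (x : Vt p m) : lab (shV x) = shL (lab x) := by
  rcases x with ⟨j, b, g⟩ | i <;> rfl

/-- cone at a left vertex -/
noncomputable def dd (j : Fin (m + 1)) (b : Bool) (g : ZMod p) :
    Ch (ZMod p) (Vt p m) →ₗ[ZMod p] Ch (ZMod p) (Vt p m) := cone (ZMod p) (Sum.inl (j, b, g))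

/-- the two-dimensional invariant block -/
noncomputable def BB (j : Fin (m + 1)) : Ch (ZMod p) (Vt p m) →ₗ[ZMod p] Ch (ZMod p) (Vt p m) :=
  ∑ h : ZMod p, (dd j false h - dd j false (h + 1)).comp (dd j true h)

/-- the top block -/
noncomputable def PP : Ch (ZMod p) (Vt p m) →ₗ[ZMod p] Ch (ZMod p) (Vt p m) :=
  LinearMap.comp (dd 0 false 0 - dd 0 false 1) (dd 0 true 0)

/-- the sphere of right vertices -/
noncomputable def zz : Ch (ZMod p) (Vt p m) :=
  mp _ Sum.inr (bd _ (bs _ (List.ofFn (id : Fin (2 * m + 2 + 1) → Fin (2 * m + 2 + 1)))))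

/-- iterated blocks -/
noncomputable def tauL : List (Fin m) → Ch (ZMod p) (Vt p m)
  | [] => zz
  | j :: js => BB j.succ (tauL js)

lemma BB_apply (j : Fin (m + 1)) (w : Ch (ZMod p) (Vt p m)) :
    BB j w = ∑ h : ZMod p, (dd j false h (dd j true h w) - dd j false (h + 1) (dd j true h w)) := by
  simp [BB]

lemma PP_apply (w : Ch (ZMod p) (Vt p m)) :
    PP w = dd 0 false 0 (dd 0 true 0 w) - dd 0 false 1 (dd 0 true 0 w) := by
  simp [PP]

lemma bd_BB (j : Fin (m + 1)) (w : Ch (ZMod p) (Vt p m)) : bd _ (BB j w) = BB j (bd _ w) := by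
  rw [BB_apply, BB_apply, map_sum]
  have h : ∀ h : ZMod p, bd (ZMod p) (dd j false h (dd j true h w) - dd j false (h + 1) (dd j true h w)) =
      (dd j false h (dd j true h (bd _ w)) - dd j false (h + 1) (dd j true h (bd _ w))) +
      (dd j false (h + 1) w - dd j false h w) := by
    intro h
    simp only [dd, map_sub, bd_cone]
    abel
  rw [Finset.sum_congr rfl (fun x _ => h x), Finset.sum_add_distrib]
  have h2 : ∑ x : ZMod p, (dd j false (x + 1) w - dd j false x w) = 0 := by
    rw [Finset.sum_sub_distrib, sub_eq_zero]
    exact Equiv.sum_comp (Equiv.addRight (1 : ZMod p)) (fun x => dd j false x w)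
  rw [h2, add_zero]

lemma mp_dd (j : Fin (m + 1)) (b : Bool) (g : ZMod p) (w : Ch (ZMod p) (Vt p m)) :
    mp _ shV (dd j b g w) = dd j b (g + 1) (mp _ shV w) := by
  rw [dd, mp_cone]; rfl

lemma mp_BB (j : Fin (m + 1)) (w : Ch (ZMod p) (Vt p m)) :
    mp _ shV (BB j w) = BB j (mp _ shV w) := by
  rw [BB_apply, BB_apply, map_sum]
  simp only [map_sub, mp_dd]
  exact Equiv.sum_comp (Equiv.addRight (1 : ZMod p)) (fun h =>
    (dd j false h (dd j true h (mp _ shV w)) - dd j false (h + 1) (dd j true h (mp _ shV w))))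

lemma bd_zz : bd _ (zz : Ch (ZMod p) (Vt p m)) = 0 := by
  rw [zz, ← mp_bd, bd_bd, map_zero]

lemma mp_zz : mp _ shV (zz : Ch (ZMod p) (Vt p m)) = zz := by
  rw [zz, mp_mp]; rfl

lemma bd_tauL (js : List (Fin m)) : bd _ (tauL js : Ch (ZMod p) (Vt p m)) = 0 := by
  induction js with
  | nil => exact bd_zz
  | cons j js ih => rw [tauL, bd_BB, ih, map_zero]

lemma mp_tauL (js : List (Fin m)) : mp _ shV (tauL js : Ch (ZMod p) (Vt p m)) = tauL js := by
  induction js with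
  | nil => exact mp_zz
  | cons j js ih => rw [tauL, mp_BB, ih]

lemma bd_PP (js : List (Fin m)) : bd _ (PP (tauL js : Ch (ZMod p) (Vt p m))) =
    mp _ shV (dd 0 false 0 (tauL js)) - dd 0 false 0 (tauL js) := by
  rw [mp_dd, mp_tauL, PP_apply]
  simp only [dd, map_sub, bd_cone, bd_tauL, map_zero, zero_add]
  abel

/-- evaluation of the blocks -/
lemma eval_tauL (hp : 2 ≤ p) (js : List (Fin m)) (a : ZMod p) :
    ext (ZMod p) (cF (fun t => rr js.length (a :: t))) (mp _ lab (tauL js : Ch (ZMod p) (Vt p m))) =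
      (-1) ^ (2 * m + 2) := by
  induction js generalizing a with
  | nil =>
    rw [tauL, zz, mp_mp]
    have := cF_inr (R := ZMod p) (fun t => rr ([] : List (Fin m)).length (a :: t))
      (bd _ (bs _ (List.ofFn (id : Fin (2 * m + 2 + 1) → Fin (2 * m + 2 + 1)))))
    rw [vv_full] at this
    rw [show (lab ∘ Sum.inr : Fin (2 * m + 2 + 1) → Lb p m) = Sum.inr from rfl, this]
    simp [rr]
  | cons j js ih =>
    have h1 : ∀ (f : List (ZMod p) → ZMod p) (j : Fin (m + 1)) (b : Bool) (g : ZMod p)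
        (w : Ch (ZMod p) (Vt p m)), ext (ZMod p) (cF f) (mp _ lab (dd j b g w)) =
        ext (ZMod p) (cF (fun t => f (g :: t))) (mp _ lab w) := by
      intro f j b g w
      rw [dd, mp_cone, lab, cF_cone]
    have h3 : ∀ (r : ZMod p) (f : List (ZMod p) → ZMod p) (c : Ch (ZMod p) (Lb p m)),
        ext (ZMod p) (cF (fun t => r * f t)) c = r * ext (ZMod p) (cF f) c := by
      intro r f c
      rw [← ext_smul_fun]
      congr 2
      funext l
      simp [cF, mul_assoc]
    rw [tauL, BB_apply, map_sum, map_sum]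
    simp only [map_sub, h1, List.length_cons, rr, h3, ih]
    have h4 := beta_sum hp a
    simp only [← sub_mul]
    rw [← Finset.sum_mul, h4, one_mul]

lemma eval_omega (hp : 2 ≤ p) (js : List (Fin m)) (hjs : js.length = m) :
    ext (ZMod p) (cF (uu m)) (mp _ lab (PP (tauL js) : Ch (ZMod p) (Vt p m))) ≠ 0 := by
  have : Fact (1 < p) := ⟨hp⟩
  have h1 : ∀ (f : List (ZMod p) → ZMod p) (j : Fin (m + 1)) (b : Bool) (g : ZMod p)
      (w : Ch (ZMod p) (Vt p m)), ext (ZMod p) (cF f) (mp _ lab (dd j b g w)) =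
      ext (ZMod p) (cF (fun t => f (g :: t))) (mp _ lab w) := by
    intro f j b g w
    rw [dd, mp_cone, lab, cF_cone]
  have h3 : ∀ (r : ZMod p) (f : List (ZMod p) → ZMod p) (c : Ch (ZMod p) (Lb p m)),
      ext (ZMod p) (cF (fun t => r * f t)) c = r * ext (ZMod p) (cF f) c := by
    intro r f c
    rw [← ext_smul_fun]
    congr 2
    funext l
    simp [cF, mul_assoc]
  have h2 := eval_tauL hp js (0 : ZMod p)
  rw [hjs] at h2
  rw [PP_apply]
  simp only [map_sub, h1, uu, h3, h2]
  have h5 : (-1 : ZMod p) ^ (2 * m + 2) = 1 := Even.neg_one_pow ⟨m + 1, by ring⟩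
  rw [h5]
  simp

/-- the lists we allow: sorted, in a single cell, of bounded length -/
def Cell (l : List (Vt p m)) : Prop :=
  Sorted l ∧ l.length ≤ 4 * m + 5 ∧ ∃ j : Fin (2 * m + 2 + 1), Sum.inr j ∉ l ∧
    ∃ h d : Fin (m + 1) → ZMod p, (∀ i, d i = 0 ∨ d i = 1) ∧
      ∀ i b g, Sum.inl (i, b, g) ∈ l → g = h i + if b then 0 else d i

lemma Cell.sub {l l' : List (Vt p m)} (h : Cell l) (h' : l'.Sublist l) : Cell l' := by
  obtain ⟨h1, h2, j, hj, f, d, hd, hf⟩ := h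
  exact ⟨h1.sublist h', h'.length_le.trans h2, j, fun h => hj (h'.subset h), f, d, hd,
    fun i b g hg => hf i b g (h'.subset hg)⟩

/-- intermediate predicate for lists occurring in `tauL js` -/
def CellJ (js : List (Fin m)) (l : List (Vt p m)) : Prop :=
  Sorted l ∧ l.length ≤ 2 * js.length + (2 * m + 2) ∧ ∃ j : Fin (2 * m + 2 + 1), Sum.inr j ∉ l ∧
    ∃ h d : Fin (m + 1) → ZMod p, (∀ i, d i = 0 ∨ d i = 1) ∧
      ∀ i b g, Sum.inl (i, b, g) ∈ l → (i ∈ js.map Fin.succ) ∧ g = h i + if b then 0 else d i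

lemma sorted_inl {A B : Type} (a : A) {l : List (A ⊕ B)} (h : Sorted l) : Sorted (Sum.inl a :: l) := by
  rw [Sorted, List.pairwise_cons]
  exact ⟨fun _ _ h => by simp at h, h⟩

lemma tauL_supp (js : List (Fin m)) (hjs : js.Nodup) :
    (tauL js : Ch (ZMod p) (Vt p m)) ∈ Sup _ (CellJ js) := by
  induction js with
  | nil =>
    rw [tauL, zz, ]
    refine mp_mem Sum.inr ?_ (bd_supp _)
    rintro l ⟨h, h'⟩
    rw [List.length_ofFn] at h'
    refine ⟨?_, ?_, ?_⟩
    · rw [Sorted, List.pairwise_map]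
      exact List.pairwise_of_forall_mem_list (by simp)
    · simp; omega
    · obtain ⟨j, hj⟩ : ∃ j, j ∉ l := by
        by_contra hcon
        push Not at hcon
        have : Finset.univ ⊆ l.toFinset := fun j _ => by simp [hcon j]
        have := Finset.card_le_card this
        have h2 := l.toFinset_card_le
        simp at this
        omega
      refine ⟨j, by simpa using hj, 0, 0, by simp, ?_⟩
      intro i b g h
      simp at h
  | cons j js ih =>
    rw [List.nodup_cons] at hjs
    rw [tauL, BB_apply]
    refine Submodule.sum_mem _ (fun h _ => ?_)
    have key : ∀ e : ZMod p, (e = 0 ∨ e = 1) →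
        dd j.succ false (h + e) (dd j.succ true h (tauL js)) ∈ Sup (ZMod p) (CellJ (j :: js)) := by
      intro e he
      refine cone_mem (P := fun l => CellJ (j :: js) (Sum.inl (j.succ, false, h + e) :: l)) _
        (fun _ h => h) ?_
      refine cone_mem _ ?_ (ih hjs.2)
      rintro l ⟨h1, h2, jj, h3, f, d, hd, hf⟩
      refine ⟨sorted_inl _ (sorted_inl _ h1), by simp at h2 ⊢; omega, jj, by simpa using h3,
        Function.update f j.succ h, Function.update d j.succ e, ?_, ?_⟩
      · intro i
        by_cases hi : i = j.succ
        · subst hi; simpa using he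
        · simpa [hi] using hd i
      · intro i b g hg
        simp only [List.mem_cons, Sum.inl.injEq, Prod.mk.injEq] at hg
        rcases hg with ⟨rfl, rfl, rfl⟩ | ⟨rfl, rfl, rfl⟩ | hg
        · simp
        · simp
        · obtain ⟨h4, h5⟩ := hf i b g hg
          have hi : i ≠ j.succ := by
            rintro rfl
            simp only [List.mem_map] at h4
            obtain ⟨j', h6, h7⟩ := h4
            rw [Fin.succ_inj.1 h7] at h6
            exact hjs.1 h6
          refine ⟨by rw [List.map_cons]; exact List.mem_cons_of_mem _ h4, by simpa [hi] using h5⟩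
    have k0 := key 0 (Or.inl rfl)
    rw [add_zero] at k0
    exact sub_mem k0 (key 1 (Or.inr rfl))

lemma omega_supp (js : List (Fin m)) (hjs : js.Nodup) (hl : js.length = m) :
    (PP (tauL js) : Ch (ZMod p) (Vt p m)) ∈ Sup _ Cell := by
  rw [PP_apply]
  have key : ∀ e : ZMod p, (e = 0 ∨ e = 1) →
      dd 0 false e (dd 0 true 0 (tauL js)) ∈ Sup (ZMod p) (Cell (m := m)) := by
    intro e he
    refine cone_mem (P := fun l => Cell (Sum.inl (0, false, e) :: l)) _
      (fun _ h => h) ?_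
    refine cone_mem _ ?_ (tauL_supp js hjs)
    rintro l ⟨h1, h2, jj, h3, f, d, hd, hf⟩
    refine ⟨sorted_inl _ (sorted_inl _ h1), by simp at h2 ⊢; omega, jj, by simpa using h3,
      Function.update f 0 0, Function.update d 0 e, ?_, ?_⟩
    · intro i
      by_cases hi : i = 0
      · subst hi; simpa using he
      · simpa [hi] using hd i
    · intro i b g hg
      simp only [List.mem_cons, Sum.inl.injEq, Prod.mk.injEq] at hg
      rcases hg with ⟨rfl, rfl, rfl⟩ | ⟨rfl, rfl, rfl⟩ | hg
      · simp
      · simp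
      · obtain ⟨h4, h5⟩ := hf i b g hg
        have hi : i ≠ 0 := by
          rintro rfl
          simp only [List.mem_map] at h4
          obtain ⟨j', h6, h7⟩ := h4
          exact Fin.succ_ne_zero _ h7
        simpa [hi] using h5
  exact sub_mem (key 0 (Or.inl rfl)) (key 1 (Or.inr rfl))

lemma dtau_supp (js : List (Fin m)) (hjs : js.Nodup) (hl : js.length = m) :
    (dd 0 false 0 (tauL js) : Ch (ZMod p) (Vt p m)) ∈ Sup _ Cell := by
  refine cone_mem _ ?_ (tauL_supp js hjs)
  rintro l ⟨h1, h2, jj, h3, f, d, hd, hf⟩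
  refine ⟨(sorted_inl _ h1), by simp at h2 ⊢; omega, jj, by simpa using h3,
    Function.update f 0 0, Function.update d 0 0, ?_, ?_⟩
  · intro i
    by_cases hi : i = 0
    · subst hi; simp
    · simpa [hi] using hd i
  · intro i b g hg
    simp only [List.mem_cons, Sum.inl.injEq, Prod.mk.injEq] at hg
    rcases hg with ⟨rfl, rfl, rfl⟩ | hg
    · simp
    · obtain ⟨h4, h5⟩ := hf i b g hg
      have hi : i ≠ 0 := by
        rintro rfl
        simp only [List.mem_map] at h4
        obtain ⟨j', h6, h7⟩ := h4
        exact Fin.succ_ne_zero _ h7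
      simpa [hi] using h5

lemma lefts_shL (l : List (Lb p m)) : lefts (l.map shL) = (lefts l).map (· + 1) := by
  induction l with
  | nil => rfl
  | cons x l ih => rcases x with g | i <;> simp [shL, ih]

lemma rights_shL (l : List (Lb p m)) : rights (l.map shL) = rights l := by
  induction l with
  | nil => rfl
  | cons x l ih => rcases x with g | i <;> simp [shL, ih]

lemma isRight_lab (x : Vt p m) : (lab x).isRight = x.isRight := by
  rcases x with ⟨j, b, g⟩ | i <;> rfl

lemma lab_eq_inr {x : Vt p m} {j} (h : lab x = Sum.inr j) : x = Sum.inr j := by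
  rcases x with ⟨j, b, g⟩ | i
  · cases h
  · exact congrArg Sum.inr (Sum.inr_injective h)

/-- the combinatorial contradiction -/
theorem comb_false (hp : 2 ≤ p) (th : Ch (ZMod p) (Vt p m) →ₗ[ZMod p] Ch (ZMod p) (Lb p m))
    (h0 : th (bs _ []) = bs _ []) (hbd : ∀ c, bd _ (th c) = th (bd _ c))
    (heq : ∀ l, Cell l → th (mp _ shV (bs _ l)) = mp _ shL (th (bs _ l)))
    (hgood : ∀ l, Cell l → th (bs _ l) ∈ Sup _ Good)
    (hright : ∀ l, Cell l → (∀ x ∈ l, x.isRight) →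
      th (bs _ l) ∈ Sup _ (fun w => ∀ y ∈ w, ∃ j, y = Sum.inr j ∧ Sum.inr j ∈ l))
    (hzero : ∀ l, Cell l → th (bs _ l) ∈ Sup _ (fun w => cF (R := ZMod p) (uu m) w = 0)) : False := by
  set js := List.finRange m
  have hjs : js.Nodup := List.nodup_finRange m
  have hl : js.length = m := List.length_finRange
  set om : Ch (ZMod p) (Vt p m) := PP (tauL js)
  have e1 := ho_spec th lab hbd h0 om
  have e2 := congrArg (ext (ZMod p) (cF (uu m))) e1
  rw [map_add, map_sub] at e2
  have z1 : ext (ZMod p) (cF (uu m)) (th om) = 0 := by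
    have : ext (ZMod p) (cF (uu m)) (th om) ∈ (⊥ : Submodule (ZMod p) (ZMod p)) := by
      refine map_mem ((ext (ZMod p) (cF (uu m))).comp th) ?_ (omega_supp js hjs hl)
      intro l hl
      exact map_mem (ext (ZMod p) (cF (uu m))) (fun w hw => by simpa using hw) (hzero l hl)
    simpa using this
  have hoGood : ∀ l, Cell l → ho th lab (bs _ l) ∈ Sup (ZMod p) (Good (K := 2 * m + 2)) := by
    intro l hl
    have := ho_supp th lab Cell (fun l w => Good w ∧ ((∀ x ∈ l, x.isRight) →
      ∀ y ∈ w, ∃ j, y = Sum.inr j ∧ Sum.inr j ∈ l)) (fun _ _ h h' => h.sub h') ?_ ?_ ?_ ?_ l hl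
    · exact Sup_mono (fun _ h => h.1) this
    · intro l hl
      by_cases hr : ∀ x ∈ l, x.isRight
      · refine Sup_mono ?_ (hright l hl hr)
        intro w hw
        refine ⟨⟨?_, ?_⟩, fun _ => hw⟩
        · rw [Sorted]
          refine List.pairwise_of_forall_mem_list ?_
          intro a _ b hb _
          obtain ⟨j, rfl, _⟩ := hw b hb
          rfl
        · obtain ⟨_, _, j, hj, _⟩ := hl
          refine ⟨j, fun h => ?_⟩
          obtain ⟨j', h1, h2⟩ := hw _ h
          cases Sum.inr_injective h1
          exact hj h2
      · refine Sup_mono (fun w hw => ⟨hw, fun h => absurd h hr⟩) (hgood l hl)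
    · intro l hl
      refine ⟨⟨?_, ?_⟩, ?_⟩
      · rw [Sorted, List.pairwise_map]
        refine hl.1.imp ?_
        intro a b h
        simpa [isRight_lab] using h
      · obtain ⟨_, _, j, hj, _⟩ := hl
        refine ⟨j, fun h => ?_⟩
        obtain ⟨x, hx, hx'⟩ := List.mem_map.1 h
        rw [lab_eq_inr hx'] at hx
        exact hj hx
      · intro hr y hy
        obtain ⟨x, hx, rfl⟩ := List.mem_map.1 hy
        rcases x with x | j
        · simpa using hr _ hx
        · exact ⟨j, rfl, hx⟩
    · intro l l' w hl hs hw
      refine ⟨hw.1, fun hr y hy => ?_⟩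
      obtain ⟨j, h1, h2⟩ := hw.2 (fun x hx => hr x (hs.subset hx)) y hy
      exact ⟨j, h1, hs.subset h2⟩
    · intro x t w hl hw
      rcases x with x | j
      · refine ⟨⟨sorted_inl _ hw.1.1, ?_⟩, fun hr => ?_⟩
        · obtain ⟨j, hj⟩ := hw.1.2
          exact ⟨j, by simpa [lab] using hj⟩
        · simpa using hr (Sum.inl x) (by simp)
      · have hr : ∀ y ∈ (Sum.inr j :: t : List (Vt p m)), y.isRight := by
          have h1 := hl.1
          rw [Sorted, List.pairwise_cons] at h1
          intro y hy
          rcases List.mem_cons.1 hy with rfl | hy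
          · rfl
          · exact h1.1 y hy rfl
        have h2 : ∀ y ∈ (lab (Sum.inr j) :: w : List (Lb p m)),
            ∃ j', y = Sum.inr j' ∧ Sum.inr j' ∈ (Sum.inr j :: t : List (Vt p m)) := by
          intro y hy
          rcases List.mem_cons.1 hy with rfl | hy
          · exact ⟨j, rfl, by simp⟩
          · exact hw.2 hr y hy
        refine ⟨⟨?_, ?_⟩, fun _ => h2⟩
        · rw [Sorted]
          refine List.pairwise_of_forall_mem_list ?_
          intro a _ b hb _
          obtain ⟨j, rfl, _⟩ := h2 b hb
          rfl
        · obtain ⟨_, _, j0, hj0, _⟩ := hl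
          refine ⟨j0, fun h => ?_⟩
          obtain ⟨j', h3, h4⟩ := h2 _ h
          cases Sum.inr_injective h3
          exact hj0 h4
  have z2 : ext (ZMod p) (cF (uu m)) (bd _ (ho th lab om)) = 0 := by
    have : ext (ZMod p) (cF (uu m)) (bd _ (ho th lab om)) ∈ (⊥ : Submodule (ZMod p) (ZMod p)) := by
      refine map_mem (((ext (ZMod p) (cF (uu m))).comp (bd _)).comp (ho th lab)) ?_
        (omega_supp js hjs hl)
      intro l hl
      exact map_mem ((ext (ZMod p) (cF (uu m))).comp (bd _))
        (fun w hw => by simpa using cF_good _ (uu_cocycle m) w hw) (hoGood l hl)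
    simpa using this
  have z3 : ext (ZMod p) (cF (uu m)) (ho th lab (bd _ om)) = 0 := by
    rw [show bd _ om = _ from bd_PP js, map_sub, ho_equiv th lab Cell (fun _ _ h h' => h.sub h') shV shL
      lab_shV heq _ (dtau_supp js hjs hl), map_sub]
    have : (ext (ZMod p) (cF (uu m))).comp (mp _ shL) = ext (ZMod p) (cF (K := 2 * m + 2) (uu (p := p) m)) :=
      hom_ext (fun l => by simp [cF, lefts_shL, rights_shL, uu_shift])
    have := congrArg (fun f => f (ho th lab (dd 0 false 0 (tauL js)))) this
    rw [sub_eq_zero]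
    exact this
  rw [z1, z2, z3] at e2
  exact eval_omega hp js hl (by simpa using e2)

end TheChain

end LSC

open scoped Topology

namespace LSC

section Flags
variable {R : Type} [CommRing R] {E : Type} [NormedAddCommGroup E] [NormedSpace ℝ E]

/-- barycentre of a list -/
noncomputable def bary (l : List E) : E := (l.length : ℝ)⁻¹ • l.sum

lemma bary_mem {l : List E} (hl : l ≠ []) {C : Set E} (hC : Convex ℝ C) (h : ∀ x ∈ l, x ∈ C) :
    bary l ∈ C := by
  have hpos : (0 : ℝ) < l.length := by
    exact_mod_cast List.length_pos_iff.2 hl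
  have h1 : bary l = ∑ i : Fin l.length, (l.length : ℝ)⁻¹ • l.get i := by
    rw [← Finset.smul_sum, bary]
    congr 1
    simp
  rw [h1]
  refine hC.sum_mem (fun i _ => by positivity) ?_ (fun i _ => h _ (List.get_mem _ _))
  simp [hpos.ne']

lemma bary_dist {l : List E} {M : ℕ} (hM : l.length ≤ M) {d : ℝ} (hd : 0 ≤ d)
    (h : ∀ x ∈ l, ∀ y ∈ l, dist x y ≤ d) {x : E} (hx : x ∈ l) :
    dist (bary l) x ≤ (1 - (M : ℝ)⁻¹) * d := by
  classical
  have hpos : 0 < l.length := List.length_pos_iff.2 (List.ne_nil_of_mem hx)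
  have hpos' : (0 : ℝ) < l.length := by exact_mod_cast hpos
  have h1 : ∀ t : List E, t.sum - (t.length : ℝ) • x = (t.map (fun y => y - x)).sum := by
    intro t
    induction t with
    | nil => simp
    | cons a t ih =>
      simp only [List.sum_cons, List.length_cons, Nat.cast_add, Nat.cast_one, List.map_cons, ← ih]
      module
  have h2 : bary l - x = (l.length : ℝ)⁻¹ • (l.map (fun y => y - x)).sum := by
    rw [← h1, smul_sub, smul_smul, inv_mul_cancel₀ hpos'.ne', one_smul, bary]
  have h3 : (l.map (fun y => y - x)).sum = ((l.erase x).map (fun y => y - x)).sum := by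
    rw [((List.perm_cons_erase hx).map (fun y => y - x)).sum_eq]
    simp
  have h4 : ∀ t : List E, (∀ y ∈ t, dist y x ≤ d) →
      ‖(t.map (fun y => y - x)).sum‖ ≤ t.length * d := by
    intro t
    induction t with
    | nil => simp
    | cons a t ih =>
      intro ht
      simp only [List.map_cons, List.sum_cons, List.length_cons]
      refine (norm_add_le _ _).trans ?_
      have e1 := ht a (by simp)
      rw [dist_eq_norm] at e1
      have e2 := ih (fun y hy => ht y (by simp [hy]))
      push_cast
      linarith
  rw [dist_eq_norm, h2, h3, norm_smul, norm_inv, Real.norm_natCast]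
  have h5 := h4 (l.erase x) (fun y hy => h y (List.mem_of_mem_erase hy) x hx)
  rw [List.length_erase_of_mem hx, Nat.cast_sub (by omega)] at h5
  calc (l.length : ℝ)⁻¹ * ‖((l.erase x).map (fun y => y - x)).sum‖
      ≤ (l.length : ℝ)⁻¹ * (((l.length : ℝ) - (1 : ℕ)) * d) := by gcongr
    _ = (1 - (l.length : ℝ)⁻¹) * d := by
        push_cast; field_simp
    _ ≤ (1 - (M : ℝ)⁻¹) * d := by
        have : (M : ℝ)⁻¹ ≤ (l.length : ℝ)⁻¹ := by gcongr
        gcongr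

lemma sd_bary_supp (M : ℕ) (l : List E) :
    sd R bary (bs R l) ∈ Sup R (fun w => w.length = l.length ∧
      (∀ C : Set E, Convex ℝ C → (∀ x ∈ l, x ∈ C) → ∀ x ∈ w, x ∈ C) ∧
      ∀ d : ℝ, 0 ≤ d → l.length ≤ M → (∀ x ∈ l, ∀ y ∈ l, dist x y ≤ d) →
        ∀ x ∈ w, ∀ y ∈ w, dist x y ≤ (1 - (M : ℝ)⁻¹) * d) := by
  refine sd_supp bary (fun l w => w.length = l.length ∧
      (∀ C : Set E, Convex ℝ C → (∀ x ∈ l, x ∈ C) → ∀ x ∈ w, x ∈ C) ∧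
      ∀ d : ℝ, 0 ≤ d → l.length ≤ M → (∀ x ∈ l, ∀ y ∈ l, dist x y ≤ d) →
        ∀ x ∈ w, ∀ y ∈ w, dist x y ≤ (1 - (M : ℝ)⁻¹) * d) (by simp) ?_ l
  rintro l l' w hl hs hlen ⟨h1, h2, h3⟩
  refine ⟨by simp [h1, hlen], ?_, ?_⟩
  · intro C hC h x hx
    rcases List.mem_cons.1 hx with rfl | hx
    · exact bary_mem hl hC h
    · exact h2 C hC (fun y hy => h y (hs.subset hy)) x hx
  · intro d hd hM h
    have hlM : (1 : ℝ) ≤ M := by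
      have := List.length_pos_iff.2 hl
      exact_mod_cast (by omega : 1 ≤ M)
    have hnn : 0 ≤ (1 - (M : ℝ)⁻¹) * d := by
      have : (M : ℝ)⁻¹ ≤ 1 := inv_le_one_of_one_le₀ hlM
      exact mul_nonneg (by linarith) hd
    have hb : ∀ x ∈ w, dist x (bary l) ≤ (1 - (M : ℝ)⁻¹) * d := by
      intro x hx
      exact h2 (Metric.closedBall (bary l) ((1 - (M : ℝ)⁻¹) * d)) (convex_closedBall _ _)
        (fun y hy => by
          rw [Metric.mem_closedBall, dist_comm]
          exact bary_dist hM hd h (hs.subset hy)) x hx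
    intro x hx y hy
    rcases List.mem_cons.1 hx with rfl | hx <;> rcases List.mem_cons.1 hy with rfl | hy
    · simpa using hnn
    · rw [dist_comm]; exact hb _ hy
    · exact hb _ hx
    · exact h3 d hd (by omega) (fun a ha b hb => h a (hs.subset ha) b (hs.subset hb)) x hx y hy

open Classical in
/-- iterated barycentric subdivision followed by flags of vertex sets -/
noncomputable def fl (R : Type) [CommRing R] (E : Type) [NormedAddCommGroup E] [NormedSpace ℝ E] :
    ℕ → Ch R E →ₗ[R] Ch R (Finset E)
  | 0 => sd R (fun l => l.toFinset)
  | N + 1 => (fl R E N).comp (sd R bary)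

lemma fl_nil (N : ℕ) : fl R E N (bs R []) = bs R [] := by
  induction N with
  | zero => simp [fl]
  | succ N ih => simp [fl, ih]

lemma fl_bd (N : ℕ) (c : Ch R E) : bd R (fl R E N c) = fl R E N (bd R c) := by
  induction N generalizing c with
  | zero => exact sd_bd _ _
  | succ N ih => simp [fl, ih, sd_bd]

open Classical in
lemma fl_mp (N : ℕ) (f : E →ₗ[ℝ] E) (c : Ch R E) :
    fl R E N (mp R f c) = mp R (fun s => s.image f) (fl R E N c) := by
  induction N generalizing c with
  | zero =>
    refine sd_mp _ _ _ _ (fun l => ?_) c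
    ext x; simp
  | succ N ih =>
    simp only [fl, LinearMap.comp_apply]
    rw [sd_mp bary bary f f, ih]
    intro l
    simp only [bary, List.length_map, map_smul]
    congr 1
    rw [map_list_sum]

lemma fl_supp (N M : ℕ) (l : List E) (hM : l.length ≤ M) (C : Set E) (hC : Convex ℝ C)
    (hl : ∀ x ∈ l, x ∈ C) (d : ℝ) (hd : 0 ≤ d) (hdl : ∀ x ∈ l, ∀ y ∈ l, dist x y ≤ d) :
    fl R E N (bs R l) ∈ Sup R (fun w => w.Pairwise (fun s t => t ⊆ s) ∧
      ∀ s ∈ w, s.Nonempty ∧ (∀ x ∈ s, x ∈ C) ∧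
        ∀ x ∈ s, ∀ y ∈ s, dist x y ≤ (1 - (M : ℝ)⁻¹) ^ N * d) := by
  classical
  induction N generalizing l d with
  | zero =>
    have h := sd_supp (R := R) (fun l : List E => l.toFinset)
      (fun l w => w.Pairwise (fun s t => t ⊆ s) ∧ ∀ s ∈ w, s.Nonempty ∧ s ⊆ l.toFinset)
      (by simp) (by
        rintro l l' w h1 h2 - ⟨h3, h4⟩
        have hss : l'.toFinset ⊆ l.toFinset := fun x hx => by
          simp only [List.mem_toFinset] at hx ⊢; exact h2.subset hx
        refine ⟨List.pairwise_cons.2 ⟨fun s hs => (h4 s hs).2.trans hss, h3⟩, ?_⟩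
        intro s hs
        rcases List.mem_cons.1 hs with rfl | hs
        · exact ⟨List.toFinset_nonempty_iff _ |>.2 h1, subset_rfl⟩
        · exact ⟨(h4 s hs).1, (h4 s hs).2.trans hss⟩) l
    have e : fl R E 0 = sd R (fun l : List E => l.toFinset) := by
      rw [fl]
    rw [e]
    refine Sup_mono ?_ h
    rintro w ⟨h1, h2⟩
    refine ⟨h1, fun s hs => ⟨(h2 s hs).1, ?_, ?_⟩⟩
    · intro x hx; exact hl x (by simpa using (h2 s hs).2 hx)
    · intro x hx y hy
      simpa using hdl x (by simpa using (h2 s hs).2 hx) y (by simpa using (h2 s hs).2 hy)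
  | succ N ih =>
    rw [fl, LinearMap.comp_apply]
    refine map_mem _ ?_ (sd_bary_supp M l)
    rintro w ⟨h1, h2, h3⟩
    by_cases hw : w = []
    · subst hw
      rw [fl_nil]
      exact bs_mem (by simp)
    have hlM : (1 : ℝ) ≤ M := by
      have := List.length_pos_iff.2 hw
      exact_mod_cast (by omega : 1 ≤ M)
    have hnn : 0 ≤ (1 - (M : ℝ)⁻¹) * d := by
      have : (M : ℝ)⁻¹ ≤ 1 := inv_le_one_of_one_le₀ hlM
      exact mul_nonneg (by linarith) hd
    have := ih w (by omega) (h2 C hC hl) _ hnn (h3 d hd hM hdl)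
    rw [pow_succ, mul_assoc]
    exact this

end Flags

end LSC

open scoped Topology

namespace LSC

section FlagFalse
set_option linter.unusedSectionVars false
variable {p : ℕ} [NeZero p] {m : ℕ}

/-- ambient space -/
abbrev EE (p m : ℕ) : Type := Vt p m → ℝ

/-- inverse shift -/
def shVi : Vt p m → Vt p m
  | Sum.inl (j, b, g) => Sum.inl (j, b, g - 1)
  | Sum.inr i => Sum.inr i

/-- shift on the ambient space -/
def TE : EE p m →ₗ[ℝ] EE p m := LinearMap.funLeft ℝ ℝ shVi

lemma TE_inl (v : EE p m) (i b g) : TE v (Sum.inl (i, b, g)) = v (Sum.inl (i, b, g - 1)) := rfl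
lemma TE_inr (v : EE p m) (i) : TE v (Sum.inr i) = v (Sum.inr i) := rfl

/-- vertices -/
noncomputable def ve (x : Vt p m) : EE p m := Pi.single x 1

lemma TE_ve (x : Vt p m) : TE (ve x) = ve (shV x) := by
  funext y
  rcases x with ⟨j, b, g⟩ | i <;> rcases y with ⟨j', b', g'⟩ | i'
  · simp only [TE_inl, ve, shV, Pi.single_apply, Sum.inl.injEq, Prod.mk.injEq]
    simp [sub_eq_iff_eq_add]
  · simp [TE_inr, ve, shV]
  · simp [TE_inl, ve, shV]
  · simp [TE_inr, ve, shV, Pi.single_apply]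

/-- face spanned by a set of vertices -/
def Face (A : Set (Vt p m)) : Set (EE p m) :=
  {v | (∀ x, 0 ≤ v x) ∧ ∑ x, v x = 1 ∧ ∀ x, x ∉ A → v x = 0}

lemma convex_Face (A : Set (Vt p m)) : Convex ℝ (Face A) := by
  rintro v ⟨h1, h2, h3⟩ w ⟨k1, k2, k3⟩ a b ha hb hab
  refine ⟨fun x => ?_, ?_, fun x hx => ?_⟩
  · have := h1 x; have := k1 x
    simp only [Pi.add_apply, Pi.smul_apply, smul_eq_mul]; positivity
  · simp only [Pi.add_apply, Pi.smul_apply, smul_eq_mul, Finset.sum_add_distrib, ← Finset.mul_sum, h2, k2]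
    linarith
  · simp [h3 x hx, k3 x hx]

lemma ve_mem {A : Set (Vt p m)} {x : Vt p m} (hx : x ∈ A) : ve x ∈ Face A := by
  refine ⟨fun y => ?_, by simp [ve], fun y hy => ?_⟩
  · by_cases h : y = x
    · subst h; simp [ve]
    · simp [ve, h]
  · have : y ≠ x := by rintro rfl; exact hy hx
    simp [ve, this]

/-- allowed vertices of a cell -/
def cellAl (h d : Fin (m + 1) → ZMod p) (j : Fin (2 * m + 2 + 1)) : Set (Vt p m) :=
  {x | match x with
    | Sum.inl (i, b, g) => g = h i + if b then 0 else d i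
    | Sum.inr i => i ≠ j}

/-- a point set lies in one cell -/
def InCell (s : Finset (EE p m)) : Prop :=
  ∃ h d : Fin (m + 1) → ZMod p, ∃ j, (∀ i, d i = 0 ∨ d i = 1) ∧ ∀ x ∈ s, x ∈ Face (cellAl h d j)

lemma dist_ve (x y : Vt p m) : dist (ve x) (ve y) ≤ 1 := by
  rw [dist_pi_le_iff zero_le_one]
  intro z
  rw [Real.dist_eq]
  simp only [ve, Pi.single_apply]
  split_ifs <;> simp

open Classical in
/-- shifted point set -/
noncomputable def imT (s : Finset (EE p m)) : Finset (EE p m) := s.image TE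

lemma mem_imT {s : Finset (EE p m)} {x : EE p m} : x ∈ imT s ↔ ∃ y ∈ s, TE y = x := by
  simp [imT]

lemma mp_congr {R V W : Type} [CommRing R] {P : List V → Prop} (f g : V → W)
    (h : ∀ w, P w → ∀ s ∈ w, f s = g s) {c : Ch R V} (hc : c ∈ Sup R P) :
    mp R f c = mp R g c := by
  refine map_eq (mp R f) (mp R g) ?_ hc
  intro w hw
  rw [mp_bs, mp_bs, List.map_congr_left (h w hw)]

/-- reduction to a labelling of finite sets -/
theorem flag_false (hp : 2 ≤ p) (lb : Finset (EE p m) → Lb p m) (ep : ℝ) (hep : 0 < ep)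
    (ha : ∀ s : Finset (EE p m), s.Nonempty → InCell s → lb (imT s) = shL (lb s))
    (hb : ∀ w : List (Finset (EE p m)), w.Pairwise (fun s t => t ⊆ s) →
      (∀ s ∈ w, s.Nonempty ∧ InCell s ∧ ∀ x ∈ s, ∀ y ∈ s, dist x y < ep) → Good (w.map lb))
    (hc : ∀ (s : Finset (EE p m)) (J : Set (Fin (2 * m + 2 + 1))), s.Nonempty → InCell s →
      (∀ x ∈ s, x ∈ Face (Sum.inr '' J)) → ∃ j ∈ J, lb s = Sum.inr j)
    (hd : ∀ w : List (Finset (EE p m)), w.Pairwise (fun s t => t ⊆ s) →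
      (∀ s ∈ w, s.Nonempty ∧ InCell s ∧ ∀ x ∈ s, ∀ y ∈ s, dist x y < ep) →
      cF (R := ZMod p) (uu m) (w.map lb) = 0) : False := by
  set M := 4 * m + 5 with hM
  obtain ⟨N, hN⟩ : ∃ N : ℕ, (1 - (M : ℝ)⁻¹) ^ N < ep := by
    refine exists_pow_lt_of_lt_one hep ?_
    have : (0 : ℝ) < (M : ℝ)⁻¹ := by positivity
    linarith
  have key : ∀ (l : List (Vt p m)) (A : Set (Vt p m)), l.length ≤ M → (∀ x ∈ l, x ∈ A) →
      fl (ZMod p) (EE p m) N (bs _ (l.map ve)) ∈ Sup (ZMod p) (fun w =>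
        w.Pairwise (fun s t => t ⊆ s) ∧ ∀ s ∈ w, s.Nonempty ∧ (∀ x ∈ s, x ∈ Face A) ∧
        ∀ x ∈ s, ∀ y ∈ s, dist x y < ep) := by
    intro l A hl hA
    have := fl_supp (R := ZMod p) N M (l.map ve) (by simpa using hl) (Face A) (convex_Face A)
      (by
        intro x hx
        obtain ⟨y, hy, rfl⟩ := List.mem_map.1 hx
        exact ve_mem (hA y hy)) 1 zero_le_one
      (by
        intro x hx x' hx'
        obtain ⟨y, hy, rfl⟩ := List.mem_map.1 hx
        obtain ⟨y', hy', rfl⟩ := List.mem_map.1 hx'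
        exact dist_ve _ _)
    refine Sup_mono ?_ this
    rintro w ⟨h1, h2⟩
    refine ⟨h1, fun s hs => ⟨(h2 s hs).1, (h2 s hs).2.1, fun x hx y hy => ?_⟩⟩
    have := (h2 s hs).2.2 x hx y hy
    linarith
  have keyC : ∀ l : List (Vt p m), Cell l →
      fl (ZMod p) (EE p m) N (bs _ (l.map ve)) ∈ Sup (ZMod p) (fun w =>
        w.Pairwise (fun s t => t ⊆ s) ∧ ∀ s ∈ w, s.Nonempty ∧ InCell s ∧
        ∀ x ∈ s, ∀ y ∈ s, dist x y < ep) := by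
    rintro l ⟨h1, h2, j, hj, h, d, hd, hh⟩
    refine Sup_mono ?_ (key l (cellAl h d j) h2 ?_)
    · rintro w ⟨h3, h4⟩
      exact ⟨h3, fun s hs => ⟨(h4 s hs).1, ⟨h, d, j, hd, (h4 s hs).2.1⟩, (h4 s hs).2.2⟩⟩
    · intro x hx
      rcases x with ⟨i, b, g⟩ | i
      · exact hh i b g hx
      · rintro rfl; exact hj hx
  refine comb_false hp ((mp (ZMod p) lb).comp ((fl (ZMod p) (EE p m) N).comp (mp (ZMod p) ve)))
    ?_ ?_ ?_ ?_ ?_ ?_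
  · simp [fl_nil]
  · intro c
    simp only [LinearMap.comp_apply]
    rw [mp_bd, ← fl_bd, mp_bd]
  · intro l hl
    simp only [LinearMap.comp_apply]
    have h1 : mp (ZMod p) ve (mp (ZMod p) shV (bs (ZMod p) l)) =
        mp (ZMod p) (TE (p := p) (m := m)) (mp (ZMod p) ve (bs (ZMod p) l)) := by
      rw [mp_mp, mp_mp]
      congr 2
      funext x
      simp [TE_ve]
    rw [h1, fl_mp, mp_mp, mp_mp]
    rw [mp_bs]
    refine mp_congr _ _ (fun w hw s hs => ?_) (keyC l hl)
    have h5 := ha s (hw.2 s hs).1 (hw.2 s hs).2.1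
    simp only [Function.comp_apply]
    rw [← h5]
    congr 1
    ext x
    simp [mem_imT]
  · intro l hl
    simp only [LinearMap.comp_apply, mp_bs]
    exact mp_mem _ (fun w hw => hb w hw.1 hw.2) (keyC l hl)
  · intro l hl hr
    simp only [LinearMap.comp_apply, mp_bs]
    have h1 := key l (Sum.inr '' {j | Sum.inr j ∈ l}) hl.2.1 (by
      intro x hx
      rcases x with x | j
      · simpa using hr _ hx
      · exact ⟨j, hx, rfl⟩)
    refine mp_mem _ ?_ h1
    rintro w ⟨h3, h4⟩ y hy
    obtain ⟨s, hs, rfl⟩ := List.mem_map.1 hy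
    obtain ⟨h5, h6, h7⟩ := h4 s hs
    obtain ⟨j, hj, hj'⟩ := hc s _ h5 (by
      obtain ⟨_, _, j, hj, h, d, hd, hh⟩ := hl
      refine ⟨h, d, j, hd, fun x hx => ?_⟩
      obtain ⟨k1, k2, k3⟩ := h6 x hx
      refine ⟨k1, k2, fun y hy => k3 y ?_⟩
      rintro ⟨i, hi, rfl⟩
      apply hy
      rintro rfl
      exact hj hi) h6
    exact ⟨j, hj', hj⟩
  · intro l hl
    simp only [LinearMap.comp_apply, mp_bs]
    exact mp_mem _ (fun w hw => hd w hw.1 hw.2) (keyC l hl)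

end FlagFalse

end LSC

open scoped Topology

namespace LSC

lemma leb {α : Type} [PseudoMetricSpace α] {K : Set α} (hK : IsCompact K) (G : Set α → Prop)
    (h : ∀ x ∈ K, ∃ U ∈ 𝓝 x, G U) : ∃ δ > 0, ∀ x ∈ K, ∃ U, G U ∧ Metric.ball x δ ⊆ U := by
  choose! U hU hG using h
  obtain ⟨δ, hδ, h2⟩ := lebesgue_number_lemma_of_metric (c := fun x : K => interior (U x)) hK
    (fun _ => isOpen_interior)
    (fun x hx => Set.mem_iUnion.2 ⟨⟨x, hx⟩, mem_interior_iff_mem_nhds.2 (hU x hx)⟩)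
  refine ⟨δ, hδ, fun x hx => ?_⟩
  obtain ⟨y, hy⟩ := h2 x hx
  exact ⟨U y, hG y y.2, hy.trans interior_subset⟩

section Labels
set_option linter.unusedSectionVars false
variable {p : ℕ} [NeZero p] {m : ℕ}

/-- total mass of the right coordinates -/
def ss (v : EE p m) : ℝ := ∑ i, v (Sum.inr i)

lemma ss_TE (v : EE p m) : ss (TE v) = ss v := rfl

lemma continuous_ss : Continuous (ss (p := p) (m := m)) := by unfold ss; fun_prop

lemma ss_dist (v w : EE p m) : |ss v - ss w| ≤ (2 * m + 3) * dist v w := by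
  unfold ss
  rw [← Finset.sum_sub_distrib]
  refine (Finset.abs_sum_le_sum_abs _ _).trans ?_
  refine (Finset.sum_le_card_nsmul _ _ (dist v w) ?_).trans ?_
  · intro i _
    rw [← Real.dist_eq]
    exact dist_le_pi_dist v w _
  · simp
    apply le_of_eq
    ring

/-- the polyhedron -/
def Kt (p m : ℕ) [NeZero p] : Set (EE p m) :=
  {v | ∃ h d : Fin (m + 1) → ZMod p, ∃ j, (∀ i, d i = 0 ∨ d i = 1) ∧ v ∈ Face (cellAl h d j)}

lemma isClosed_Face (A : Set (Vt p m)) : IsClosed (Face A) := by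
  have : Face A = (⋂ x, {v : EE p m | 0 ≤ v x}) ∩ {v | ∑ x, v x = 1} ∩ ⋂ x, ⋂ (_ : x ∉ A), {v : EE p m | v x = 0} := by
    ext v
    simp [Face, and_assoc]
  rw [this]
  refine ((isClosed_iInter fun x => ?_).inter ?_).inter
    (isClosed_iInter fun x => isClosed_iInter fun _ => ?_)
  · exact isClosed_le (by fun_prop) (by fun_prop)
  · exact isClosed_eq (by fun_prop) (by fun_prop)
  · exact isClosed_eq (by fun_prop) (by fun_prop)

lemma isCompact_Face (A : Set (Vt p m)) : IsCompact (Face A) := by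
  refine IsCompact.of_isClosed_subset (isCompact_univ_pi (fun _ => isCompact_Icc (a := (0 : ℝ)) (b := 1)))
    (isClosed_Face A) ?_
  rintro v ⟨h1, h2, -⟩ x -
  refine ⟨h1 x, ?_⟩
  rw [← h2]
  exact Finset.single_le_sum (f := v) (fun y _ => h1 y) (Finset.mem_univ x)

lemma isCompact_Kt : IsCompact (Kt p m) := by
  have : Kt p m = ⋃ q ∈ {q : (Fin (m + 1) → ZMod p) × (Fin (m + 1) → ZMod p) × Fin (2 * m + 2 + 1) |
      ∀ i, q.2.1 i = 0 ∨ q.2.1 i = 1}, Face (cellAl q.1 q.2.1 q.2.2) := by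
    ext v
    simp [Kt]
  rw [this]
  have : Fintype (ZMod p) := ZMod.fintype p
  exact (Set.toFinite _).isCompact_biUnion (fun _ _ => isCompact_Face _)

lemma InCell.kt {s : Finset (EE p m)} (h : InCell s) {x} (hx : x ∈ s) : x ∈ Kt p m := by
  obtain ⟨a, d, j, h1, h2⟩ := h
  exact ⟨a, d, j, h1, h2 x hx⟩

/-- argmax -/
noncomputable def am {N : ℕ} (u : Fin (N + 1) → ℝ) : Fin (N + 1) := (Finite.exists_max u).choose
lemma am_spec {N : ℕ} (u : Fin (N + 1) → ℝ) (i) : u i ≤ u (am u) := (Finite.exists_max u).choose_spec i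

variable (O : Fin (2 * m + 1) → ZMod p → Set (EE p m)) (Φ : EE p m → Fin (2 * m + 2 + 1) → ℝ)

/-- left type -/
def LT (s : Finset (EE p m)) : Prop := ∃ z ∈ s, ss z < 1 / 2

/-- indices of members containing a set -/
def II (s : Finset (EE p m)) : Set ℕ := {n | ∃ i : Fin (2 * m + 1), i.val = n ∧ ∃ g, ∀ z ∈ s, z ∈ O i g}

/-- occupied columns -/
def DD (s : Finset (EE p m)) : Set (Fin (m + 1) × Bool) :=
  {q | ∃ g, ∃ z ∈ s, z (Sum.inl (q.1, q.2, g)) ≠ 0}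

/-- group label predicate -/
def Pr (s : Finset (EE p m)) (g : ZMod p) : Prop :=
  ((II O s).Nonempty ∧ ∃ i : Fin (2 * m + 1), i.val = sInf (II O s) ∧ ∀ z ∈ s, z ∈ O i g) ∨
  (¬ (II O s).Nonempty ∧ ∃ z ∈ s, z (Sum.inl ((Classical.epsilon (· ∈ DD s)).1,
    (Classical.epsilon (· ∈ DD s)).2, g)) ≠ 0)

/-- group label -/
noncomputable def lam (s : Finset (EE p m)) : ZMod p := Classical.epsilon (Pr O s)

open Classical in
/-- the label -/
noncomputable def lbl (s : Finset (EE p m)) : Lb p m :=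
  if LT s then Sum.inl (lam O s) else Sum.inr (s.sup (fun z => am (Φ z)))

lemma LT_imT (s : Finset (EE p m)) : LT (imT s) ↔ LT s := by
  simp [LT, mem_imT, ss_TE]

variable {O Φ}

lemma exists_inl {v : EE p m} (hv : v ∈ Kt p m) (h : ss v < 1) : ∃ i b g, v (Sum.inl (i, b, g)) ≠ 0 := by
  obtain ⟨_, _, _, _, _, h2, _⟩ := hv
  by_contra! hc
  rw [Fintype.sum_sum_type] at h2
  rw [Finset.sum_eq_zero] at h2
  · unfold ss at h; linarith
  · rintro ⟨i, b, g⟩ _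
    exact hc i b g

lemma DD_imT {s : Finset (EE p m)} : DD (imT s) = DD s := by
  ext q
  constructor
  · rintro ⟨g, z, hz, h⟩
    obtain ⟨y, hy, rfl⟩ := mem_imT.1 hz
    exact ⟨g - 1, y, hy, h⟩
  · rintro ⟨g, z, hz, h⟩
    refine ⟨g + 1, TE z, mem_imT.2 ⟨z, hz, rfl⟩, ?_⟩
    simpa [TE_inl] using h

lemma Pr_ex (hdis : ∀ i g g' z, z ∈ O i g → z ∈ O i g' → g = g') {s : Finset (EE p m)} (hc : InCell s) (hl : LT s) : ∃ g, Pr O s g := by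
  by_cases h : (II O s).Nonempty
  · obtain ⟨i, hi, g, hg⟩ := Nat.sInf_mem h
    exact ⟨g, Or.inl ⟨h, i, hi, hg⟩⟩
  · obtain ⟨z, hz, hz'⟩ := hl
    obtain ⟨i, b, g, hg⟩ := exists_inl (hc.kt hz) (by linarith)
    have : Classical.epsilon (· ∈ DD s) ∈ DD s :=
      Classical.epsilon_spec (p := (· ∈ DD s)) ⟨(i, b), g, z, hz, hg⟩
    obtain ⟨g', z', hz', h'⟩ := this
    exact ⟨g', Or.inr ⟨h, z', hz', h'⟩⟩

lemma Pr_uniq (hdis : ∀ i g g' z, z ∈ O i g → z ∈ O i g' → g = g') {s : Finset (EE p m)} (hn : s.Nonempty) (hc : InCell s) {g g'} (h : Pr O s g) (h' : Pr O s g') :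
    g = g' := by
  rcases h with ⟨h1, i, hi, h2⟩ | ⟨h1, z, hz, h2⟩ <;> rcases h' with ⟨h1', i', hi', h2'⟩ | ⟨h1', z', hz', h2'⟩
  · obtain ⟨z, hz⟩ := hn
    have : i = i' := Fin.ext (hi.trans hi'.symm)
    subst this
    exact hdis i g g' z (h2 z hz) (h2' z hz)
  · exact absurd h1 h1'
  · exact absurd h1' h1
  · obtain ⟨a, d, j, -, hall⟩ := hc
    have e1 := (not_imp_comm.1 ((hall z hz).2.2 _)) h2
    have e2 := (not_imp_comm.1 ((hall z' hz').2.2 _)) h2'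
    simp only [cellAl, Set.mem_ofPred_eq] at e1 e2
    rw [e1, e2]

lemma lam_spec (hdis : ∀ i g g' z, z ∈ O i g → z ∈ O i g' → g = g') {s : Finset (EE p m)} (hc : InCell s) (hl : LT s) : Pr O s (lam O s) :=
  Classical.epsilon_spec (Pr_ex hdis hc hl)

lemma TE_memO (hdis : ∀ i g g' z, z ∈ O i g → z ∈ O i g' → g = g')
    (hO : ∀ i g z, z ∈ Kt p m → (TE z ∈ O i (g + 1) ↔ z ∈ O i g))
    {s : Finset (EE p m)} (hc : InCell s) (i g) :
    (∀ z ∈ imT s, z ∈ O i (g + 1)) ↔ ∀ z ∈ s, z ∈ O i g := by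
  constructor
  · intro h z hz
    exact (hO i g z (hc.kt hz)).1 (h _ (mem_imT.2 ⟨z, hz, rfl⟩))
  · intro h z hz
    obtain ⟨y, hy, rfl⟩ := mem_imT.1 hz
    exact (hO i g y (hc.kt hy)).2 (h y hy)

lemma II_imT (hdis : ∀ i g g' z, z ∈ O i g → z ∈ O i g' → g = g')
    (hO : ∀ i g z, z ∈ Kt p m → (TE z ∈ O i (g + 1) ↔ z ∈ O i g))
    {s : Finset (EE p m)} (hc : InCell s) : II O (imT s) = II O s := by
  ext n
  constructor
  · rintro ⟨i, hi, g, hg⟩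
    refine ⟨i, hi, g - 1, (TE_memO hdis hO hc i (g - 1)).1 ?_⟩
    simpa using hg
  · rintro ⟨i, hi, g, hg⟩
    exact ⟨i, hi, g + 1, (TE_memO hdis hO hc i g).2 hg⟩

lemma Pr_imT (hdis : ∀ i g g' z, z ∈ O i g → z ∈ O i g' → g = g')
    (hO : ∀ i g z, z ∈ Kt p m → (TE z ∈ O i (g + 1) ↔ z ∈ O i g))
    {s : Finset (EE p m)} (hc : InCell s) {g} (h : Pr O s g) : Pr O (imT s) (g + 1) := by
  rcases h with ⟨h1, i, hi, h2⟩ | ⟨h1, z, hz, h2⟩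
  · left
    rw [II_imT hdis hO hc]
    exact ⟨h1, i, hi, (TE_memO hdis hO hc i g).2 h2⟩
  · right
    rw [II_imT hdis hO hc, DD_imT]
    refine ⟨h1, TE z, mem_imT.2 ⟨z, hz, rfl⟩, ?_⟩
    simpa [TE_inl] using h2

lemma TE_cell {v : EE p m} {h d : Fin (m + 1) → ZMod p} {j} (hv : v ∈ Face (cellAl h d j)) :
    TE v ∈ Face (cellAl (fun i => h i + 1) d j) := by
  obtain ⟨h1, h2, h3⟩ := hv
  refine ⟨fun x => h1 _, ?_, ?_⟩
  · rw [← h2]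
    rw [Fintype.sum_sum_type, Fintype.sum_sum_type]
    congr 1
    simp only [Fintype.sum_prod_type, TE_inl]
    refine Finset.sum_congr rfl fun i _ => Finset.sum_congr rfl fun b _ => ?_
    exact Equiv.sum_comp (Equiv.subRight (1 : ZMod p)) (fun g => v (Sum.inl (i, b, g)))
  · rintro (⟨i, b, g⟩ | i) hx
    · rw [TE_inl]
      apply h3
      intro hh
      apply hx
      simp only [cellAl, Set.mem_ofPred_eq] at hh ⊢
      rw [sub_eq_iff_eq_add] at hh
      rw [hh]; ring
    · exact h3 _ hx

lemma InCell_imT {s : Finset (EE p m)} (h : InCell s) : InCell (imT s) := by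
  obtain ⟨h, d, j, h1, h2⟩ := h
  refine ⟨fun i => h i + 1, d, j, h1, fun x hx => ?_⟩
  obtain ⟨y, hy, rfl⟩ := mem_imT.1 hx
  exact TE_cell (h2 y hy)

lemma Kt_TE {v : EE p m} (h : v ∈ Kt p m) : TE v ∈ Kt p m := by
  obtain ⟨h, d, j, h1, h2⟩ := h
  exact ⟨_, d, j, h1, TE_cell h2⟩

lemma lefts_lbl (w : List (Finset (EE p m))) :
    ∃ w' : List (Finset (EE p m)), w'.Sublist w ∧ (∀ s ∈ w', LT s) ∧ lefts (w.map (lbl O Φ)) = w'.map (lam O) := by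
  induction w with
  | nil => exact ⟨[], by simp⟩
  | cons s w ih =>
    obtain ⟨w', h1, h2, h3⟩ := ih
    by_cases h : LT s
    · refine ⟨s :: w', h1.cons_cons s, ?_, ?_⟩
      · simpa using ⟨h, h2⟩
      · simp [lbl, h]
        exact h3
    · refine ⟨w', h1.cons s, h2, ?_⟩
      simp [lbl, h]
      exact h3

lemma rights_lbl (w : List (Finset (EE p m))) (j) (h : j ∈ rights (w.map (lbl O Φ))) :
    ∃ s ∈ w, ¬ LT s ∧ s.sup (fun z => am (Φ z)) = j := by
  rw [rights, List.mem_filterMap] at h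
  obtain ⟨a, ha, h⟩ := h
  obtain ⟨s, hs, rfl⟩ := List.mem_map.1 ha
  refine ⟨s, hs, ?_⟩
  by_cases h' : LT s
  · simp [lbl, h'] at h
  · simp [lbl, h'] at h
    exact ⟨h', h⟩

lemma sup_att {s : Finset (EE p m)} (hs : s.Nonempty) : ∃ z ∈ s, s.sup (fun z => am (Φ z)) = am (Φ z) :=
  Finset.exists_mem_eq_sup s hs _

lemma exists_top {A : Type} (Q : Finset A → Prop) (w : List (Finset A))
    (hw : w.Pairwise (fun s t => t ⊆ s)) (h : ∃ s ∈ w, Q s) :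
    ∃ t ∈ w, Q t ∧ ∀ s ∈ w, Q s → s ⊆ t := by
  induction w with
  | nil => simp at h
  | cons a w ih =>
    rw [List.pairwise_cons] at hw
    by_cases ha : Q a
    · refine ⟨a, by simp, ha, fun s hs _ => ?_⟩
      rcases List.mem_cons.1 hs with rfl | hs
      · exact subset_rfl
      · exact hw.1 s hs
    · obtain ⟨s, hs, hq⟩ := h
      rcases List.mem_cons.1 hs with rfl | hs
      · exact absurd hq ha
      · obtain ⟨t, ht, h1, h2⟩ := ih hw.2 ⟨s, hs, hq⟩
        refine ⟨t, by simp [ht], h1, fun s hs hq => ?_⟩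
        rcases List.mem_cons.1 hs with rfl | hs
        · exact absurd hq ha
        · exact h2 s hs hq

lemma chain_comb {A : Type} {R S Q : A → A → Prop} (w : List A) (h1 : w.Pairwise R) (h2 : w.IsChain S)
    (h : ∀ s ∈ w, ∀ t ∈ w, R s t → S s t → Q s t) : w.IsChain Q := by
  induction w with
  | nil => simp
  | cons a w ih =>
    rw [List.pairwise_cons] at h1
    cases w with
    | nil => simp
    | cons b w =>
      rw [List.isChain_cons_cons] at h2 ⊢
      exact ⟨h a (by simp) b (by simp) (h1.1 b (by simp)) h2.1,
        ih h1.2 h2.2 (fun s hs t ht => h s (List.mem_cons_of_mem _ hs) t (List.mem_cons_of_mem _ ht))⟩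

/-- the labelling contradiction -/
theorem label_false (hp : 2 ≤ p)
    (hΦT : ∀ v ∈ Kt p m, Φ (TE v) = Φ v)
    (hΦc : ContinuousOn Φ {v | v ∈ Kt p m ∧ 1 / 2 ≤ ss v})
    (hΦn : ∀ v ∈ Kt p m, 1 / 2 ≤ ss v → ∃ i j, Φ v j < Φ v i)
    (hOo : ∀ i g, ∀ z ∈ Kt p m, z ∈ O i g → O i g ∈ 𝓝[Kt p m] z)
    (hdis : ∀ i g g' z, z ∈ O i g → z ∈ O i g' → g = g')
    (hO : ∀ i g z, z ∈ Kt p m → (TE z ∈ O i (g + 1) ↔ z ∈ O i g))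
    (hcov : ∀ v ∈ Kt p m, 1 / 2 ≤ ss v → ss v ≤ 5 / 8 →
      (∃ i g, v ∈ O i g) ∨ ∀ j : Fin (2 * m + 2), Φ v j.castSucc < Φ v (Fin.last _))
    (hJ : ∀ v ∈ Kt p m, ∀ J : Set (Fin (2 * m + 2 + 1)), v ∈ Face (Sum.inr '' J) →
      ∀ j, (∀ i, Φ v i ≤ Φ v j) → j ∈ J) : False := by
  have hcomp : IsCompact {v : EE p m | v ∈ Kt p m ∧ 1 / 2 ≤ ss v} :=
    isCompact_Kt.inter_right (isClosed_le continuous_const continuous_ss)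
  have hcomp2 : IsCompact {v : EE p m | (v ∈ Kt p m ∧ 1 / 2 ≤ ss v) ∧ ss v ≤ 5 / 8} :=
    hcomp.inter_right (isClosed_le continuous_ss continuous_const)
  have hlt : ∀ v ∈ Kt p m, 1 / 2 ≤ ss v → ∀ i j, Φ v j < Φ v i →
      ∀ᶠ y in 𝓝 v, y ∈ Kt p m → 1 / 2 ≤ ss y → Φ y j < Φ y i := by
    intro v hv hv2 i j hij
    have h1 := hΦc v ⟨hv, hv2⟩
    have h2 : ∀ i, ContinuousWithinAt (fun v => Φ v i) _ v := fun i => tendsto_pi_nhds.1 h1 i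
    have := (h2 j).eventually_lt (h2 i) hij
    filter_upwards [eventually_nhdsWithin_iff.1 this] with y hy a b
    exact hy ⟨a, b⟩
  obtain ⟨δ1, hδ1, L1⟩ := leb hcomp (fun U => ∃ j, ∀ y ∈ U, y ∈ Kt p m → 1 / 2 ≤ ss y → ∃ i, Φ y j < Φ y i) (by
    rintro v ⟨hv, hv2⟩
    obtain ⟨i, j, hij⟩ := hΦn v hv hv2
    exact ⟨_, hlt v hv hv2 i j hij, j, fun y hy a b => ⟨i, hy a b⟩⟩)
  obtain ⟨δ2, hδ2, L2⟩ := leb hcomp2 (fun U => (∃ i g, ∀ y ∈ U, y ∈ Kt p m → y ∈ O i g) ∨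
      (∀ y ∈ U, y ∈ Kt p m → 1 / 2 ≤ ss y → ∀ j : Fin (2 * m + 2), Φ y j.castSucc < Φ y (Fin.last _))) (by
    rintro v ⟨⟨hv, hv2⟩, hv3⟩
    rcases hcov v hv hv2 hv3 with ⟨i, g, h⟩ | h
    · have := hOo i g v hv h
      exact ⟨_, mem_nhdsWithin_iff_eventually.1 this, Or.inl ⟨i, g, fun y hy hk => hy hk⟩⟩
    · have := Filter.eventually_all.2 (fun j => hlt v hv hv2 _ _ (h j))
      exact ⟨_, this, Or.inr (fun y hy a b j => hy j a b)⟩)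
  obtain ⟨ep, hep, e1, e2, e3⟩ : ∃ ep > 0, ep ≤ δ1 ∧ ep ≤ δ2 ∧ (2 * m + 3) * ep ≤ (1 / 8 : ℝ) := by
    refine ⟨min (min δ1 δ2) (1 / 8 / (2 * m + 3)), by positivity, ?_, ?_, ?_⟩
    · exact (min_le_left _ _).trans (min_le_left _ _)
    · exact (min_le_left _ _).trans (min_le_right _ _)
    · have := min_le_right (min δ1 δ2) (1 / 8 / (2 * m + 3))
      rw [le_div_iff₀ (by positivity)] at this
      linarith
  have nLT : ∀ s : Finset (EE p m), ¬ LT s → ∀ z ∈ s, 1 / 2 ≤ ss z := by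
    intro s hs z hz
    by_contra hc
    exact hs ⟨z, hz, not_le.1 hc⟩
  refine flag_false hp (lbl O Φ) ep hep ?_ ?_ ?_ ?_
  · intro s hs hc
    by_cases h : LT s
    · have h' := (LT_imT s).2 h
      simp only [lbl, h, h', if_true, shL]
      congr 1
      have hn : (imT s).Nonempty := by
        obtain ⟨x, hx⟩ := hs
        exact ⟨_, mem_imT.2 ⟨x, hx, rfl⟩⟩
      exact Pr_uniq hdis hn (InCell_imT hc) (lam_spec hdis (InCell_imT hc) h')
        (Pr_imT hdis hO hc (lam_spec hdis hc h))
    · have h' : ¬ LT (imT s) := fun h' => h ((LT_imT s).1 h')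
      simp only [lbl, h, h', if_false, shL]
      congr 1
      rw [imT, Finset.sup_image]
      refine Finset.sup_congr rfl fun z hz => ?_
      simp [hΦT z (hc.kt hz)]
  · intro w hw hall
    constructor
    · rw [Sorted, List.pairwise_map]
      refine hw.imp ?_
      intro s t hst
      simp only [lbl]
      by_cases a : LT s <;> by_cases b : LT t <;> simp only [a, b, if_true, if_false]
      · simp
      · simp
      · obtain ⟨z, hz, hz'⟩ := b
        exact absurd ⟨z, hst hz, hz'⟩ a
      · simp
    · by_contra! hcon
      -- some right label occurs
      obtain ⟨j, hj⟩ : ∃ j, ∀ s ∈ w, ¬ LT s → ∀ z ∈ s, am (Φ z) ≠ j := by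
        by_cases hex : ∃ s ∈ w, ¬ LT s
        · obtain ⟨t, ht, htl, htop⟩ := exists_top (fun s => ¬ LT s) w hw hex
          obtain ⟨x, hx⟩ := (hall t ht).1
          obtain ⟨U, ⟨j, hU⟩, hb⟩ := L1 x ⟨(hall t ht).2.1.kt hx, nLT t htl x hx⟩
          refine ⟨j, fun s hs hsl z hz hzj => ?_⟩
          have hzt := htop s hs hsl hz
          obtain ⟨i, hi⟩ := hU z (hb (by
            rw [Metric.mem_ball]
            exact ((hall t ht).2.2 z hzt x hx).trans_le e1)) ((hall t ht).2.1.kt hzt) (nLT t htl z hzt)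
          have := am_spec (Φ z) i
          rw [hzj] at this
          linarith
        · exact ⟨0, fun s hs hsl => absurd ⟨s, hs, hsl⟩ hex⟩
      obtain ⟨s, hs, hs'⟩ := List.mem_map.1 (hcon j)
      by_cases h : LT s
      · simp [lbl, h] at hs'
      · simp only [lbl, h, if_false, Sum.inr.injEq] at hs'
        obtain ⟨z, hz, hz'⟩ := sup_att (Φ := Φ) (hall s hs).1
        exact hj s hs h z hz (by rw [← hz', hs'])
  · intro s J hs hc hF
    have hnl : ¬ LT s := by
      rintro ⟨z, hz, hz'⟩
      obtain ⟨_, h2, h3⟩ := hF z hz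
      rw [Fintype.sum_sum_type, Finset.sum_eq_zero] at h2
      · unfold ss at hz'; linarith
      · intro x _
        exact h3 _ (by simp)
    simp only [lbl, hnl, if_false]
    obtain ⟨z, hz, hz'⟩ := sup_att (Φ := Φ) hs
    exact ⟨_, by rw [hz']; exact hJ z (hc.kt hz) J (hF z hz) _ (am_spec _), rfl⟩
  · intro w hw hall
    by_contra hne
    rw [cF] at hne
    have hu := left_ne_zero_of_mul hne
    have hv := right_ne_zero_of_mul hne
    obtain ⟨hlen, hch⟩ := uu_ne m _ hu
    obtain ⟨t, ht, htl, htj⟩ := rights_lbl _ _ (vv_mem _ hv 0)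
    obtain ⟨x, hx, hx'⟩ := sup_att (Φ := Φ) (hall t ht).1
    rw [htj] at hx'
    have hxs := nLT t htl x hx
    have hxK := (hall t ht).2.1.kt hx
    obtain ⟨w', hsub, hwl, hw'⟩ := lefts_lbl (O := O) (Φ := Φ) w
    rw [hw'] at hlen hch
    have hcomp : ∀ s ∈ w, LT s → t ⊆ s := by
      intro s hs hl
      have h1 : w.Pairwise (fun a b => b ⊆ a ∨ a ⊆ b) := hw.imp (fun h => Or.inl h)
      have : Std.Symm (fun a b : Finset (EE p m) => b ⊆ a ∨ a ⊆ b) := ⟨fun a b => Or.symm⟩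
      have h2 := List.Pairwise.forall_of_forall
        (R := fun a b : Finset (EE p m) => b ⊆ a ∨ a ⊆ b) (l := w) (fun a _ => Or.inl subset_rfl) h1 hs ht
      rcases h2 with h2 | h2
      · exact h2
      · obtain ⟨z, hz, hz'⟩ := hl
        exact absurd ⟨z, h2 hz, hz'⟩ htl
    have hne : ∀ s ∈ w', (II O s).Nonempty := by
      intro s hs
      have hs1 := hsub.subset hs
      have hts := hcomp s hs1 (hwl s hs)
      obtain ⟨z, hz, hz'⟩ := hwl s hs
      have hd := (hall s hs1).2.2 
      have h58 : ss x ≤ 5 / 8 := by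
        have k1 := ss_dist x z
        have k2 := hd x (hts hx) z hz
        have k3 := abs_le.1 k1
        have : (2 * (m : ℝ) + 3) * dist x z ≤ (2 * m + 3) * ep := by gcongr
        linarith
      obtain ⟨U, hU, hb⟩ := L2 x ⟨⟨hxK, hxs⟩, h58⟩
      rcases hU with ⟨i, g, hU⟩ | hU
      · refine ⟨i.val, i, rfl, g, fun y hy => hU y (hb ?_) ((hall s hs1).2.1.kt hy)⟩
        rw [Metric.mem_ball]
        exact (hd y hy x (hts hx)).trans_le e2
      · have := hU x (hb (Metric.mem_ball_self hδ2)) hxK hxs 0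
        have h2 := am_spec (Φ x) (Fin.last _)
        rw [← hx'] at h2
        exact absurd this (not_lt.2 h2)
    have hpw := hw.sublist hsub
    have hspec : ∀ s ∈ w', ∃ i : Fin (2 * m + 1), i.val = sInf (II O s) ∧ ∀ z ∈ s, z ∈ O i (lam O s) := by
      intro s hs
      rcases lam_spec hdis (hall s (hsub.subset hs)).2.1 (hwl s hs) with h | h
      · exact h.2
      · exact absurd (hne s hs) h.1
    have hstep : ∀ s ∈ w', ∀ t ∈ w', t ⊆ s → lam O s ≠ lam O t → sInf (II O t) < sInf (II O s) := by
      intro s hs t ht hts hlam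
      obtain ⟨i, hi, h1⟩ := hspec s hs
      obtain ⟨i', hi', h2⟩ := hspec t ht
      refine lt_of_le_of_ne ?_ ?_
      · apply Nat.sInf_le
        exact ⟨i, hi, lam O s, fun z hz => h1 z (hts hz)⟩
      · intro heq
        have : i = i' := Fin.ext (by omega)
        subst this
        obtain ⟨z, hz⟩ := (hall t (hsub.subset ht)).1
        exact hlam (hdis i _ _ z (h1 z (hts hz)) (h2 z hz))
    have hbd : ∀ s ∈ w', sInf (II O s) < 2 * m + 1 := by
      intro s hs
      obtain ⟨i, hi, _⟩ := hspec s hs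
      rw [← hi]; exact i.2
    clear hspec hne hcomp hw' hwl
    have hchain : w'.IsChain (fun s t => sInf (II O t) < sInf (II O s)) := by
      rw [List.isChain_map] at hch
      exact chain_comb w' hpw hch hstep
    have hP : (w'.map (fun s => sInf (II O s))).Pairwise (fun a b => b < a) := by
      have : (w'.map (fun s => sInf (II O s))).IsChain (fun a b => b < a) := by
        rw [List.isChain_map]; exact hchain
      exact (List.isChain_iff_pairwise (R := fun a b : ℕ => a > b)).1 this
    have hnd : (w'.map (fun s => sInf (II O s))).Nodup := hP.imp (fun h => (ne_of_lt h).symm)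
    have hsubset : (w'.map (fun s => sInf (II O s))).toFinset ⊆ Finset.range (2 * m + 1) := by
      intro a ha
      simp only [List.mem_toFinset, List.mem_map] at ha
      obtain ⟨s, hs, rfl⟩ := ha
      exact Finset.mem_range.2 (hbd s hs)
    have := Finset.card_le_card hsubset
    rw [List.toFinset_card_of_nodup hnd] at this
    simp at this hlen
    omega

end Labels

end LSC

open scoped Topology

namespace LSC

section Core
set_option linter.unusedSectionVars false
variable {p : ℕ} [NeZero p] {m : ℕ}

/-- complex Euclidean space -/
abbrev ES (k : ℕ) : Type := EuclideanSpace ℂ (Fin k)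
/-- its unit sphere -/
abbrev SS (k : ℕ) : Type := Metric.sphere (0 : ES k) 1

open Classical in
/-- normalization -/
noncomputable def nrm {k : ℕ} (c : SS k) (v : ES k) : SS k :=
  if h : v = 0 then c else ⟨(‖v‖⁻¹ : ℝ) • v, by simp [norm_smul, h]⟩

lemma nrm_of_ne {k : ℕ} (c : SS k) {v : ES k} (h : v ≠ 0) : (nrm c v).1 = (‖v‖⁻¹ : ℝ) • v := by
  simp [nrm, h]

lemma nrm_cont {k : ℕ} (c : SS k) {v : ES k} (h : v ≠ 0) : ContinuousAt (nrm c) v := by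
  rw [Topology.IsInducing.subtypeVal.continuousAt_iff]
  have h1 : ContinuousAt (fun v : ES k => (‖v‖⁻¹ : ℝ) • v) v :=
    ContinuousAt.smul (ContinuousAt.inv₀ continuous_norm.continuousAt (by simpa using h)) continuousAt_id
  refine h1.congr ?_
  filter_upwards [isOpen_ne.mem_nhds h] with w hw
  exact (nrm_of_ne c hw).symm

/-- characters -/
noncomputable def chi (z : ℂ) (g : ZMod p) : ℂ := z ^ g.val

lemma chi_add {z : ℂ} (hz : z ^ p = 1) (g h : ZMod p) : chi z (g + h) = chi z g * chi z h := by
  unfold chi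
  rw [← pow_add, ZMod.val_add]
  exact (pow_eq_pow_mod _ hz).symm

lemma chi_zero (z : ℂ) : chi z (0 : ZMod p) = 1 := by simp [chi]
lemma chi_one (hp : 2 ≤ p) (z : ℂ) : chi z (1 : ZMod p) = z := by
  have : Fact (1 < p) := ⟨hp⟩
  simp [chi, ZMod.val_one]
lemma chi_norm {z : ℂ} (hz : ‖z‖ = 1) (g : ZMod p) : ‖chi z g‖ = 1 := by simp [chi, hz]

/-- the join coordinate -/
noncomputable def qq (ζ μ : Fin (m + 1) → ℂ) (v : EE p m) : ES (m + 1) :=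
  WithLp.toLp 2 (fun i => ∑ g : ZMod p, ((v (Sum.inl (i, false, g)) : ℂ) + v (Sum.inl (i, true, g)) * μ i) * chi (ζ i) g)

lemma qq_apply (ζ μ : Fin (m + 1) → ℂ) (v : EE p m) (i) : qq ζ μ v i =
    ∑ g : ZMod p, ((v (Sum.inl (i, false, g)) : ℂ) + v (Sum.inl (i, true, g)) * μ i) * chi (ζ i) g := rfl

lemma continuous_qq (ζ μ : Fin (m + 1) → ℂ) : Continuous (qq (p := p) ζ μ) := by
  unfold qq
  refine (PiLp.continuous_toLp 2 _).comp (continuous_pi fun i => ?_)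
  refine continuous_finsetSum _ fun g _ => ?_
  fun_prop

lemma qq_TE (hp : 2 ≤ p) {ζ : Fin (m + 1) → ℂ} (μ : Fin (m + 1) → ℂ) (hζp : ∀ i, ζ i ^ p = 1) (v : EE p m) (i) :
    qq ζ μ (TE v) i = ζ i * qq ζ μ v i := by
  rw [qq_apply, qq_apply, Finset.mul_sum]
  rw [← Equiv.sum_comp (Equiv.addRight (1 : ZMod p))]
  refine Finset.sum_congr rfl fun g _ => ?_
  simp only [Equiv.coe_addRight, TE_inl, add_sub_cancel_right, chi_add (hζp i), chi_one hp]
  ring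

lemma qq_ne (hp : 2 ≤ p) {ζ μ : Fin (m + 1) → ℂ} (hζ : ∀ i, ‖ζ i‖ = 1) (hζp : ∀ i, ζ i ^ p = 1)
    (hμ : ∀ i, ‖μ i‖ = 1) (hμ1 : ∀ i, μ i ≠ -1) (hμ2 : ∀ i, μ i ≠ -ζ i) {v : EE p m} (hv : v ∈ Kt p m)
    (hs : ss v < 1) : qq ζ μ v ≠ 0 := by
  intro h0
  obtain ⟨i, b, g, hne⟩ := exists_inl hv hs
  obtain ⟨h, d, j, hd, h1, h2, h3⟩ := hv
  have hb : ∀ b g, g ≠ h i + (if b then 0 else d i) → v (Sum.inl (i, b, g)) = 0 := fun b g hg => h3 _ hg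
  have hq : qq ζ μ v i = 0 := by rw [h0]; rfl
  have e1 : qq ζ μ v i = (v (Sum.inl (i, false, h i + d i)) : ℂ) * chi (ζ i) (h i + d i) +
      (v (Sum.inl (i, true, h i)) : ℂ) * μ i * chi (ζ i) (h i) := by
    rw [qq_apply]
    simp only [add_mul, Finset.sum_add_distrib]
    congr 1
    · refine Finset.sum_eq_single _ (fun g _ hg => ?_) (by simp)
      rw [hb false g (by simpa using hg)]; simp
    · refine Finset.sum_eq_single _ (fun g _ hg => ?_) (by simp)
      rw [hb true g (by simpa using hg)]; simp
  set a := v (Sum.inl (i, false, h i + d i)) with ha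
  set b' := v (Sum.inl (i, true, h i)) with hb'
  have ha0 : 0 ≤ a := h1 _
  have hb0 : 0 ≤ b' := h1 _
  rw [hq, chi_add (hζp i)] at e1
  have hc : chi (ζ i) (h i) ≠ 0 := by
    intro hh; have := chi_norm (hζ i) (h i); rw [hh] at this; simp at this
  have e2 : (a : ℂ) * chi (ζ i) (d i) = -((b' : ℂ) * μ i) := by
    have : chi (ζ i) (h i) * ((a : ℂ) * chi (ζ i) (d i) + (b' : ℂ) * μ i) = 0 := by rw [e1]; ring
    rcases mul_eq_zero.1 this with h | h
    · exact absurd h hc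
    · exact eq_neg_of_add_eq_zero_left h
  have e3 : a = b' := by
    have := congrArg norm e2
    simpa [chi_norm (hζ i), hμ i, abs_of_nonneg ha0, abs_of_nonneg hb0] using this
  have ha' : a = 0 := by
    by_contra hne
    rw [← e3] at e2
    have hne' : (a : ℂ) ≠ 0 := by exact_mod_cast hne
    have e4 : chi (ζ i) (d i) = - μ i := by
      apply mul_left_cancel₀ hne'
      rw [e2]; ring
    rcases hd i with h | h
    · rw [h, chi_zero] at e4
      exact hμ1 i (by rw [e4]; ring)
    · rw [h, chi_one hp] at e4
      exact hμ2 i (by rw [e4]; ring)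
  apply hne
  by_cases hg : g = h i + (if b then 0 else d i)
  · cases b
    · simp at hg; rw [hg]; exact ha'
    · simp at hg; rw [hg, ← hb', ← e3]; exact ha'
  · exact hb b g hg

lemma exists_mu (z : ℂ) : ∃ μ : ℂ, ‖μ‖ = 1 ∧ μ ≠ -1 ∧ μ ≠ -z := by
  by_cases h : (1 : ℂ) = -z
  · refine ⟨Complex.I, by simp, ?_, ?_⟩
    · intro h; simpa using congrArg Complex.im h
    · rw [← h]; intro h; simpa using congrArg Complex.im h
  · refine ⟨1, by simp, ?_, h⟩
    intro h; have := congrArg Complex.re h; norm_num at this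

lemma exists_A (c : SS (m + 1)) : ∃ A : ES (m + 1) ≃L[ℝ] (Fin (2 * m + 2) → ℝ), A c.1 = fun _ => -1 := by
  have hf : Module.finrank ℝ (ES (m + 1)) = Module.finrank ℝ (Fin (2 * m + 2) → ℝ) := by
    rw [finrank_real_of_complex, finrank_euclideanSpace]
    simp
    ring
  let A0 : ES (m + 1) ≃L[ℝ] (Fin (2 * m + 2) → ℝ) := ContinuousLinearEquiv.ofFinrankEq hf
  have hc : c.1 ≠ 0 := by
    intro h
    have := c.2
    rw [h] at this
    simp at this
  have h1 : A0 c.1 ≠ 0 := by simpa using hc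
  have h2 : (fun _ => -1 : Fin (2 * m + 2) → ℝ) ≠ 0 := by
    intro h
    have := congrFun h 0
    norm_num at this
  obtain ⟨B, hB⟩ := SeparatingDual.exists_continuousLinearEquiv_apply_eq (R := ℝ) h1 h2
  exact ⟨A0.trans B, hB⟩

/-- extension by zero -/
noncomputable def kap (A : ES (m + 1) ≃L[ℝ] (Fin (2 * m + 2) → ℝ)) (y : ES (m + 1)) : Fin (2 * m + 2 + 1) → ℝ :=
  @Fin.snoc (2 * m + 2) (fun _ => ℝ) (A y) 0

lemma kap_castSucc (A : ES (m + 1) ≃L[ℝ] (Fin (2 * m + 2) → ℝ)) (y) (i : Fin (2 * m + 2)) :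
    kap A y i.castSucc = A y i := by simp [kap]
lemma kap_last (A : ES (m + 1) ≃L[ℝ] (Fin (2 * m + 2) → ℝ)) (y) : kap A y (Fin.last _) = 0 := by
  simp [kap]

lemma continuous_kap (A : ES (m + 1) ≃L[ℝ] (Fin (2 * m + 2) → ℝ)) : Continuous (kap A) := by
  refine continuous_pi fun i => ?_
  refine Fin.lastCases ?_ (fun i => ?_) i
  · simp only [kap_last]; exact continuous_const
  · simp only [kap_castSucc]; exact (continuous_apply i).comp A.continuous

/-- the right coordinate -/
noncomputable def rp (A : ES (m + 1) ≃L[ℝ] (Fin (2 * m + 2) → ℝ)) (v : EE p m) : ES (m + 1) :=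
  A.symm (fun i => v (Sum.inr i.castSucc) - v (Sum.inr (Fin.last _)))

lemma continuous_rp (A : ES (m + 1) ≃L[ℝ] (Fin (2 * m + 2) → ℝ)) : Continuous (rp (p := p) A) := by
  refine A.symm.continuous.comp (continuous_pi fun i => ?_)
  fun_prop

lemma rp_ne (A : ES (m + 1) ≃L[ℝ] (Fin (2 * m + 2) → ℝ)) {v : EE p m} (hv : v ∈ Kt p m) (hs : 0 < ss v) :
    rp A v ≠ 0 := by
  intro h
  have h1 : (fun i : Fin (2 * m + 2) => v (Sum.inr i.castSucc) - v (Sum.inr (Fin.last _))) = 0 := by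
    simpa [rp] using h
  have h2 : ∀ i : Fin (2 * m + 2 + 1), v (Sum.inr i) = v (Sum.inr (Fin.last _)) := by
    intro i
    refine Fin.lastCases rfl (fun i => ?_) i
    have := congrFun h1 i
    simp only [Pi.zero_apply] at this
    linarith
  obtain ⟨a, d, j, hd, k1, k2, k3⟩ := hv
  have h3 : v (Sum.inr j) = 0 := k3 _ (by simp [cellAl])
  have : ss v = 0 := Finset.sum_eq_zero (fun i _ => by rw [h2 i, ← h2 j, h3])
  linarith

lemma kap_nrm (A : ES (m + 1) ≃L[ℝ] (Fin (2 * m + 2) → ℝ)) (c : SS (m + 1)) {v : EE p m} (h : rp A v ≠ 0) (j) :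
    kap A (nrm c (rp A v)).1 j = ‖rp A v‖⁻¹ * (v (Sum.inr j) - v (Sum.inr (Fin.last _))) := by
  rw [nrm_of_ne c h]
  refine Fin.lastCases ?_ (fun i => ?_) j
  · rw [kap_last]; simp
  · rw [kap_castSucc, map_smul]
    simp [rp]

/-- cut-off -/
noncomputable def tt (s : ℝ) : ℝ := max 0 (min 1 (6 - 8 * s))
lemma continuous_tt : Continuous tt := by unfold tt; fun_prop
lemma tt_one {s : ℝ} (h : s ≤ 5 / 8) : tt s = 1 := by
  unfold tt; rw [min_eq_left (by linarith), max_eq_right (by norm_num)]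
lemma tt_zero {s : ℝ} (h : 3 / 4 ≤ s) : tt s = 0 := by
  unfold tt; rw [max_eq_left]; exact (min_le_right _ _).trans (by linarith)

lemma ss_le_one {v : EE p m} (hv : v ∈ Kt p m) : ss v ≤ 1 := by
  obtain ⟨a, d, j, hd, k1, k2, k3⟩ := hv
  rw [Fintype.sum_sum_type] at k2
  have : 0 ≤ ∑ x, v (Sum.inl x) := Finset.sum_nonneg (fun _ _ => k1 _)
  unfold ss; linarith

/-- core contradiction -/
theorem core (hp : 2 ≤ p) (ζ : Fin (m + 1) → ℂ) (hζ : ∀ i, ‖ζ i‖ = 1) (hζp : ∀ i, ζ i ^ p = 1)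
    (TS : SS (m + 1) → SS (m + 1)) (hTS : ∀ x i, (TS x).1 i = ζ i * x.1 i)
    (V : Fin (2 * m + 1) → ZMod p → Set (SS (m + 1) × SS (m + 1)))
    (hVo : ∀ i g, IsOpen (V i g)) (hVd : ∀ i g g' z, z ∈ V i g → z ∈ V i g' → g = g')
    (hVT : ∀ i g x y, (TS x, y) ∈ V i (g + 1) ↔ (x, y) ∈ V i g)
    (c : SS (m + 1)) (F : ℝ × SS (m + 1) × SS (m + 1) → SS (m + 1)) (hFc : Continuous F)
    (hF0 : ∀ x y, F (0, x, y) = y) (hFT : ∀ t x y, F (t, TS x, y) = F (t, x, y))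
    (hF1 : ∀ x y, (∀ i g, (x, y) ∉ V i g) → F (1, x, y) = c) : False := by
  choose μ hμ hμ1 hμ2 using fun i => exists_mu (ζ i)
  obtain ⟨A, hA⟩ := exists_A c
  let Q : EE p m → SS (m + 1) := fun v => nrm c (qq ζ μ v)
  let P : EE p m → SS (m + 1) := fun v => nrm c (rp A v)
  let Φ : EE p m → Fin (2 * m + 2 + 1) → ℝ := fun v => kap A (F (tt (ss v), Q v, P v)).1
  let O : Fin (2 * m + 1) → ZMod p → Set (EE p m) := fun i g =>
    {z | 0 < ss z ∧ ss z < 1 ∧ z ∈ Kt p m ∧ (Q z, P z) ∈ V i g}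
  have hq : ∀ v ∈ Kt p m, ss v < 1 → qq ζ μ v ≠ 0 := fun v hv hs => qq_ne hp hζ hζp hμ hμ1 hμ2 hv hs
  have hQc : ∀ v ∈ Kt p m, ss v < 1 → ContinuousAt Q v := fun v hv hs =>
    ContinuousAt.comp (g := nrm c) (nrm_cont c (hq v hv hs)) (continuous_qq ζ μ).continuousAt
  have hPc : ∀ v ∈ Kt p m, 0 < ss v → ContinuousAt P v := fun v hv hs =>
    ContinuousAt.comp (g := nrm c) (nrm_cont c (rp_ne A hv hs)) (continuous_rp A).continuousAt
  have hPT : ∀ v, P (TE v) = P v := fun v => rfl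
  have hQT : ∀ v ∈ Kt p m, ss v < 1 → Q (TE v) = TS (Q v) := by
    intro v hv hs
    apply Subtype.ext
    have h1 := hq v hv hs
    have h2 := hq (TE v) (Kt_TE hv) hs
    have hn : ‖qq ζ μ (TE v)‖ = ‖qq ζ μ v‖ := by
      rw [EuclideanSpace.norm_eq, EuclideanSpace.norm_eq]
      simp only [qq_TE hp μ hζp, norm_mul, hζ, one_mul]
    ext i
    rw [hTS]
    simp only [Q]
    rw [nrm_of_ne c h1, nrm_of_ne c h2, hn]
    simp only [PiLp.smul_apply, qq_TE hp μ hζp, Complex.real_smul]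
    ring
  have hΦ0 : ∀ v, 3 / 4 ≤ ss v → Φ v = kap A (P v).1 := by
    intro v hv
    simp only [Φ, tt_zero hv, hF0]
  refine label_false (O := O) (Φ := Φ) hp ?_ ?_ ?_ ?_ ?_ ?_ ?_ ?_
  · intro v hv
    by_cases hs : ss v < 1
    · simp only [Φ, ss_TE, hQT v hv hs, hPT, hFT]
    · rw [hΦ0 (TE v) (by rw [ss_TE]; linarith), hΦ0 v (by linarith), hPT]
  · rintro v ⟨hv, hs⟩
    apply ContinuousAt.continuousWithinAt
    have hP := hPc v hv (by linarith)
    by_cases hs1 : ss v < 1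
    · have hQ := hQc v hv hs1
      refine ((continuous_kap A).comp continuous_subtype_val).continuousAt.comp ?_
      refine hFc.continuousAt.comp ?_
      exact (continuous_tt.comp continuous_ss).continuousAt.prodMk (hQ.prodMk hP)
    · have : ContinuousAt (fun v => kap A (P v).1) v :=
        ((continuous_kap A).comp continuous_subtype_val).continuousAt.comp hP
      refine this.congr ?_
      have h2 : ∀ᶠ w in 𝓝 v, 3 / 4 < ss w := continuous_ss.continuousAt.eventually (lt_mem_nhds (by linarith))
      filter_upwards [h2] with w hw
      exact (hΦ0 w hw.le).symm
  · intro v hv hs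
    by_contra! hcon
    have h0 : A (F (tt (ss v), Q v, P v)).1 = 0 := by
      funext i
      have h1 := hcon i.castSucc (Fin.last _)
      have h2 := hcon (Fin.last _) i.castSucc
      simp only [Φ, kap_castSucc, kap_last] at h1 h2
      exact le_antisymm h1 h2
    have h1 := (F (tt (ss v), Q v, P v)).2
    rw [(map_eq_zero_iff A A.injective).1 h0] at h1
    simp at h1
  · rintro i g z hz ⟨h1, h2, h3, h4⟩
    have hc := (hQc z hz h2).prodMk (hPc z hz h1)
    have e1 := hc.eventually ((hVo i g).mem_nhds h4)
    have e2 : ∀ᶠ w in 𝓝 z, 0 < ss w := continuous_ss.continuousAt.eventually (lt_mem_nhds h1)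
    have e3 : ∀ᶠ w in 𝓝 z, ss w < 1 := continuous_ss.continuousAt.eventually (gt_mem_nhds h2)
    filter_upwards [nhdsWithin_le_nhds e1, nhdsWithin_le_nhds e2, nhdsWithin_le_nhds e3, self_mem_nhdsWithin]
      with w k1 k2 k3 k4
    exact ⟨k2, k3, k4, k1⟩
  · rintro i g g' z ⟨_, _, _, h⟩ ⟨_, _, _, h'⟩
    exact hVd i g g' _ h h'
  · intro i g z hz
    constructor
    · rintro ⟨h1, h2, h3, h4⟩
      refine ⟨h1, h2, hz, ?_⟩
      rw [hQT z hz h2, hPT, hVT] at h4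
      exact h4
    · rintro ⟨h1, h2, h3, h4⟩
      refine ⟨h1, h2, Kt_TE hz, ?_⟩
      rw [hQT z hz h2, hPT, hVT]
      exact h4
  · intro v hv h1 h2
    by_cases h : ∃ i g, (Q v, P v) ∈ V i g
    · obtain ⟨i, g, h⟩ := h
      exact Or.inl ⟨i, g, by linarith, by linarith, hv, h⟩
    · right
      push Not at h
      intro j
      simp only [Φ, tt_one h2, hF1 _ _ h, kap_castSucc, kap_last, hA]
      norm_num
  · intro v hv J hJ j hj
    obtain ⟨k1, k2, k3⟩ := hJ
    have hs : ss v = 1 := by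
      rw [Fintype.sum_sum_type, Finset.sum_eq_zero] at k2
      · unfold ss; linarith
      · intro x _; exact k3 _ (by simp)
    rw [hΦ0 v (by linarith)] at hj
    have hr := rp_ne A hv (by linarith)
    have hn : 0 < ‖rp A v‖⁻¹ := inv_pos.2 (norm_pos_iff.2 hr)
    have hmax : ∀ i, v (Sum.inr i) ≤ v (Sum.inr j) := by
      intro i
      have := hj i
      simp only [P] at this
      rw [kap_nrm A c hr, kap_nrm A c hr] at this
      have := le_of_mul_le_mul_left this hn
      linarith
    by_contra hjJ
    have h0 : v (Sum.inr j) = 0 := k3 _ (by simpa using hjJ)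
    have : ss v ≤ 0 := Finset.sum_nonpos (fun i _ => by rw [← h0]; exact hmax i)
    linarith

end Core

end LSC

open scoped Topology

namespace LSC

section Lens
variable {p : ℕ} [NeZero p] {k : ℕ}

/-- rotation action -/
noncomputable def ac {ζ : Fin k → ℂ} (hζ : ∀ i, ‖ζ i‖ = 1) (g : ZMod p) (x : SS k) : SS k :=
  ⟨WithLp.toLp 2 (fun j => chi (ζ j) g * x.1 j), by
    have := x.2
    rw [mem_sphere_zero_iff_norm] at this ⊢
    refine Eq.trans ?_ this
    rw [EuclideanSpace.norm_eq, EuclideanSpace.norm_eq]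
    simp [chi_norm (hζ _)]⟩

lemma ac_apply {ζ : Fin k → ℂ} (hζ : ∀ i, ‖ζ i‖ = 1) (g : ZMod p) (x : SS k) (j) :
    (ac hζ g x).1 j = chi (ζ j) g * x.1 j := rfl

lemma continuous_ac {ζ : Fin k → ℂ} (hζ : ∀ i, ‖ζ i‖ = 1) (g : ZMod p) : Continuous (ac hζ g) := by
  refine Continuous.subtype_mk ?_ _
  refine (PiLp.continuous_toLp 2 _).comp (continuous_pi fun i => ?_)
  fun_prop

lemma ac_add {ζ : Fin k → ℂ} (hζ : ∀ i, ‖ζ i‖ = 1) (hζp : ∀ i, ζ i ^ p = 1) (g h : ZMod p) (x : SS k) :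
    ac hζ (g + h) x = ac hζ g (ac hζ h x) := by
  apply Subtype.ext
  ext j
  simp only [ac_apply, chi_add (hζp j)]
  ring

lemma ac_zero {ζ : Fin k → ℂ} (hζ : ∀ i, ‖ζ i‖ = 1) (x : SS k) :
    ac hζ (0 : ZMod p) x = x := by
  apply Subtype.ext
  ext j
  simp [ac_apply, chi_zero]

/-- root of unity -/
noncomputable def zt (p : ℕ) (ℓ : Fin k → ℤ) (j : Fin k) : ℂ := Complex.exp (2 * Real.pi * Complex.I * ℓ j / p)

lemma zt_norm (ℓ : Fin k → ℤ) (j : Fin k) : ‖zt p ℓ j‖ = 1 := by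
  have : (2 * Real.pi * Complex.I * ℓ j / p : ℂ) = ((2 * Real.pi * ℓ j / p : ℝ) : ℂ) * Complex.I := by
    push_cast; ring
  rw [zt, this, Complex.norm_exp_ofReal_mul_I]

lemma zt_pow (ℓ : Fin k → ℤ) (j : Fin k) : zt p ℓ j ^ p = 1 := by
  have hp : (p : ℂ) ≠ 0 := by exact_mod_cast NeZero.ne p
  rw [zt, ← Complex.exp_nat_mul, Complex.exp_eq_one_iff]
  exact ⟨ℓ j, by field_simp⟩

lemma zt_zpow (ℓ : Fin k → ℤ) (j : Fin k) (n : ℤ) :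
    Complex.exp (2 * Real.pi * Complex.I * n * ℓ j / p) = chi (zt p ℓ j) (n : ZMod p) := by
  have h1 : Complex.exp (2 * Real.pi * Complex.I * n * ℓ j / p) = zt p ℓ j ^ n := by
    rw [zt, ← Complex.exp_int_mul]; congr 1; ring
  rw [h1, chi]
  have h2 : (((n : ZMod p).val : ℕ) : ℤ) = n % p := ZMod.val_intCast n
  have h0 : zt p ℓ j ≠ 0 := Complex.exp_ne_zero _
  conv_lhs => rw [← Int.emod_add_mul_ediv n p]
  rw [zpow_add₀ h0, zpow_mul, zpow_natCast, zt_pow, one_zpow, mul_one, ← h2, zpow_natCast]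

lemma lensRel_iff (ℓ : Fin k → ℤ) (x y : SS k) :
    lensRel p k ℓ x y ↔ ∃ g : ZMod p, y = ac (zt_norm (p := p) ℓ) g x := by
  constructor
  · rintro ⟨n, h⟩
    refine ⟨(n : ZMod p), Subtype.ext ?_⟩
    ext j
    rw [h j, zt_zpow, ac_apply]
  · rintro ⟨g, rfl⟩
    refine ⟨(g.val : ℤ), fun j => ?_⟩
    rw [zt_zpow, ac_apply]
    simp

lemma ac_free (ℓ : Fin k → ℤ) (hℓ : ∀ j, IsCoprime (ℓ j) (p : ℤ)) (g : ZMod p) (x : SS k)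
    (h : ac (zt_norm (p := p) ℓ) g x = x) : g = 0 := by
  obtain ⟨j, hj⟩ : ∃ j, x.1 j ≠ 0 := by
    by_contra! hc
    have : x.1 = 0 := by ext j; exact hc j
    have h2 := x.2
    rw [this] at h2
    simp at h2
  have h1 : chi (zt p ℓ j) g = 1 := by
    have := congrArg (fun y : SS k => y.1 j) h
    simp only [ac_apply] at this
    exact mul_right_cancel₀ hj (this.trans (one_mul _).symm)
  have hp : (p : ℂ) ≠ 0 := by exact_mod_cast NeZero.ne p
  rw [chi, zt, ← Complex.exp_nat_mul, Complex.exp_eq_one_iff] at h1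
  obtain ⟨n, hn⟩ := h1
  have hpi : (2 * Real.pi * Complex.I : ℂ) ≠ 0 := Complex.two_pi_I_ne_zero
  have h3 : ((g.val : ℤ) * ℓ j : ℂ) = (n * p : ℂ) := by
    apply mul_left_cancel₀ hpi
    field_simp at hn
    push_cast
    rw [hn]
    ring
  have h4 : (g.val : ℤ) * ℓ j = n * p := by exact_mod_cast h3
  have h5 : (p : ℤ) ∣ (g.val : ℤ) * ℓ j := ⟨n, by rw [h4]; ring⟩
  have h6 : (p : ℤ) ∣ (g.val : ℤ) := (hℓ j).symm.dvd_of_dvd_mul_right h5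
  have h7 : p ∣ g.val := by exact_mod_cast h6
  rw [← ZMod.val_eq_zero]
  exact Nat.eq_zero_of_dvd_of_lt h7 (ZMod.val_lt g)

/-- projection -/
def pr (p k : ℕ) (ℓ : Fin k → ℤ) (x : SS k) : LensSpace p k ℓ := Quot.mk _ x

lemma pr_eq (ℓ : Fin k → ℤ) (x y : SS k) :
    pr p k ℓ x = pr p k ℓ y ↔ ∃ g : ZMod p, y = ac (zt_norm (p := p) ℓ) g x := by
  rw [← lensRel_iff]
  constructor
  · intro h
    have h1 := Quot.eqvGen_exact h
    have he : Equivalence (lensRel p k ℓ) := by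
      refine ⟨fun x => ?_, fun {x y} h => ?_, fun {x y z} h h' => ?_⟩
      · rw [lensRel_iff]; exact ⟨0, (ac_zero _ x).symm⟩
      · rw [lensRel_iff] at h ⊢
        obtain ⟨g, rfl⟩ := h
        exact ⟨-g, by rw [← ac_add _ (zt_pow ℓ), neg_add_cancel, ac_zero]⟩
      · rw [lensRel_iff] at h h' ⊢
        obtain ⟨g, rfl⟩ := h
        obtain ⟨g', rfl⟩ := h'
        exact ⟨g' + g, by rw [ac_add _ (zt_pow ℓ)]⟩
    exact (he.eqvGen_iff).1 h1
  · intro h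
    exact Quot.sound h

lemma pr_quot (ℓ : Fin k → ℤ)   : Topology.IsQuotientMap (pr p k ℓ) := isQuotientMap_quot_mk

lemma pr_cov (ℓ : Fin k → ℤ) (hℓ : ∀ j, IsCoprime (ℓ j) (p : ℤ)) : IsCoveringMap (pr p k ℓ) := by
  let act : AddAction (ZMod p) (SS k) :=
    { vadd := fun g x => ac (zt_norm (p := p) ℓ) g x
      add_vadd := fun g h x => ac_add _ (zt_pow ℓ) g h x
      zero_vadd := fun x => ac_zero _ x }
  have hv : ∀ (g : ZMod p) (x : SS k), g +ᵥ x = ac (zt_norm (p := p) ℓ) g x := fun _ _ => rfl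
  have hcont : ContinuousConstVAdd (ZMod p) (SS k) := ⟨fun g => continuous_ac _ g⟩
  have hcan : IsCancelVAdd (ZMod p) (SS k) := isCancelVAdd_iff_eq_zero_of_vadd_eq.2 (fun g x h => ac_free ℓ hℓ g x h)
  refine (Topology.IsQuotientMap.isAddQuotientCoveringMap_of_properlyDiscontinuousVAdd (G := ZMod p) (pr_quot ℓ) ?_).isCoveringMap
  intro x y
  rw [eq_comm, pr_eq]
  constructor
  · rintro ⟨g, h⟩; exact ⟨g, h.symm⟩
  · rintro ⟨g, h⟩; exact ⟨g, h.symm⟩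

end Lens

end LSC

open scoped Topology unitInterval

namespace LSC

set_option linter.unusedSectionVars false

section Lift
variable {p : ℕ} [NeZero p] {k : ℕ}

lemma pr_cont (ℓ : Fin k → ℤ) : Continuous (pr p k ℓ) := continuous_quot_mk

lemma pr_ac (ℓ : Fin k → ℤ) (g : ZMod p) (x : SS k) :
    pr p k ℓ (ac (zt_norm (p := p) ℓ) g x) = pr p k ℓ x :=
  ((pr_eq ℓ _ _).2 ⟨g, rfl⟩).symm

lemma ac_inj (ℓ : Fin k → ℤ) (hℓ : ∀ j, IsCoprime (ℓ j) (p : ℤ)) (g h : ZMod p) (x : SS k)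
    (H : ac (zt_norm (p := p) ℓ) g x = ac (zt_norm (p := p) ℓ) h x) : g = h := by
  have : ac (zt_norm (p := p) ℓ) (-h + g) x = x := by
    rw [ac_add _ (zt_pow ℓ), H, ← ac_add _ (zt_pow ℓ), neg_add_cancel, ac_zero]
  have := ac_free ℓ hℓ _ x this
  exact (neg_add_eq_zero.1 this).symm

lemma ac_inj2 (ℓ : Fin k → ℤ) (g : ZMod p) (x y : SS k)
    (H : ac (zt_norm (p := p) ℓ) g x = ac (zt_norm (p := p) ℓ) g y) : x = y := by
  have := congrArg (ac (zt_norm (p := p) ℓ) (-g)) H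
  rwa [← ac_add _ (zt_pow ℓ), ← ac_add _ (zt_pow ℓ), neg_add_cancel, ac_zero, ac_zero] at this

/-- Lift a homotopy ending at a constant; the end lies in the fibre, indexed by a locally constant
function. -/
lemma lift_null {A : Type*} [TopologicalSpace A] (ℓ : Fin k → ℤ) (hℓ : ∀ j, IsCoprime (ℓ j) (p : ℤ))
    (H : C(I × A, LensSpace p k ℓ)) (f : C(A, SS k)) (H0 : ∀ a, H (0, a) = pr p k ℓ (f a))
    (b : LensSpace p k ℓ) (H1 : ∀ a, H (1, a) = b) :
    ∃ (G : C(I × A, SS k)) (c : SS k) (γ : A → ZMod p), (∀ z, pr p k ℓ (G z) = H z) ∧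
      (∀ a, G (0, a) = f a) ∧ (∀ a, G (1, a) = ac (zt_norm (p := p) ℓ) (γ a) c) ∧
      ∀ g, IsOpen {a | γ a = g} := by
  have hc := pr_cov ℓ hℓ
  obtain ⟨c, hcb⟩ := (pr_quot (p := p) ℓ).surjective b
  let G := hc.liftHomotopy H f H0
  have hG : ∀ z, pr p k ℓ (G z) = H z := fun z => congrFun (hc.liftHomotopy_lifts H f H0) z
  have hG1 : ∀ a, ∃ g : ZMod p, G (1, a) = ac (zt_norm (p := p) ℓ) g c := by
    intro a
    rw [← pr_eq, hcb, hG, H1]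
  choose γ hγ using hG1
  refine ⟨G, c, γ, hG, fun a => hc.liftHomotopy_zero H f H0 a, hγ, fun g => ?_⟩
  have hcl : ∀ g, IsClosed {a | γ a = g} := by
    intro g
    have : {a | γ a = g} = (fun a => G (1, a)) ⁻¹' {ac (zt_norm (p := p) ℓ) g c} := by
      ext a
      simp only [Set.mem_ofPred_eq, Set.mem_preimage, Set.mem_singleton_iff, hγ]
      exact ⟨fun h => by rw [h], fun h => ac_inj ℓ hℓ _ _ _ h⟩
    rw [this]
    exact isClosed_singleton.preimage (by fun_prop)
  have : {a | γ a = g} = (⋃ g' ∈ {g' : ZMod p | g' ≠ g}, {a | γ a = g'})ᶜ := by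
    ext a
    simp only [ne_eq, Set.mem_compl_iff, Set.mem_iUnion, Set.mem_ofPred_eq, exists_prop, not_exists, not_and]
    exact ⟨fun h i hi hh => hi (hh.symm.trans h), fun h => by_contra fun hh => h _ hh rfl⟩
  rw [this]
  exact (Set.Finite.isClosed_biUnion (Set.toFinite _) fun g' _ => hcl g').isOpen_compl

end Lift

section Two
variable {p q : ℕ} [NeZero p] [NeZero q] {k : ℕ}

/-- preimage in the product of spheres -/
def tl (ℓ ℓ' : Fin k → ℤ) (U : Set (LensSpace p k ℓ × LensSpace q k ℓ')) : Set (SS k × SS k) :=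
  {z | (pr p k ℓ z.1, pr q k ℓ' z.2) ∈ U}

lemma tl_open (ℓ ℓ' : Fin k → ℤ) {U : Set (LensSpace p k ℓ × LensSpace q k ℓ')} (hU : IsOpen U) :
    IsOpen (tl ℓ ℓ' U) :=
  hU.preimage (((pr_cont ℓ).comp continuous_fst).prodMk ((pr_cont ℓ').comp continuous_snd))

/-- the map from preimage to U -/
def tlm (ℓ ℓ' : Fin k → ℤ) (U : Set (LensSpace p k ℓ × LensSpace q k ℓ')) :
    C(tl ℓ ℓ' U, U) :=
  ⟨fun z => ⟨(pr p k ℓ z.1.1, pr q k ℓ' z.1.2), z.2⟩,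
    Continuous.subtype_mk (((pr_cont ℓ).comp (continuous_fst.comp continuous_subtype_val)).prodMk
      ((pr_cont ℓ').comp (continuous_snd.comp continuous_subtype_val))) _⟩

lemma tl_ac (ℓ ℓ' : Fin k → ℤ) (U : Set (LensSpace p k ℓ × LensSpace q k ℓ')) (g : ZMod p) (x y : SS k) :
    (ac (zt_norm (p := p) ℓ) g x, y) ∈ tl ℓ ℓ' U ↔ (x, y) ∈ tl ℓ ℓ' U := by
  simp only [tl, Set.mem_ofPred_eq, pr_ac]

lemma part1 (ℓ ℓ' : Fin k → ℤ) (hℓ : ∀ j, IsCoprime (ℓ j) (p : ℤ))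
    (U : Set (LensSpace p k ℓ × LensSpace q k ℓ')) (hU : IsOpen U)
    (hn : ContinuousMap.Nullhomotopic
      (⟨Subtype.val, continuous_subtype_val⟩ : C(U, LensSpace p k ℓ × LensSpace q k ℓ'))) :
    ∃ V : ZMod p → Set (SS k × SS k), (∀ g, IsOpen (V g)) ∧
      (∀ g g' z, z ∈ V g → z ∈ V g' → g = g') ∧
      (∀ g x y, (ac (zt_norm (p := p) ℓ) (1 : ZMod p) x, y) ∈ V (g + 1) ↔ (x, y) ∈ V g) ∧
      ∀ z ∈ tl ℓ ℓ' U, ∃ g, z ∈ V g := by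
  obtain ⟨b, ⟨h⟩⟩ := hn
  let H : C(I × tl ℓ ℓ' U, LensSpace p k ℓ) :=
    ⟨fun z => (h (z.1, tlm ℓ ℓ' U z.2)).1, by fun_prop⟩
  let f : C(tl ℓ ℓ' U, SS k) := ⟨fun z => z.1.1, by fun_prop⟩
  obtain ⟨G, c, γ, hG, hG0, hG1, hγ⟩ := lift_null ℓ hℓ H f
    (fun a => by simp [H, f, tlm]) b.1 (fun a => by simp [H])
  have key : ∀ (x y : SS k) (h1 : (x, y) ∈ tl ℓ ℓ' U)
      (h2 : (ac (zt_norm (p := p) ℓ) (1 : ZMod p) x, y) ∈ tl ℓ ℓ' U),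
      γ ⟨_, h2⟩ = γ ⟨_, h1⟩ + 1 := by
    intro x y h1 h2
    have e : (fun t : I => G (t, ⟨_, h2⟩)) = fun t : I => ac (zt_norm (p := p) ℓ) (1 : ZMod p) (G (t, ⟨_, h1⟩)) := by
      refine (pr_cov ℓ hℓ).eq_of_comp_eq (by fun_prop) ((continuous_ac _ _).comp (by fun_prop)) ?_ 0 ?_
      · funext t
        simp only [Function.comp, pr_ac, hG]
        simp [H, tlm, pr_ac]
      · simp only [hG0]; rfl
    have e1 := congrFun e 1
    simp only [hG1] at e1
    rw [← ac_add _ (zt_pow ℓ)] at e1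
    rw [ac_inj ℓ hℓ _ _ _ e1, add_comm]
  refine ⟨fun g => Subtype.val '' {a | γ a = g}, fun g => (tl_open ℓ ℓ' hU).isOpenMap_subtype_val _ (hγ g),
    ?_, ?_, ?_⟩
  · rintro g g' z ⟨a, rfl, rfl⟩ ⟨a', rfl, h⟩
    rw [Subtype.ext h]
  · intro g x y
    constructor
    · rintro ⟨⟨z, hz⟩, h1, rfl⟩
      refine ⟨⟨(x, y), (tl_ac ℓ ℓ' U 1 x y).1 hz⟩, ?_, rfl⟩
      have := key x y ((tl_ac ℓ ℓ' U 1 x y).1 hz) hz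
      simp only [Set.mem_ofPred_eq] at h1 ⊢
      rw [h1] at this
      exact (add_right_cancel this).symm
    · rintro ⟨⟨z, hz⟩, h1, rfl⟩
      refine ⟨⟨_, (tl_ac ℓ ℓ' U 1 x y).2 hz⟩, ?_, rfl⟩
      simp only [Set.mem_ofPred_eq] at h1 ⊢
      rw [key x y hz, h1]
  · intro z hz
    exact ⟨γ ⟨z, hz⟩, ⟨z, hz⟩, rfl, rfl⟩

lemma pathconn (hk : 1 ≤ k) : PathConnectedSpace (SS k) := by
  refine isPathConnected_iff_pathConnectedSpace.1 (isPathConnected_sphere (E := ES k) ?_ 0 zero_le_one)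
  have h1 : Module.finrank ℝ (ES k) = 2 * k := by
    rw [finrank_real_of_complex]; simp
  have : FiniteDimensional ℝ (ES k) := FiniteDimensional.complexToReal _
  rw [← Module.finrank_eq_rank, h1]
  norm_cast
  omega

lemma part2 (hk : 1 ≤ k) (ℓ ℓ' : Fin k → ℤ) (hℓ' : ∀ j, IsCoprime (ℓ' j) (q : ℤ))
    (U : Set (LensSpace p k ℓ × LensSpace q k ℓ'))
    (hn : ContinuousMap.Nullhomotopic
      (⟨Subtype.val, continuous_subtype_val⟩ : C(U, LensSpace p k ℓ × LensSpace q k ℓ'))) :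
    ∃ (c : SS k) (K : C(I × tl ℓ ℓ' U, SS k)), (∀ a, K (0, a) = a.1.2) ∧ (∀ a, K (1, a) = c) ∧
      ∀ t x y h1 h2, K (t, ⟨(ac (zt_norm (p := p) ℓ) (1 : ZMod p) x, y), h2⟩) = K (t, ⟨(x, y), h1⟩) := by
  obtain ⟨b, ⟨h⟩⟩ := hn
  let H : C(I × tl ℓ ℓ' U, LensSpace q k ℓ') :=
    ⟨fun z => (h (z.1, tlm ℓ ℓ' U z.2)).2, by fun_prop⟩
  let f : C(tl ℓ ℓ' U, SS k) := ⟨fun z => z.1.2, by fun_prop⟩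
  obtain ⟨G, c, γ, hG, hG0, hG1, hγ⟩ := lift_null ℓ' hℓ' H f
    (fun a => by simp [H, f, tlm]) b.2 (fun a => by simp [H])
  have key : ∀ (t : I) (x y : SS k) (h1 : (x, y) ∈ tl ℓ ℓ' U)
      (h2 : (ac (zt_norm (p := p) ℓ) (1 : ZMod p) x, y) ∈ tl ℓ ℓ' U),
      G (t, ⟨_, h2⟩) = G (t, ⟨_, h1⟩) := by
    intro t x y h1 h2
    have e : (fun t : I => G (t, ⟨_, h2⟩)) = fun t : I => G (t, ⟨_, h1⟩) := by
      refine (pr_cov ℓ' hℓ').eq_of_comp_eq (by fun_prop) (by fun_prop) ?_ 0 ?_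
      · funext t
        simp only [Function.comp, hG]
        simp [H, tlm, pr_ac]
      · simp only [hG0]; rfl
    exact congrFun e t
  have hpc := pathconn hk
  have hpath : ∀ g : ZMod q, Nonempty (Path (ac (zt_norm (p := q) ℓ') g c) c) := fun g =>
    PathConnectedSpace.joined _ _
  let P := fun g => (hpath g).some
  let e : C(tl ℓ ℓ' U, SS k) := ⟨fun a => G (1, a), by fun_prop⟩
  let h1 : f.Homotopy e := ⟨G, hG0, fun a => rfl⟩
  have hcont : Continuous (fun z : I × tl ℓ ℓ' U => P (γ z.2) z.1) := by
    rw [continuous_iff_continuousAt]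
    rintro ⟨t, a⟩
    have hm : ∀ᶠ z : I × tl ℓ ℓ' U in 𝓝 (t, a), P (γ a) z.1 = P (γ z.2) z.1 := by
      have : {z : I × tl ℓ ℓ' U | γ z.2 = γ a} ∈ 𝓝 (t, a) :=
        ((hγ (γ a)).preimage continuous_snd).mem_nhds rfl
      filter_upwards [this] with z hz
      rw [hz]
    exact ContinuousAt.congr (by fun_prop) hm
  let h2 : e.Homotopy (ContinuousMap.const _ c) :=
    ⟨⟨_, hcont⟩, fun a => by simp [e, hG1], fun a => by simp⟩
  refine ⟨c, (h1.trans h2).toContinuousMap, fun a => (h1.trans h2).apply_zero a,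
    fun a => (h1.trans h2).apply_one a, ?_⟩
  intro t x y m1 m2
  change (h1.trans h2) _ = (h1.trans h2) _
  have hg : γ ⟨_, m2⟩ = γ ⟨_, m1⟩ := by
    have := key 1 x y m1 m2
    rw [hG1, hG1] at this
    exact ac_inj ℓ' hℓ' _ _ _ this
  rw [ContinuousMap.Homotopy.trans_apply, ContinuousMap.Homotopy.trans_apply]
  split_ifs with hh
  · exact key _ x y m1 m2
  · change P (γ _) _ = P (γ _) _
    rw [hg]

end Two

end LSC

open scoped Topology unitInterval

namespace LSC

set_option linter.unusedSectionVars false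

section Three
variable {p q : ℕ} [NeZero p] [NeZero q]

lemma exists_phi {k : ℕ} (ℓ : Fin k → ℤ) (C W : Set (SS k × SS k)) (hC : IsClosed C) (hW : IsOpen W) (hCW : C ⊆ W)
    (hT : ∀ (g : ZMod p) x y, (x, y) ∈ C → (ac (zt_norm (p := p) ℓ) g x, y) ∈ C) :
    ∃ (φ : SS k × SS k → ℝ) (N : Set (SS k × SS k)), Continuous φ ∧ IsOpen N ∧ (∀ z, z ∉ W → z ∈ N) ∧
      (∀ z ∈ N, φ z = 0) ∧ (∀ z ∈ C, φ z = 1) ∧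
      ∀ x y, φ (ac (zt_norm (p := p) ℓ) (1 : ZMod p) x, y) = φ (x, y) := by
  obtain ⟨W', hW'o, hCW', hW'⟩ := normal_exists_closure_subset hC hW hCW
  obtain ⟨f, hf0, hf1, -⟩ := exists_continuous_zero_one_of_isClosed (s := W'ᶜ) (t := C)
    hW'o.isClosed_compl hC (Set.disjoint_left.2 fun z hz hz' => hz (hCW' hz'))
  refine ⟨fun z => ∏ g : ZMod p, f (ac (zt_norm (p := p) ℓ) g z.1, z.2), (closure W')ᶜ, ?_,
    isClosed_closure.isOpen_compl, fun z hz hz' => hz (hW' hz'), ?_, ?_, ?_⟩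
  · refine continuous_finsetProd _ fun g _ => f.continuous.comp ?_
    exact ((continuous_ac _ g).comp continuous_fst).prodMk continuous_snd
  · intro z hz
    refine Finset.prod_eq_zero (Finset.mem_univ (0 : ZMod p)) ?_
    rw [ac_zero]
    exact hf0 (fun h => hz (subset_closure h))
  · intro z hz
    exact Finset.prod_eq_one fun g _ => hf1 (hT g _ _ hz)
  · intro x y
    refine Fintype.prod_equiv (Equiv.addRight (1 : ZMod p)) _ _ fun g => ?_
    simp only [Equiv.coe_addRight]
    rw [ac_add _ (zt_pow ℓ)]

theorem no_cover (hp : 2 ≤ p) {m : ℕ} (ℓ ℓ' : Fin (m + 1) → ℤ) (hℓ : ∀ j, IsCoprime (ℓ j) (p : ℤ))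
    (hℓ' : ∀ j, IsCoprime (ℓ' j) (q : ℤ))
    (U : Fin (2 * m + 1 + 1) → Set (LensSpace p (m + 1) ℓ × LensSpace q (m + 1) ℓ'))
    (hUo : ∀ i, IsOpen (U i)) (hUc : (⋃ i, U i) = Set.univ)
    (hUn : ∀ i, ContinuousMap.Nullhomotopic
      (⟨Subtype.val, continuous_subtype_val⟩ : C(U i, LensSpace p (m + 1) ℓ × LensSpace q (m + 1) ℓ'))) :
    False := by
  have hV := fun i => part1 ℓ ℓ' hℓ (U i) (hUo i) (hUn i)
  choose V hVo hVd hVT hVc using hV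
  let n := Fin.last (2 * m + 1)
  obtain ⟨c, K, hK0, hK1, hKT⟩ := part2 (p := p) (q := q) (by omega) ℓ ℓ' hℓ' (U n) (hUn n)
  let C : Set (SS (m + 1) × SS (m + 1)) := (⋃ i : Fin (2 * m + 1), tl ℓ ℓ' (U i.castSucc))ᶜ
  have hCW : C ⊆ tl ℓ ℓ' (U n) := by
    intro z hz
    have : (pr p (m + 1) ℓ z.1, pr q (m + 1) ℓ' z.2) ∈ ⋃ i, U i := by rw [hUc]; trivial
    obtain ⟨i, hi⟩ := Set.mem_iUnion.1 this
    rcases Fin.eq_castSucc_or_eq_last i with ⟨j, rfl⟩ | rfl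
    · exact absurd (Set.mem_iUnion.2 ⟨j, hi⟩) hz
    · exact hi
  obtain ⟨φ, N, hφc, hNo, hN, hφN, hφC, hφT⟩ := exists_phi (p := p) ℓ C (tl ℓ ℓ' (U n))
    (isOpen_iUnion fun i => tl_open ℓ ℓ' (hUo _)).isClosed_compl (tl_open ℓ ℓ' (hUo n)) hCW (by
      intro g x y hz hz'
      obtain ⟨i, hi⟩ := Set.mem_iUnion.1 hz'
      exact hz (Set.mem_iUnion.2 ⟨i, (tl_ac ℓ ℓ' _ g x y).1 hi⟩))
  classical
  let F : ℝ × SS (m + 1) × SS (m + 1) → SS (m + 1) := fun w =>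
    if h : w.2 ∈ tl ℓ ℓ' (U n) then K (Set.projIcc 0 1 zero_le_one (w.1 * φ w.2), ⟨w.2, h⟩) else w.2.2
  have hFN : ∀ t z, z ∈ N → F (t, z) = z.2 := by
    intro t z hz
    by_cases h : z ∈ tl ℓ ℓ' (U n)
    · simp only [F, dif_pos h, hφN z hz, mul_zero]
      rw [Set.projIcc_left]
      exact hK0 ⟨z, h⟩
    · simp only [F, dif_neg h]
  have hFc : Continuous F := by
    rw [continuous_iff_continuousAt]
    rintro ⟨t, z⟩
    by_cases h : z ∈ tl ℓ ℓ' (U n)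
    · have ho : IsOpen {w : ℝ × SS (m + 1) × SS (m + 1) | w.2 ∈ tl ℓ ℓ' (U n)} :=
        (tl_open ℓ ℓ' (hUo n)).preimage continuous_snd
      refine ContinuousOn.continuousAt (s := {w : ℝ × SS (m + 1) × SS (m + 1) | w.2 ∈ tl ℓ ℓ' (U n)})
        ?_ (ho.mem_nhds h)
      rw [continuousOn_iff_continuous_domRestrict]
      have : Set.domRestrict {w : ℝ × SS (m + 1) × SS (m + 1) | w.2 ∈ tl ℓ ℓ' (U n)} F =
          fun w => K (Set.projIcc 0 1 zero_le_one (w.1.1 * φ w.1.2), ⟨w.1.2, w.2⟩) := by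
        funext w
        exact dif_pos w.2
      rw [this]
      refine K.continuous.comp (Continuous.prodMk ?_ ?_)
      · exact continuous_projIcc.comp (by fun_prop)
      · exact Continuous.subtype_mk (by fun_prop) _
    · have : ∀ᶠ w : ℝ × SS (m + 1) × SS (m + 1) in 𝓝 (t, z), w.2.2 = F w := by
        filter_upwards [(hNo.preimage continuous_snd).mem_nhds (hN z h)] with w hw
        exact (hFN w.1 w.2 hw).symm
      exact ContinuousAt.congr (by fun_prop) this
  refine core hp (zt p ℓ) (zt_norm ℓ) (zt_pow ℓ) (ac (zt_norm (p := p) ℓ) (1 : ZMod p)) ?_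
    (fun i => V i.castSucc) (fun i => hVo _) (fun i => hVd _) (fun i => hVT _) c F hFc ?_ ?_ ?_
  · intro x i
    rw [ac_apply, chi_one hp]
  · intro x y
    by_cases h : (x, y) ∈ tl ℓ ℓ' (U n)
    · simp only [F, dif_pos h, zero_mul]
      rw [Set.projIcc_left]
      exact hK0 ⟨_, h⟩
    · simp only [F, dif_neg h]
  · intro t x y
    by_cases h : (x, y) ∈ tl ℓ ℓ' (U n)
    · have h' := (tl_ac ℓ ℓ' (U n) 1 x y).2 h
      simp only [F, dif_pos h, dif_pos h', hφT]
      exact hKT _ _ _ _ _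
    · have h' := fun hh => h ((tl_ac ℓ ℓ' (U n) 1 x y).1 hh)
      simp only [F, dif_neg h, dif_neg h']
  · intro x y hxy
    have hC : (x, y) ∈ C := by
      intro hz
      obtain ⟨i, hi⟩ := Set.mem_iUnion.1 hz
      obtain ⟨g, hg⟩ := hVc _ _ hi
      exact hxy i g hg
    have h := hCW hC
    simp only [F, dif_pos h, hφC _ hC, one_mul]
    rw [Set.projIcc_right]
    exact hK1 _

end Three

end LSC

open scoped Topology unitInterval

namespace LSC

set_option linter.unusedSectionVars false

section Fin
variable {p q : ℕ} [NeZero p] [NeZero q] {k : ℕ}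

lemma seg_ne (x w : SS k) (t : I) (h : w.1 ≠ -x.1) : (1 - (t : ℝ)) • w.1 + (t : ℝ) • x.1 ≠ 0 := by
  intro h0
  have hx : ‖x.1‖ = 1 := mem_sphere_zero_iff_norm.1 x.2
  have hw : ‖w.1‖ = 1 := mem_sphere_zero_iff_norm.1 w.2
  have h1 : (1 - (t : ℝ)) • w.1 = -((t : ℝ) • x.1) := eq_neg_of_add_eq_zero_left h0
  have h2 := congrArg norm h1
  rw [norm_neg, norm_smul, norm_smul, hx, hw, Real.norm_of_nonneg (by linarith [t.2.2]),
    Real.norm_of_nonneg t.2.1] at h2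
  have ht : (t : ℝ) = 1 / 2 := by linarith
  rw [ht, ← smul_neg] at h1
  have h3 : (1 - 1 / 2 : ℝ) = 1 / 2 := by norm_num
  rw [h3] at h1
  exact h (smul_right_injective (ES k) (by norm_num : (1 / 2 : ℝ) ≠ 0) h1)

lemma self_eq_neg_iff_zero {x : ES k} (h : x = -x) : x = 0 := by
  have h1 : (2 : ℝ) • x = 0 := by
    rw [two_smul]
    nth_rewrite 2 [h]
    exact add_neg_cancel x
  exact (smul_eq_zero.1 h1).resolve_left two_ne_zero

lemma local_null (ℓ : Fin k → ℤ) (hℓ : ∀ j, IsCoprime (ℓ j) (p : ℤ)) (b : LensSpace p k ℓ) :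
    ∃ (O : Set (LensSpace p k ℓ)) (H : C(I × O, LensSpace p k ℓ)), IsOpen O ∧ b ∈ O ∧
      (∀ u, H (0, u) = u.1) ∧ ∀ u, H (1, u) = b := by
  obtain ⟨x, rfl⟩ := (pr_quot (p := p) ℓ).surjective b
  have hlh := (pr_cov ℓ hℓ).isLocalHomeomorph
  obtain ⟨e, hxe, he⟩ := hlh x
  let S : Set (SS k) := e.source ∩ {w | w.1 ≠ -x.1}
  have hS : IsOpen S := e.open_source.inter (isClosed_singleton.preimage continuous_subtype_val).isOpen_compl
  have hOs : ∀ u ∈ pr p k ℓ '' S, u ∈ e.target ∧ e.symm u ∈ S := by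
    rintro _ ⟨w, hw, rfl⟩
    rw [he]
    exact ⟨e.map_source hw.1, by rw [e.left_inv hw.1]; exact hw⟩
  have hx1 : ‖x.1‖ = 1 := mem_sphere_zero_iff_norm.1 x.2
  have hxx : x.1 ≠ -x.1 := by
    intro h
    have : x.1 = 0 := self_eq_neg_iff_zero h
    rw [this] at hx1; simp at hx1
  let s : pr p k ℓ '' S → SS k := fun u => e.symm u.1
  have hs : Continuous s := by
    have := e.continuousOn_symm.mono (s := e.target) (t := pr p k ℓ '' S) (fun u hu => (hOs u hu).1)
    exact continuousOn_iff_continuous_domRestrict.1 this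
  let v : I × (pr p k ℓ '' S) → ES k := fun z => (1 - (z.1 : ℝ)) • (s z.2).1 + (z.1 : ℝ) • x.1
  have hv : Continuous v := by
    have := continuous_subtype_val.comp hs
    fun_prop
  have hv0 : ∀ z, v z ≠ 0 := fun z => seg_ne x (s z.2) z.1 (hOs _ z.2.2).2.2
  have hvc : Continuous fun z => nrm x (v z) := by
    rw [continuous_iff_continuousAt]
    intro z
    exact ContinuousAt.comp (f := v) (nrm_cont x (hv0 z)) hv.continuousAt
  have hn1 : ∀ w : SS k, nrm x w.1 = w := by
    intro w
    have hw : ‖w.1‖ = 1 := mem_sphere_zero_iff_norm.1 w.2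
    have hw0 : w.1 ≠ 0 := by intro h; rw [h] at hw; simp at hw
    apply Subtype.ext
    rw [nrm_of_ne x hw0]
    simp [hw]
  refine ⟨pr p k ℓ '' S, ⟨fun z => pr p k ℓ (nrm x (v z)), (pr_cont ℓ).comp hvc⟩,
    hlh.isOpenMap _ hS, ⟨x, ⟨hxe, hxx⟩, rfl⟩, ?_, ?_⟩
  · intro u
    have : v (0, u) = (s u).1 := by simp [v]
    simp only [ContinuousMap.coe_mk, this, hn1]
    exact (congrFun he _).trans (e.right_inv (hOs _ u.2).1)
  · intro u
    have : v (1, u) = x.1 := by simp [v]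
    simp only [ContinuousMap.coe_mk, this, hn1]

lemma local_null2 (ℓ ℓ' : Fin k → ℤ) (hℓ : ∀ j, IsCoprime (ℓ j) (p : ℤ)) (hℓ' : ∀ j, IsCoprime (ℓ' j) (q : ℤ))
    (b : LensSpace p k ℓ × LensSpace q k ℓ') :
    ∃ (O : Set (LensSpace p k ℓ × LensSpace q k ℓ')), IsOpen O ∧ b ∈ O ∧
      ContinuousMap.Nullhomotopic
      (⟨Subtype.val, continuous_subtype_val⟩ : C(O, LensSpace p k ℓ × LensSpace q k ℓ')) := by
  obtain ⟨O, H, hO, hb, H0, H1⟩ := local_null ℓ hℓ b.1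
  obtain ⟨O', H', hO', hb', H0', H1'⟩ := local_null ℓ' hℓ' b.2
  refine ⟨O ×ˢ O', hO.prod hO', ⟨hb, hb'⟩, b, ⟨⟨⟨fun z =>
    (H (z.1, ⟨z.2.1.1, z.2.2.1⟩), H' (z.1, ⟨z.2.1.2, z.2.2.2⟩)), ?_⟩, ?_, ?_⟩⟩⟩
  · refine Continuous.prodMk (H.continuous.comp ?_) (H'.continuous.comp ?_)
    · exact continuous_fst.prodMk (Continuous.subtype_mk (by fun_prop) _)
    · exact continuous_fst.prodMk (Continuous.subtype_mk (by fun_prop) _)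
  · intro a; simp [H0, H0']
  · intro a; simp [H1, H1']

lemma compact_lens (ℓ : Fin k → ℤ) : CompactSpace (LensSpace p k ℓ) := by
  constructor
  rw [← (pr_quot (p := p) ℓ).surjective.range_eq]
  exact isCompact_range (pr_cont ℓ)

lemma finite_cover (hk : 1 ≤ k) (ℓ ℓ' : Fin k → ℤ) (hℓ : ∀ j, IsCoprime (ℓ j) (p : ℤ)) (hℓ' : ∀ j, IsCoprime (ℓ' j) (q : ℤ)) :
    ∃ N : ℕ, ∃ U : Fin (N + 1) → Set (LensSpace p k ℓ × LensSpace q k ℓ'),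
    (∀ i, IsOpen (U i)) ∧ (⋃ i, U i) = Set.univ ∧
    ∀ i, ContinuousMap.Nullhomotopic
      (⟨Subtype.val, continuous_subtype_val⟩ : C(U i, LensSpace p k ℓ × LensSpace q k ℓ')) := by
  have := compact_lens (p := p) ℓ
  have := compact_lens (p := q) ℓ'
  choose O hO hb hn using local_null2 (p := p) (q := q) ℓ ℓ' hℓ hℓ'
  obtain ⟨t, ht⟩ := isCompact_univ.elim_finite_subcover O hO (fun b _ => Set.mem_iUnion.2 ⟨b, hb b⟩)
  have hpc := pathconn hk
  obtain ⟨x0⟩ := hpc.nonempty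
  have hne : t.Nonempty := by
    obtain ⟨b, hb⟩ := Set.mem_iUnion.1 (ht (Set.mem_univ (pr p k ℓ x0, pr q k ℓ' x0)))
    obtain ⟨hb', -⟩ := Set.mem_iUnion.1 hb
    exact ⟨b, hb'⟩
  obtain ⟨N, hN⟩ : ∃ N, t.card = N + 1 := ⟨t.card - 1, by have := hne.card_pos; omega⟩
  let E := t.equivFinOfCardEq hN
  refine ⟨N, fun i => O (E.symm i).1, fun i => hO _, ?_, fun i => hn _⟩
  refine Set.eq_univ_of_forall fun z => ?_
  obtain ⟨b, hb⟩ := Set.mem_iUnion.1 (ht (Set.mem_univ z))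
  obtain ⟨hb', hz⟩ := Set.mem_iUnion.1 hb
  refine Set.mem_iUnion.2 ⟨E ⟨b, hb'⟩, ?_⟩
  simpa using hz

end Fin

theorem main (k : ℕ) (hk : 1 ≤ k) (n : ℕ) (hn : n = 2 * k - 1)
    (p q : ℕ) (hp2 : 2 ≤ p) (hq2 : 2 ≤ q)
    (ℓ : Fin k → ℤ) (hℓ : ∀ j, IsCoprime (ℓ j) (p : ℤ))
    (ℓ' : Fin k → ℤ) (hℓ' : ∀ j, IsCoprime (ℓ' j) (q : ℤ)) :
    n + 1 ≤ lsCat (LensSpace p k ℓ × LensSpace q k ℓ') := by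
  have : NeZero p := ⟨by omega⟩
  have : NeZero q := ⟨by omega⟩
  obtain ⟨m, rfl⟩ : ∃ m, k = m + 1 := ⟨k - 1, by omega⟩
  by_contra hlt
  have hmem := Nat.sInf_mem (finite_cover (p := p) (q := q) hk ℓ ℓ' hℓ hℓ')
  change lsCat (LensSpace p (m + 1) ℓ × LensSpace q (m + 1) ℓ') ∈ _ at hmem
  generalize lsCat (LensSpace p (m + 1) ℓ × LensSpace q (m + 1) ℓ') = N at hlt hmem
  obtain ⟨U, hUo, hUc, hUn⟩ := hmem
  let r : Fin (2 * m + 1 + 1) → Fin (N + 1) := fun i => ⟨min i.1 N, by omega⟩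
  refine no_cover hp2 ℓ ℓ' hℓ hℓ' (fun i => U (r i)) (fun i => hUo _) ?_ (fun i => hUn _)
  refine Set.eq_univ_of_forall fun z => ?_
  have hz : z ∈ ⋃ i, U i := by rw [hUc]; trivial
  obtain ⟨i, hi⟩ := Set.mem_iUnion.1 hz
  refine Set.mem_iUnion.2 ⟨⟨i.1, by omega⟩, ?_⟩
  have : r ⟨i.1, by omega⟩ = i := Fin.ext (by simp [r]; omega)
  rw [this]
  exact hi

end LSC

/-- For odd `n = 2k-1` and relatively prime `p, q ≥ 2`, `cat (L^n_p × L^n_q) ≥ n + 1`. -/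
theorem lsCat_prod_lensSpace_lower (k : ℕ) (hk : 1 ≤ k) (n : ℕ) (hn : n = 2 * k - 1)
    (p q : ℕ) (hp2 : 2 ≤ p) (hq2 : 2 ≤ q) (hpq : Nat.Coprime p q)
    (ℓ : Fin k → ℤ) (hℓ : ∀ j, IsCoprime (ℓ j) (p : ℤ))
    (ℓ' : Fin k → ℤ) (hℓ' : ∀ j, IsCoprime (ℓ' j) (q : ℤ)) :
    n + 1 ≤ lsCat (LensSpace p k ℓ × LensSpace q k ℓ') := by
  exact LSC.main k hk n hn p q hp2 hq2 ℓ hℓ ℓ' hℓ'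
end

section
/- Let n ≥ 3 be odd and let p, q ≥ 2 be relatively prime integers. Then for every choice of admissible parameters, cat(L^n_p × L^n_q) ≤ 2n − 1. -/
open scoped Topology

/-- The unit sphere of `ℂ^k`. -/
abbrev USph (k : ℕ) : Type := Metric.sphere (0 : EuclideanSpace ℂ (Fin k)) 1

/-- A map to the sphere missing a point is homotopic to a constant. -/
theorem nullhomotopic_of_miss {k : ℕ} {V : Type} [TopologicalSpace V] (f : C(V, USph k))
    (v : USph k) (h : ∀ x, f x ≠ v) :
    ∃ c : USph k, ContinuousMap.Homotopic f (ContinuousMap.const V c) := by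
  refine ⟨-v, ⟨?_⟩⟩
  have hne : ∀ (t : unitInterval) (x : V),
      ((1 - (t : ℝ)) • (f x : EuclideanSpace ℂ (Fin k)) - (t : ℝ) • (v : EuclideanSpace ℂ (Fin k))) ≠ 0 := by
    intro t x h0
    have h1 : (1 - (t : ℝ)) • (f x : EuclideanSpace ℂ (Fin k)) = (t : ℝ) • (v : EuclideanSpace ℂ (Fin k)) :=
      sub_eq_zero.mp h0
    have h2 := congrArg norm h1
    have hx : ‖(f x : EuclideanSpace ℂ (Fin k))‖ = 1 := by simp
    have hv : ‖(v : EuclideanSpace ℂ (Fin k))‖ = 1 := by simp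
    have t0 := t.2.1
    have t1 := t.2.2
    rw [norm_smul, norm_smul, hx, hv, Real.norm_of_nonneg (by linarith), Real.norm_of_nonneg t0] at h2
    have h3 : (t : ℝ) = 1 / 2 := by linarith
    rw [h3] at h1
    apply h x
    apply Subtype.ext
    have h4 := congrArg (fun y => (2 : ℝ) • y) h1
    simp only [smul_smul] at h4
    norm_num at h4
    exact h4
  refine
    { toFun := fun tx => ⟨(‖(1 - (tx.1 : ℝ)) • (f tx.2 : EuclideanSpace ℂ (Fin k)) - (tx.1 : ℝ) • (v : EuclideanSpace ℂ (Fin k))‖)⁻¹ •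
        ((1 - (tx.1 : ℝ)) • (f tx.2 : EuclideanSpace ℂ (Fin k)) - (tx.1 : ℝ) • (v : EuclideanSpace ℂ (Fin k))), ?_⟩
      continuous_toFun := ?_
      map_zero_left := ?_
      map_one_left := ?_ }
  · rw [mem_sphere_zero_iff_norm, norm_smul, norm_inv, norm_norm]
    exact inv_mul_cancel₀ (norm_ne_zero_iff.mpr (hne _ _))
  · apply Continuous.subtype_mk
    have hc : Continuous (fun tx : unitInterval × V => (1 - (tx.1 : ℝ)) • (f tx.2 : EuclideanSpace ℂ (Fin k)) - (tx.1 : ℝ) • (v : EuclideanSpace ℂ (Fin k))) := by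
      fun_prop
    exact (hc.norm.inv₀ (fun tx => norm_ne_zero_iff.mpr (hne _ _))).smul hc
  · intro x
    apply Subtype.ext
    simp
  · intro x
    apply Subtype.ext
    simp

/-- The inclusion of a subset of a product of spheres whose projections miss points. -/
theorem incl_nullhomotopic {k : ℕ} (V : Set (USph k × USph k)) (v v' : USph k)
    (h : ∀ x ∈ V, x.1 ≠ v ∧ x.2 ≠ v') :
    ContinuousMap.Nullhomotopic (⟨Subtype.val, continuous_subtype_val⟩ : C(V, USph k × USph k)) := by
  obtain ⟨c, ⟨F⟩⟩ := nullhomotopic_of_miss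
    (⟨fun x : V => x.1.1, by fun_prop⟩ : C(V, USph k)) v (fun x => (h x.1 x.2).1)
  obtain ⟨d, ⟨G⟩⟩ := nullhomotopic_of_miss
    (⟨fun x : V => x.1.2, by fun_prop⟩ : C(V, USph k)) v' (fun x => (h x.1 x.2).2)
  refine ⟨(c, d), ⟨{ toFun := fun tx => (F tx, G tx), continuous_toFun := by fun_prop, map_zero_left := ?_, map_one_left := ?_ }⟩⟩
  · intro x; simp
  · intro x; simp

/-- Descending a nullhomotopic inclusion along an open map that is injective on the set. -/
theorem descend_nullhomotopic {Y X : Type} [TopologicalSpace Y] [TopologicalSpace X]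
    (π : Y → X) (hc : Continuous π) (ho : IsOpenMap π) (V : Set Y) (hV : IsOpen V)
    (hi : Set.InjOn π V)
    (hn : ContinuousMap.Nullhomotopic (⟨Subtype.val, continuous_subtype_val⟩ : C(V, Y))) :
    IsOpen (π '' V) ∧
    ContinuousMap.Nullhomotopic (⟨Subtype.val, continuous_subtype_val⟩ : C(π '' V, X)) := by
  refine ⟨ho V hV, ?_⟩
  have he : Topology.IsOpenEmbedding (fun v : V => π v.1) :=
    Topology.IsOpenEmbedding.of_continuous_injective_isOpenMap (by fun_prop)
      (fun a b hab => Subtype.ext (hi a.2 b.2 hab)) (ho.comp hV.isOpenMap_subtype_val)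
  have hr : π '' V = Set.range (fun v : V => π v.1) := by
    rw [Set.image_eq_range]
  rw [hr]
  let e := he.toIsEmbedding.toHomeomorph
  obtain ⟨y, hy⟩ := hn.comp_right (⟨π, hc⟩ : C(Y, X))
  have h2 := ContinuousMap.Nullhomotopic.comp_left ⟨y, hy⟩
    (⟨e.symm, e.symm.continuous⟩ : C(Set.range (fun v : V => π v.1), V))
  convert h2 using 1
  ext x
  have := congrArg Subtype.val (e.apply_symm_apply x)
  exact this.symm

/-- The open sector of half-angle `π / N`. -/
def sector (N : ℕ) : Set ℂ := {c | c ∈ Complex.slitPlane ∧ |Complex.arg c| < Real.pi / N}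

theorem isOpen_sector (N : ℕ) : IsOpen (sector N) := by
  have h := Complex.continuousOn_arg.abs.isOpen_inter_preimage Complex.isOpen_slitPlane
    (isOpen_Iio (a := Real.pi / N))
  exact h

theorem sector_ne_zero {N : ℕ} {c : ℂ} (h : c ∈ sector N) : c ≠ 0 :=
  Complex.slitPlane_ne_zero h.1

theorem sector_of_angle {N : ℕ} (hN : 2 ≤ N) {r φ : ℝ} (hr : 0 < r) (h : |φ| < Real.pi / N) :
    (r : ℂ) * Complex.exp (φ * Complex.I) ∈ sector N := by
  have hpi := Real.pi_pos
  have h2 : Real.pi / N ≤ Real.pi / 2 := by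
    apply div_le_div_of_nonneg_left hpi.le (by norm_num)
    exact_mod_cast hN
  have h3 := abs_lt.mp h
  have harg : Complex.arg ((r : ℂ) * Complex.exp (φ * Complex.I)) = φ := by
    rw [Complex.exp_mul_I]
    exact Complex.arg_mul_cos_add_sin_mul_I hr ⟨by linarith, by linarith⟩
  refine ⟨?_, by rw [harg]; exact h⟩
  rw [Complex.mem_slitPlane_iff_arg, harg]
  refine ⟨by linarith, ?_⟩
  simp [hr.ne', Complex.exp_ne_zero]

/-- Rotating a nonzero number into one of the two sectors by an `N`-th root of unity. -/
theorem exists_rotate {N : ℕ} (hN : 2 ≤ N) (c : ℂ) (hc : c ≠ 0) :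
    ∃ u : ℤ, Complex.exp (2 * Real.pi * Complex.I * u / N) * c ∈ sector N ∨
      Complex.exp (2 * Real.pi * Complex.I * u / N) * c *
        Complex.exp (Real.pi * Complex.I / N) ∈ sector N := by
  have hpi := Real.pi_pos
  have hN0 : (0 : ℝ) < N := by exact_mod_cast (by omega : 0 < N)
  have hr : 0 < ‖c‖ := norm_pos_iff.mpr hc
  have hNC : (N : ℂ) ≠ 0 := by exact_mod_cast hN0.ne'
  have hpiC : (Real.pi : ℂ) ≠ 0 := by exact_mod_cast hpi.ne'
  obtain ⟨t, ht⟩ : ∃ t : ℝ, Complex.arg c = 2 * Real.pi * t / N :=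
    ⟨N * Complex.arg c / (2 * Real.pi), by field_simp⟩
  have hc1 : c = ‖c‖ * Complex.exp ((2 * Real.pi * t / N : ℝ) * Complex.I) := by
    rw [← ht, Complex.norm_mul_exp_arg_mul_I]
  have key1 : ∀ u : ℤ, |t + u| < 1 / 2 →
      Complex.exp (2 * Real.pi * Complex.I * u / N) * c ∈ sector N := by
    intro u hu
    have := sector_of_angle hN (φ := 2 * Real.pi * (t + u) / N) hr (by
      rw [abs_div, abs_mul, abs_of_pos hN0, abs_of_pos (by positivity : 0 < 2 * Real.pi)]
      apply div_lt_div_of_pos_right _ hN0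
      nlinarith)
    convert this using 1
    conv_lhs => rw [hc1]
    rw [mul_left_comm, ← Complex.exp_add]
    congr 2
    push_cast
    field_simp
    ring
  have key2 : ∀ u : ℤ, |t + u + 1 / 2| < 1 / 2 →
      Complex.exp (2 * Real.pi * Complex.I * u / N) * c *
        Complex.exp (Real.pi * Complex.I / N) ∈ sector N := by
    intro u hu
    have := sector_of_angle hN (φ := 2 * Real.pi * (t + u + 1 / 2) / N) hr (by
      rw [abs_div, abs_mul, abs_of_pos hN0, abs_of_pos (by positivity : 0 < 2 * Real.pi)]
      apply div_lt_div_of_pos_right _ hN0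
      nlinarith)
    convert this using 1
    conv_lhs => rw [hc1]
    rw [mul_left_comm, mul_assoc, ← Complex.exp_add, ← Complex.exp_add]
    congr 2
    push_cast
    field_simp
    ring
  have hfl := Int.floor_le t
  have hfl2 := Int.lt_floor_add_one t
  by_cases h1 : t < ⌊t⌋ + 1 / 2
  · refine ⟨-⌊t⌋, Or.inl (key1 _ ?_)⟩
    push_cast
    rw [abs_lt]; constructor <;> linarith
  · by_cases h2 : t = ⌊t⌋ + 1 / 2
    · refine ⟨-⌊t⌋ - 1, Or.inr (key2 _ ?_)⟩
      push_cast
      rw [abs_lt]; constructor <;> linarith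
    · refine ⟨-⌊t⌋ - 1, Or.inl (key1 _ ?_)⟩
      have : (⌊t⌋ : ℝ) + 1 / 2 < t := lt_of_le_of_ne (not_lt.mp h1) (Ne.symm h2)
      push_cast
      rw [abs_lt]; constructor <;> linarith

/-- Distinct rotations of the sector by `N`-th roots of unity are disjoint. -/
theorem sector_disjoint {N : ℕ} (hN : 2 ≤ N) (c : ℂ) (u : ℤ) (h1 : c ∈ sector N)
    (h2 : Complex.exp (2 * Real.pi * Complex.I * u / N) * c ∈ sector N) : (N : ℤ) ∣ u := by
  have hpi := Real.pi_pos
  have hN0 : (0 : ℝ) < N := by exact_mod_cast (by omega : 0 < N)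
  have hNC : (N : ℂ) ≠ 0 := by exact_mod_cast hN0.ne'
  have hc := sector_ne_zero h1
  have hnorm : ‖Complex.exp (2 * Real.pi * Complex.I * u / N) * c‖ = ‖c‖ := by
    rw [norm_mul, show (2 * Real.pi * Complex.I * u / N : ℂ) = ((2 * Real.pi * u / N : ℝ) : ℂ) * Complex.I by
      push_cast; ring, Complex.norm_exp_ofReal_mul_I, one_mul]
  have e1 := Complex.norm_mul_exp_arg_mul_I c
  have e2 := Complex.norm_mul_exp_arg_mul_I (Complex.exp (2 * Real.pi * Complex.I * u / N) * c)
  have b1 := h1.2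
  have b2 := h2.2
  rw [hnorm] at e2
  generalize Complex.arg (Complex.exp (2 * Real.pi * Complex.I * u / N) * c) = φ at *
  generalize Complex.arg c = θ at *
  have hcn : (‖c‖ : ℂ) ≠ 0 := by simpa using hc
  have e3 : Complex.exp (φ * Complex.I) = Complex.exp (2 * Real.pi * Complex.I * u / N + θ * Complex.I) := by
    apply mul_left_cancel₀ hcn
    rw [e2, Complex.exp_add, mul_left_comm, e1]
  obtain ⟨m, hm⟩ := Complex.exp_eq_exp_iff_exists_int.mp e3
  have hm2 : φ = 2 * Real.pi * u / N + θ + m * (2 * Real.pi) := by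
    have : (φ : ℂ) = 2 * Real.pi * u / N + θ + m * (2 * Real.pi) := by
      apply mul_right_cancel₀ Complex.I_ne_zero
      rw [hm]; ring
    exact_mod_cast this
  have hm3 : (φ - θ) * N = 2 * Real.pi * (u + m * N) := by
    rw [hm2]; field_simp; ring
  rw [lt_div_iff₀ hN0] at b1 b2
  have b3 : |(2 * Real.pi * (u + m * N) : ℝ)| < 2 * Real.pi := by
    rw [← hm3, abs_mul, abs_of_pos hN0]
    have := abs_sub φ θ
    nlinarith
  rw [abs_mul, abs_of_pos (by positivity : 0 < 2 * Real.pi)] at b3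
  have b4 : |(u + m * N : ℝ)| < 1 := by
    by_contra hcon
    push Not at hcon
    nlinarith
  have b5 : |u + m * (N : ℤ)| < 1 := by exact_mod_cast b4
  have b6 : u + m * (N : ℤ) = 0 := Int.abs_lt_one_iff.mp b5
  exact ⟨-m, by linarith⟩

/-- The character value `exp (2πi u / p)`. -/
noncomputable def ue (p : ℕ) (u : ℤ) : ℂ := Complex.exp (2 * Real.pi * Complex.I * u / p)

theorem ue_eq (p : ℕ) (m l : ℤ) :
    Complex.exp (2 * Real.pi * Complex.I * m * l / p) = ue p (m * l) := by
  unfold ue; congr 1; push_cast; ring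

theorem ue_add (p : ℕ) (u v : ℤ) : ue p (u + v) = ue p u * ue p v := by
  unfold ue; rw [← Complex.exp_add]; congr 1; push_cast; ring

theorem norm_ue (p : ℕ) (u : ℤ) : ‖ue p u‖ = 1 := by
  unfold ue
  rw [show (2 * Real.pi * Complex.I * u / p : ℂ) = ((2 * Real.pi * u / p : ℝ) : ℂ) * Complex.I by
      push_cast; ring, Complex.norm_exp_ofReal_mul_I]

theorem ue_mul_self (p : ℕ) (hp : p ≠ 0) (u : ℤ) : ue p (p * u) = 1 := by
  unfold ue
  have hpC : (p : ℂ) ≠ 0 := by exact_mod_cast hp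
  rw [Complex.exp_eq_one_iff]
  exact ⟨u, by push_cast; field_simp⟩

theorem ue_pow (p : ℕ) (u : ℤ) (a : ℕ) : ue p u ^ a = ue p (a * u) := by
  unfold ue
  rw [← Complex.exp_nat_mul]; congr 1; push_cast; ring

theorem ue_zero (p : ℕ) : ue p 0 = 1 := by simp [ue]

/-- The generator power `m` acting on the sphere. -/
noncomputable def lact (p k : ℕ) (ℓ : Fin k → ℤ) (m : ℤ) (x : USph k) : USph k :=
  ⟨WithLp.toLp 2 (fun j => ue p (m * ℓ j) * x.1 j), by
    have hx : ‖(x : EuclideanSpace ℂ (Fin k))‖ = 1 := by simp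
    rw [EuclideanSpace.norm_eq] at hx
    rw [mem_sphere_zero_iff_norm, EuclideanSpace.norm_eq]
    simpa [norm_ue] using hx⟩

theorem lact_apply (p k : ℕ) (ℓ : Fin k → ℤ) (m : ℤ) (x : USph k) (j : Fin k) :
    (lact p k ℓ m x).1 j = ue p (m * ℓ j) * x.1 j := rfl

theorem continuous_lact (p k : ℕ) (ℓ : Fin k → ℤ) (m : ℤ) : Continuous (lact p k ℓ m) := by
  unfold lact
  apply Continuous.subtype_mk
  fun_prop

theorem lensRel_iff (p k : ℕ) (ℓ : Fin k → ℤ) (x y : USph k) :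
    lensRel p k ℓ x y ↔ ∃ m : ℤ, y = lact p k ℓ m x := by
  unfold lensRel
  refine exists_congr fun m => ⟨fun h => ?_, fun h j => ?_⟩
  · apply Subtype.ext
    ext j
    rw [h j, ue_eq, lact_apply]
  · rw [h, lact_apply, ue_eq]

theorem lact_add (p k : ℕ) (ℓ : Fin k → ℤ) (m m' : ℤ) (x : USph k) :
    lact p k ℓ m (lact p k ℓ m' x) = lact p k ℓ (m + m') x := by
  apply Subtype.ext
  ext j
  rw [lact_apply, lact_apply, lact_apply, add_mul, ue_add, mul_assoc]

theorem lact_zero (p k : ℕ) (ℓ : Fin k → ℤ) (x : USph k) : lact p k ℓ 0 x = x := by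
  apply Subtype.ext
  ext j
  rw [lact_apply, zero_mul, ue_zero, one_mul]

theorem lact_dvd (p k : ℕ) (hp : p ≠ 0) (ℓ : Fin k → ℤ) (m : ℤ) (h : (p : ℤ) ∣ m) (x : USph k) :
    lact p k ℓ m x = x := by
  obtain ⟨c, rfl⟩ := h
  apply Subtype.ext
  ext j
  rw [lact_apply, mul_assoc, ue_mul_self p hp, one_mul]

theorem lens_equiv (p k : ℕ) (ℓ : Fin k → ℤ) : Equivalence (lensRel p k ℓ) where
  refl x := (lensRel_iff ..).mpr ⟨0, (lact_zero ..).symm⟩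
  symm {x y} h := by
    obtain ⟨m, rfl⟩ := (lensRel_iff ..).mp h
    exact (lensRel_iff ..).mpr ⟨-m, by rw [lact_add, neg_add_cancel, lact_zero]⟩
  trans {x y z} h h' := by
    obtain ⟨m, rfl⟩ := (lensRel_iff ..).mp h
    obtain ⟨m', rfl⟩ := (lensRel_iff ..).mp h'
    exact (lensRel_iff ..).mpr ⟨m' + m, by rw [lact_add]⟩

/-- The quotient map. -/
noncomputable def lmk (p k : ℕ) (ℓ : Fin k → ℤ) (x : USph k) : LensSpace p k ℓ :=
  Quot.mk (lensRel p k ℓ) x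

theorem lmk_eq (p k : ℕ) (ℓ : Fin k → ℤ) (x y : USph k) :
    lmk p k ℓ x = lmk p k ℓ y ↔ ∃ m : ℤ, y = lact p k ℓ m x :=
  ((lens_equiv p k ℓ).quot_mk_eq_iff x y).trans (lensRel_iff p k ℓ x y)

theorem lmk_lact (p k : ℕ) (ℓ : Fin k → ℤ) (m : ℤ) (x : USph k) :
    lmk p k ℓ (lact p k ℓ m x) = lmk p k ℓ x :=
  ((lmk_eq ..).mpr ⟨m, rfl⟩).symm

theorem continuous_lmk (p k : ℕ) (ℓ : Fin k → ℤ) : Continuous (lmk p k ℓ) :=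
  continuous_quot_mk

theorem lmk_surjective (p k : ℕ) (ℓ : Fin k → ℤ) : Function.Surjective (lmk p k ℓ) :=
  Quot.mk_surjective

theorem isOpenMap_lmk (p k : ℕ) (ℓ : Fin k → ℤ) : IsOpenMap (lmk p k ℓ) := by
  intro O hO
  have hq : Topology.IsQuotientMap (lmk p k ℓ) := isQuotientMap_quot_mk
  rw [← hq.isOpen_preimage]
  have : lmk p k ℓ ⁻¹' (lmk p k ℓ '' O) = ⋃ m : ℤ, lact p k ℓ m ⁻¹' O := by
    ext y
    simp only [Set.mem_preimage, Set.mem_image, Set.mem_iUnion]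
    constructor
    · rintro ⟨x, hx, hxy⟩
      obtain ⟨m, hm⟩ := (lmk_eq ..).mp hxy.symm
      exact ⟨m, hm ▸ hx⟩
    · rintro ⟨m, hm⟩
      exact ⟨_, hm, lmk_lact ..⟩
  rw [this]
  exact isOpen_iUnion fun m => hO.preimage (continuous_lact p k ℓ m)

/-- Convolution (polynomial multiplication) coefficients. -/
noncomputable def conv {k : ℕ} (x y : Fin k → ℂ) (s : ℕ) : ℂ :=
  ∑ i, ∑ j, if i.1 + j.1 = s then x i * y j else 0

theorem conv_eq_single {k : ℕ} (x y : Fin k → ℂ) (i j : Fin k)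
    (h : ∀ i' j', i'.1 + j'.1 = i.1 + j.1 → i' ≠ i → x i' = 0 ∨ y j' = 0) :
    conv x y (i.1 + j.1) = x i * y j := by
  unfold conv
  rw [Finset.sum_eq_single i, Finset.sum_eq_single j]
  · simp
  · intro j' _ hj
    rw [if_neg]
    intro h
    exact hj (Fin.ext (by omega))
  · simp
  · intro i' _ hi
    apply Finset.sum_eq_zero
    intro j' _
    split_ifs with hs
    · rcases h i' j' hs hi with h | h <;> simp [h]
    · rfl
  · simp

/-- If all product coefficients except that of index `k-1` vanish, both factors are monomials. -/
theorem conv_monomial {k : ℕ} (x y : Fin k → ℂ) (hx : ∃ i, x i ≠ 0) (hy : ∃ j, y j ≠ 0)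
    (h : ∀ s, s ≠ k - 1 → conv x y s = 0) :
    conv x y (k - 1) ≠ 0 ∧ (∃ i, ∀ i', i' ≠ i → x i' = 0) ∧ (∃ j, ∀ j', j' ≠ j → y j' = 0) := by
  classical
  have ex : ∀ z : Fin k → ℂ, (∃ i, z i ≠ 0) →
      (∃ i, z i ≠ 0 ∧ ∀ i', i' < i → z i' = 0) ∧ (∃ i, z i ≠ 0 ∧ ∀ i', i < i' → z i' = 0) := by
    rintro z ⟨i, hi⟩
    have hne : (Finset.univ.filter (fun i => z i ≠ 0)).Nonempty := ⟨i, by simpa using hi⟩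
    refine ⟨⟨_, by simpa using Finset.min'_mem _ hne, fun i' hi' => ?_⟩,
      ⟨_, by simpa using Finset.max'_mem _ hne, fun i' hi' => ?_⟩⟩
    · by_contra hc
      exact absurd (Finset.min'_le (Finset.univ.filter (fun i => z i ≠ 0)) i' (by simpa using hc)) (not_le.mpr hi')
    · by_contra hc
      exact absurd (Finset.le_max' (Finset.univ.filter (fun i => z i ≠ 0)) i' (by simpa using hc)) (not_le.mpr hi')
  obtain ⟨⟨i0, hi0, mi0⟩, ⟨i1, hi1, mi1⟩⟩ := ex x hx
  obtain ⟨⟨j0, hj0, mj0⟩, ⟨j1, hj1, mj1⟩⟩ := ex y hy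
  have c0 : conv x y (i0.1 + j0.1) = x i0 * y j0 := by
    apply conv_eq_single
    intro i' j' hs hne
    rcases lt_or_gt_of_ne hne with hlt | hgt
    · exact Or.inl (mi0 _ hlt)
    · refine Or.inr (mj0 _ ?_)
      rw [Fin.lt_def] at *; omega
  have c1 : conv x y (i1.1 + j1.1) = x i1 * y j1 := by
    apply conv_eq_single
    intro i' j' hs hne
    rcases lt_or_gt_of_ne hne with hlt | hgt
    · refine Or.inr (mj1 _ ?_)
      rw [Fin.lt_def] at *; omega
    · exact Or.inl (mi1 _ hgt)
  have s0 : i0.1 + j0.1 = k - 1 := by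
    by_contra hc
    exact mul_ne_zero hi0 hj0 (c0 ▸ h _ hc)
  have s1 : i1.1 + j1.1 = k - 1 := by
    by_contra hc
    exact mul_ne_zero hi1 hj1 (c1 ▸ h _ hc)
  have l1 : i0 ≤ i1 := by
    by_contra hc
    exact hi0 (mi1 _ (not_le.mp hc))
  have l2 : j0 ≤ j1 := by
    by_contra hc
    exact hj0 (mj1 _ (not_le.mp hc))
  rw [Fin.le_def] at l1 l2
  have e1 : i0 = i1 := Fin.ext (by omega)
  have e2 : j0 = j1 := Fin.ext (by omega)
  subst e1 e2
  refine ⟨?_, ⟨i0, fun i' hi' => ?_⟩, ⟨j0, fun j' hj' => ?_⟩⟩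
  · rw [← s0, c0]; exact mul_ne_zero hi0 hj0
  · rcases lt_or_gt_of_ne hi' with hlt | hgt
    exacts [mi0 _ hlt, mi1 _ hgt]
  · rcases lt_or_gt_of_ne hj' with hlt | hgt
    exacts [mj0 _ hlt, mj1 _ hgt]

theorem conv_smul {k : ℕ} (x y : Fin k → ℂ) (c d : ℂ) (s : ℕ) :
    conv (fun i => c * x i) (fun j => d * y j) s = c * d * conv x y s := by
  unfold conv
  simp only [Finset.mul_sum]
  refine Finset.sum_congr rfl fun i _ => Finset.sum_congr rfl fun j _ => ?_
  split_ifs <;> ring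

theorem exists_inv_exp (p : ℕ) (hp : 2 ≤ p) (l : ℤ) (h : IsCoprime l (p : ℤ)) :
    ∃ a : ℕ, 0 < a ∧ ∃ c : ℤ, a * l = 1 + p * c := by
  obtain ⟨u, v, huv⟩ := h
  have hp0 : (0 : ℤ) < p := by exact_mod_cast (by omega : 0 < p)
  have h0 := Int.emod_nonneg u hp0.ne'
  have h1 := Int.mul_ediv_add_emod u p
  refine ⟨(u % p).toNat + p, by omega, -v - (u / p) * l + l, ?_⟩
  push_cast
  rw [Int.toNat_of_nonneg h0]
  linear_combination huv + l * h1

/-- Coordinatewise powers. -/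
noncomputable def cpow {k : ℕ} (a : Fin k → ℕ) (x : USph k) : Fin k → ℂ := fun i => x.1 i ^ a i

theorem cpow_lact (p k : ℕ) (hp : 2 ≤ p) (ℓ : Fin k → ℤ) (a : Fin k → ℕ)
    (ha : ∀ i, ∃ c : ℤ, a i * ℓ i = 1 + p * c) (m : ℤ) (x : USph k) :
    cpow a (lact p k ℓ m x) = fun i => ue p m * cpow a x i := by
  funext i
  obtain ⟨c, hc⟩ := ha i
  unfold cpow
  rw [lact_apply, mul_pow, ue_pow, show (a i : ℤ) * (m * ℓ i) = m + p * (m * c) by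
    linear_combination m * hc, ue_add, ue_mul_self p (by omega), mul_one]

theorem exists_ne_zero_sph {k : ℕ} (x : USph k) : ∃ i, x.1 i ≠ 0 := by
  by_contra hc
  push Not at hc
  have h0 : (x : EuclideanSpace ℂ (Fin k)) = 0 := by ext i; simp [hc i]
  have hx : ‖(x : EuclideanSpace ℂ (Fin k))‖ = 1 := by simp
  rw [h0] at hx
  simp at hx

theorem norm_of_single {k : ℕ} (x : USph k) (i : Fin k) (h : ∀ i', i' ≠ i → x.1 i' = 0) :
    ‖x.1 i‖ = 1 := by
  have hx : ‖(x : EuclideanSpace ℂ (Fin k))‖ = 1 := by simp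
  have h2 := EuclideanSpace.norm_sq_eq (x : EuclideanSpace ℂ (Fin k))
  rw [hx, Finset.sum_eq_single i (fun i' _ hi => by simp [h i' hi]) (by simp)] at h2
  nlinarith [norm_nonneg (x.1 i)]

/-- The rotation used for the second family of sectors. -/
noncomputable def rot (N : ℕ) (ε : Bool) : ℂ :=
  if ε then Complex.exp (Real.pi * Complex.I / N) else 1

/-- The open pieces upstairs. -/
def piece (k N : ℕ) (a b : Fin k → ℕ) (s : ℕ) (ε : Bool) : Set (USph k × USph k) :=
  {y | conv (cpow a y.1) (cpow b y.2) s * rot N ε ∈ sector N ∧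
    (s = k - 1 → (∃ i, 1 / 2 < ‖y.1.1 i‖ ^ 2) ∧ (∃ j, 1 / 2 < ‖y.2.1 j‖ ^ 2))}

theorem isOpen_piece (k N : ℕ) (a b : Fin k → ℕ) (s : ℕ) (ε : Bool) :
    IsOpen (piece k N a b s ε) := by
  have hc : Continuous (fun y : USph k × USph k =>
      conv (cpow a y.1) (cpow b y.2) s * rot N ε) := by
    unfold conv cpow
    refine Continuous.mul ?_ continuous_const
    refine continuous_finsetSum _ fun i _ => continuous_finsetSum _ fun j _ => ?_
    split_ifs <;> fun_prop
  have h1 := (isOpen_sector N).preimage hc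
  by_cases hs : s = k - 1
  · have h2 : IsOpen {y : USph k × USph k | ∃ i, 1 / 2 < ‖y.1.1 i‖ ^ 2} := by
      rw [Set.ofPred_exists]
      exact isOpen_iUnion fun i => isOpen_lt continuous_const (by fun_prop)
    have h3 : IsOpen {y : USph k × USph k | ∃ i, 1 / 2 < ‖y.2.1 i‖ ^ 2} := by
      rw [Set.ofPred_exists]
      exact isOpen_iUnion fun i => isOpen_lt continuous_const (by fun_prop)
    convert h1.inter (h2.inter h3) using 1
    ext y
    simp [piece, hs]
  · convert h1 using 1
    ext y
    simp [piece, hs]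

/-- The basis vector as a point of the sphere. -/
noncomputable def bvec {k : ℕ} (i : Fin k) : USph k :=
  ⟨EuclideanSpace.single i 1, by simp⟩

/-- The diagonal unit vector. -/
noncomputable def dvec (k : ℕ) (hk : 2 ≤ k) : USph k :=
  ⟨WithLp.toLp 2 (fun _ => (((Real.sqrt k)⁻¹ : ℝ) : ℂ)), by
    have h0 : (0 : ℝ) < k := by exact_mod_cast (by omega : 0 < k)
    rw [mem_sphere_zero_iff_norm, EuclideanSpace.norm_eq, Real.sqrt_eq_one]
    simp [Real.sq_sqrt h0.le, h0.ne']⟩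

theorem dvec_norm (k : ℕ) (hk : 2 ≤ k) (i : Fin k) : ‖(dvec k hk).1 i‖ ^ 2 ≤ 1 / 2 := by
  have h0 : (2 : ℝ) ≤ k := by exact_mod_cast hk
  have : (dvec k hk).1 i = (((Real.sqrt k)⁻¹ : ℝ) : ℂ) := rfl
  rw [this, Complex.norm_real, Real.norm_eq_abs, sq_abs, inv_pow, Real.sq_sqrt (by linarith), one_div]
  exact inv_anti₀ (by norm_num) h0

theorem cpow_bvec {k : ℕ} (a : Fin k → ℕ) (ha : ∀ i, 0 < a i) (i j : Fin k) (h : j ≠ i) :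
    cpow a (bvec i) j = 0 := by
  unfold cpow bvec
  simp [h, (ha j).ne']

theorem piece_miss (k N : ℕ) (hk : 2 ≤ k) (a b : Fin k → ℕ) (ha : ∀ i, 0 < a i)
    (hb : ∀ i, 0 < b i) (s : ℕ) (ε : Bool) :
    ∃ v v' : USph k, ∀ y ∈ piece k N a b s ε, y.1 ≠ v ∧ y.2 ≠ v' := by
  by_cases hs : s = k - 1
  · refine ⟨dvec k hk, dvec k hk, fun y hy => ?_⟩
    obtain ⟨⟨i, hi⟩, ⟨j, hj⟩⟩ := hy.2 hs
    constructor
    · intro h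
      rw [h] at hi
      linarith [dvec_norm k hk i]
    · intro h
      rw [h] at hj
      linarith [dvec_norm k hk j]
  · obtain ⟨e, he⟩ : ∃ e : Fin k, ∀ j : Fin k, e.1 + j.1 ≠ s := by
      rcases lt_or_gt_of_ne hs with h | h
      · exact ⟨⟨k - 1, by omega⟩, fun j => by simp only; omega⟩
      · exact ⟨⟨0, by omega⟩, fun j => by have := j.2; simp only; omega⟩
    refine ⟨bvec e, bvec e, fun y hy => ⟨fun h => ?_, fun h => ?_⟩⟩
    · have h0 := sector_ne_zero hy.1
      apply h0
      rw [h]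
      refine mul_eq_zero_of_left ?_ _
      unfold conv
      refine Finset.sum_eq_zero fun i _ => Finset.sum_eq_zero fun j _ => ?_
      split_ifs with hij
      · have : i ≠ e := by rintro rfl; exact he _ hij
        rw [cpow_bvec a ha e i this, zero_mul]
      · rfl
    · have h0 := sector_ne_zero hy.1
      apply h0
      rw [h]
      refine mul_eq_zero_of_left ?_ _
      unfold conv
      refine Finset.sum_eq_zero fun i _ => Finset.sum_eq_zero fun j _ => ?_
      split_ifs with hij
      · have : j ≠ e := by rintro rfl; exact he i (by omega)
        rw [cpow_bvec b hb e j this, mul_zero]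
      · rfl

theorem ue_mul_ue (p q : ℕ) (hp : p ≠ 0) (hq : q ≠ 0) (m m' : ℤ) :
    ue p m * ue q m' =
      Complex.exp (2 * Real.pi * Complex.I * ((m * q + m' * p : ℤ) : ℂ) / ((p * q : ℕ) : ℂ)) := by
  have hpC : (p : ℂ) ≠ 0 := by exact_mod_cast hp
  have hqC : (q : ℂ) ≠ 0 := by exact_mod_cast hq
  unfold ue
  rw [← Complex.exp_add]
  congr 1
  push_cast
  field_simp

theorem conv_lact {p q k : ℕ} (hp : 2 ≤ p) (hq : 2 ≤ q) (ℓ ℓ' : Fin k → ℤ) (a b : Fin k → ℕ)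
    (ha : ∀ i, ∃ c : ℤ, a i * ℓ i = 1 + p * c) (hb : ∀ i, ∃ c : ℤ, b i * ℓ' i = 1 + q * c)
    (m m' : ℤ) (x y : USph k) (s : ℕ) :
    conv (cpow a (lact p k ℓ m x)) (cpow b (lact q k ℓ' m' y)) s =
      Complex.exp (2 * Real.pi * Complex.I * ((m * q + m' * p : ℤ) : ℂ) / ((p * q : ℕ) : ℂ)) *
        conv (cpow a x) (cpow b y) s := by
  rw [cpow_lact p k hp ℓ a ha, cpow_lact q k hq ℓ' b hb, conv_smul,
    ue_mul_ue p q (by omega) (by omega)]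

/-- The covering map. -/
noncomputable def pmk (p q k : ℕ) (ℓ ℓ' : Fin k → ℤ) :
    USph k × USph k → LensSpace p k ℓ × LensSpace q k ℓ' :=
  Prod.map (lmk p k ℓ) (lmk q k ℓ')

theorem piece_injOn {p q k : ℕ} (hp : 2 ≤ p) (hq : 2 ≤ q) (hpq : Nat.Coprime p q)
    (ℓ ℓ' : Fin k → ℤ) (a b : Fin k → ℕ)
    (ha : ∀ i, ∃ c : ℤ, a i * ℓ i = 1 + p * c) (hb : ∀ i, ∃ c : ℤ, b i * ℓ' i = 1 + q * c)
    (s : ℕ) (ε : Bool) :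
    Set.InjOn (pmk p q k ℓ ℓ') (piece k (p * q) a b s ε) := by
  rintro ⟨x, y⟩ h1 ⟨x', y'⟩ h2 h
  have hx : lmk p k ℓ x = lmk p k ℓ x' := congrArg Prod.fst h
  have hy : lmk q k ℓ' y = lmk q k ℓ' y' := congrArg Prod.snd h
  obtain ⟨m, rfl⟩ := (lmk_eq ..).mp hx
  obtain ⟨m', rfl⟩ := (lmk_eq ..).mp hy
  have h3 := h2.1
  simp only at h3
  rw [conv_lact hp hq ℓ ℓ' a b ha hb, mul_assoc] at h3
  have hd := sector_disjoint (by nlinarith) _ _ h1.1 h3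
  have hcop : IsCoprime (p : ℤ) (q : ℤ) := Nat.isCoprime_iff_coprime.mpr hpq
  push_cast at hd
  have d1 : (p : ℤ) ∣ m := by
    have : (p : ℤ) ∣ m * q + m' * p := dvd_trans (dvd_mul_right _ _) hd
    have : (p : ℤ) ∣ m * q := (dvd_add_left (dvd_mul_left _ _)).mp this
    exact hcop.dvd_of_dvd_mul_right this
  have d2 : (q : ℤ) ∣ m' := by
    have : (q : ℤ) ∣ m * q + m' * p := dvd_trans (dvd_mul_left _ _) hd
    have : (q : ℤ) ∣ m' * p := (dvd_add_right (dvd_mul_left _ _)).mp this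
    exact hcop.symm.dvd_of_dvd_mul_right this
  rw [lact_dvd p k (by omega) ℓ m d1, lact_dvd q k (by omega) ℓ' m' d2]

theorem norm_lact (p k : ℕ) (ℓ : Fin k → ℤ) (m : ℤ) (x : USph k) (j : Fin k) :
    ‖(lact p k ℓ m x).1 j‖ = ‖x.1 j‖ := by
  rw [lact_apply, norm_mul, norm_ue, one_mul]

theorem piece_cover {p q k : ℕ} (hp : 2 ≤ p) (hq : 2 ≤ q) (hpq : Nat.Coprime p q)
    (hk : 2 ≤ k) (ℓ ℓ' : Fin k → ℤ) (a b : Fin k → ℕ)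
    (ha : ∀ i, ∃ c : ℤ, a i * ℓ i = 1 + p * c) (hb : ∀ i, ∃ c : ℤ, b i * ℓ' i = 1 + q * c)
    (z : LensSpace p k ℓ × LensSpace q k ℓ') :
    ∃ s, s < 2 * k - 1 ∧ ∃ ε, z ∈ pmk p q k ℓ ℓ' '' piece k (p * q) a b s ε := by
  obtain ⟨z1, z2⟩ := z
  obtain ⟨x, rfl⟩ := lmk_surjective _ _ _ z1
  obtain ⟨y, rfl⟩ := lmk_surjective _ _ _ z2
  obtain ⟨s, hs0, hs1⟩ : ∃ s, conv (cpow a x) (cpow b y) s ≠ 0 ∧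
      (s = k - 1 → (∃ i, 1 / 2 < ‖x.1 i‖ ^ 2) ∧ (∃ j, 1 / 2 < ‖y.1 j‖ ^ 2)) := by
    by_cases h : ∀ s, s ≠ k - 1 → conv (cpow a x) (cpow b y) s = 0
    · have hx : ∃ i, cpow a x i ≠ 0 := by
        obtain ⟨i, hi⟩ := exists_ne_zero_sph x
        exact ⟨i, pow_ne_zero _ hi⟩
      have hy : ∃ i, cpow b y i ≠ 0 := by
        obtain ⟨i, hi⟩ := exists_ne_zero_sph y
        exact ⟨i, pow_ne_zero _ hi⟩
      obtain ⟨h1, ⟨i, hi⟩, ⟨j, hj⟩⟩ := conv_monomial _ _ hx hy h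
      refine ⟨k - 1, h1, fun _ => ⟨⟨i, ?_⟩, ⟨j, ?_⟩⟩⟩
      · rw [norm_of_single x i fun i' hi' => eq_zero_of_pow_eq_zero (hi i' hi')]
        norm_num
      · rw [norm_of_single y j fun i' hi' => eq_zero_of_pow_eq_zero (hj i' hi')]
        norm_num
    · push Not at h
      obtain ⟨s, hs, hs'⟩ := h
      exact ⟨s, hs', fun h => absurd h hs⟩
  have hlt : s < 2 * k - 1 := by
    by_contra hc
    apply hs0
    unfold conv
    refine Finset.sum_eq_zero fun i _ => Finset.sum_eq_zero fun j _ => ?_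
    rw [if_neg]
    have := i.2
    have := j.2
    omega
  refine ⟨s, hlt, ?_⟩
  obtain ⟨u, hu⟩ := exists_rotate (N := p * q) (by nlinarith) _ hs0
  obtain ⟨c, d, hcd⟩ : IsCoprime (p : ℤ) (q : ℤ) := Nat.isCoprime_iff_coprime.mpr hpq
  have hu2 : u = (u * d) * q + (u * c) * p := by linear_combination -u * hcd
  have hmk : pmk p q k ℓ ℓ' (lact p k ℓ (u * d) x, lact q k ℓ' (u * c) y) =
      (lmk p k ℓ x, lmk q k ℓ' y) := by
    unfold pmk
    rw [Prod.map_apply, lmk_lact, lmk_lact]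
  rw [hu2, ← conv_lact hp hq ℓ ℓ' a b ha hb] at hu
  rcases hu with hu | hu
  · refine ⟨false, _, ⟨?_, ?_⟩, hmk⟩
    · simpa [rot] using hu
    · simpa only [norm_lact] using hs1
  · refine ⟨true, _, ⟨?_, ?_⟩, hmk⟩
    · simpa [rot] using hu
    · simpa only [norm_lact] using hs1

/-- For odd `n = 2k-1 ≥ 3` and relatively prime `p, q ≥ 2`, `cat (L^n_p × L^n_q) ≤ 2n - 1`. -/
theorem lsCat_prod_lensSpace_upper (k : ℕ) (hk : 2 ≤ k) (n : ℕ) (hn : n = 2 * k - 1)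
    (p q : ℕ) (hp2 : 2 ≤ p) (hq2 : 2 ≤ q) (hpq : Nat.Coprime p q)
    (ℓ : Fin k → ℤ) (hℓ : ∀ j, IsCoprime (ℓ j) (p : ℤ))
    (ℓ' : Fin k → ℤ) (hℓ' : ∀ j, IsCoprime (ℓ' j) (q : ℤ)) :
    lsCat (LensSpace p k ℓ × LensSpace q k ℓ') ≤ 2 * n - 1 := by
  choose a ha0 ha using fun j => exists_inv_exp p hp2 (ℓ j) (hℓ j)
  choose b hb0 hb using fun j => exists_inv_exp q hq2 (ℓ' j) (hℓ' j)
  have hmain : ∀ s ε, IsOpen (pmk p q k ℓ ℓ' '' piece k (p * q) a b s ε) ∧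
      ContinuousMap.Nullhomotopic (⟨Subtype.val, continuous_subtype_val⟩ :
        C(pmk p q k ℓ ℓ' '' piece k (p * q) a b s ε, LensSpace p k ℓ × LensSpace q k ℓ')) := by
    intro s ε
    obtain ⟨v, v', hv⟩ := piece_miss k (p * q) hk a b ha0 hb0 s ε
    exact descend_nullhomotopic (pmk p q k ℓ ℓ')
      ((continuous_lmk p k ℓ).prodMap (continuous_lmk q k ℓ'))
      ((isOpenMap_lmk p k ℓ).prodMap (isOpenMap_lmk q k ℓ')) _ (isOpen_piece ..)
      (piece_injOn hp2 hq2 hpq ℓ ℓ' a b ha hb s ε) (incl_nullhomotopic _ v v' hv)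
  unfold lsCat
  apply Nat.sInf_le
  refine ⟨fun i => pmk p q k ℓ ℓ' '' piece k (p * q) a b (i.1 / 2) (decide (i.1 % 2 = 1)),
    fun i => (hmain _ _).1, ?_, fun i => (hmain _ _).2⟩
  rw [Set.eq_univ_iff_forall]
  intro z
  rw [Set.mem_iUnion]
  obtain ⟨s, hs, ε, hz⟩ := piece_cover hp2 hq2 hpq hk ℓ ℓ' a b ha hb z
  cases ε
  · refine ⟨⟨2 * s, by omega⟩, ?_⟩
    have e1 : 2 * s / 2 = s := by omega
    have e2 : decide (2 * s % 2 = 1) = false := by simp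
    simp only [e1, e2]
    exact hz
  · refine ⟨⟨2 * s + 1, by omega⟩, ?_⟩
    have e1 : (2 * s + 1) / 2 = s := by omega
    have e2 : decide ((2 * s + 1) % 2 = 1) = true := by simp
    simp only [e1, e2]
    exact hz
end
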